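/- Θ^N_{2n} is a cocycle in the relative Lie algebra cochain complex C^{2n}(gl_N(A^pol_{2n}), gl_N ⊕ sp_{2n}; gl_N(A^pol_{2n})^*): it is invariant under the adjoint action of gl_N ⊕ sp_{2n}, vanishes whenever one of its 2n arguments lies in gl_N ⊕ sp_{2n}, satisfies d_Lie Θ^N_{2n} = 0, and its cohomology class is nonzero; moreover Θ^N_{2n}((Id_N⊗p_1)∧(Id_N⊗q_1)∧⋯∧(Id_N⊗p_n)∧(Id_N⊗q_n))(Id_N⊗1) = N. -/

import Mathlib

noncomputable section
open MvPolynomial MeasureTheory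

/-- The ground ring `K = ℂ[ε,ε⁻¹]` of Laurent polynomials in `ε`. -/
abbrev Kc : Type := LaurentPolynomial ℂ

/-- The element `ε ∈ K`. -/
def eps : Kc := LaurentPolynomial.T 1

/-- The underlying space of the polynomial Weyl algebra `A^pol_{2n}`:
polynomials in the variables `y_1, …, y_{2n}` (with `y_{2r-1} = p_r`, `y_{2r} = q_r`,
`0`-indexed below) over `K`. -/
abbrev Apol (n : ℕ) : Type := MvPolynomial (Fin (2*n)) Kc

/-- The `k`-fold tensor power `A^{⊗k}` of `A = A^pol_{2n}` over `K`, realized as the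
polynomial ring in `k` groups of `2n` variables. -/
abbrev Tens (n k : ℕ) : Type := MvPolynomial (Fin k × Fin (2*n)) Kc

/-- index of `p_r` among the variables `y` (0-indexed). -/
def pVar (n : ℕ) (r : Fin n) : Fin (2*n) := ⟨2*r.1, by have := r.2; omega⟩
/-- index of `q_r` among the variables `y` (0-indexed). -/
def qVar (n : ℕ) (r : Fin n) : Fin (2*n) := ⟨2*r.1+1, by have := r.2; omega⟩

/-- Partial derivative in the variable `y_v` of the `i`-th tensor factor, as a `K`-linear
endomorphism of `A^{⊗k}`. -/
def Dop (n k : ℕ) (i : Fin k) (v : Fin (2*n)) : Module.End Kc (Tens n k) :=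
  (pderiv (i, v)).toLinearMap

/-- The operator `α_{ij}` on `A^{⊗k}`:
`α_{ij} = (1/2) ∑_r (∂_{p_r}⊗∂_{q_r} − ∂_{q_r}⊗∂_{p_r})` acting on factors `i` and `j`.
By construction `α_{ji} = −α_{ij}`. -/
def alphaOp (n k : ℕ) (i j : Fin k) : Module.End Kc (Tens n k) :=
  algebraMap ℂ Kc (1/2) • ∑ r : Fin n,
    (Dop n k i (pVar n r) * Dop n k j (qVar n r) - Dop n k i (qVar n r) * Dop n k j (pVar n r))

/-- The operator `π_{2n}` on `A^{⊗(2n+1)}`: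
`π_{2n}(a_0⊗⋯⊗a_{2n}) = ∑_{σ∈S_{2n}} sign(σ) a_0⊗∂_{y_{σ(1)}}a_1⊗⋯⊗∂_{y_{σ(2n)}}a_{2n}`. -/
def piOp (n : ℕ) : Module.End Kc (Tens n (2*n+1)) :=
  ∑ σ : Equiv.Perm (Fin (2*n)),
    (Equiv.Perm.sign σ : ℤ) •
      (List.ofFn (fun m : Fin (2*n) => Dop n (2*n+1) m.succ (σ m))).prod

/-- Pairs `i < j` in `Fin m`. -/
abbrev Pairs (m : ℕ) : Type := {p : Fin m × Fin m // p.1 < p.2}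

/-- The simplex `Δ_m = {0 ≤ u_1 ≤ ⋯ ≤ u_m ≤ 1}` in `ℝ^m`. -/
def simplexSet (m : ℕ) : Set (Fin m → ℝ) :=
  {u | (∀ i, 0 ≤ u i ∧ u i ≤ 1) ∧ ∀ i j : Fin m, i ≤ j → u i ≤ u j}

/-- Extension of `u : ℝ^m` to `ℝ^{m+1}` by the convention `u_0 = 0`. -/
def cons0 (m : ℕ) (u : Fin m → ℝ) : Fin (m+1) → ℝ := Fin.cons 0 u

/-- The (commuting) product `∏_{i<j} α_{ij}^{K(i,j)}`. -/
def alphaPowProd (n k : ℕ) (K : Pairs k → ℕ) : Module.End Kc (Tens n k) :=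
  (Finset.univ.toList.map (fun p : Pairs k => alphaOp n k p.1.1 p.1.2 ^ (K p))).prod

/-- The Hochschild cochain `τ_{2n} : A^{⊗(2n+1)} → K`,
`τ_{2n}(a) = μ_{2n} ∫_{Δ_{2n}} ∏_{0≤i<j≤2n} e^{ε(2u_i−2u_j+1)α_{ij}} π_{2n}(a) du`,
with the exponentials expanded as (locally finite) Taylor series and integrated term by
term; `μ` takes the product of the constant terms of the factors. -/
def tau (n : ℕ) (a : Tens n (2*n+1)) : Kc :=
  ∑ K ∈ Fintype.piFinset (fun _ : Pairs (2*n+1) => Finset.range (a.totalDegree + 1)),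
    (algebraMap ℂ Kc
        ((((∫ u in simplexSet (2*n),
            ∏ p : Pairs (2*n+1),
              (2 * cons0 (2*n) u p.1.1 - 2 * cons0 (2*n) u p.1.2 + 1) ^ (K p)) : ℝ) : ℂ)
          * (∏ p : Pairs (2*n+1), ((K p).factorial : ℂ))⁻¹)
        * eps ^ (∑ p : Pairs (2*n+1), K p)) •
      constantCoeff (alphaPowProd n (2*n+1) K (piOp n a))

/-- The embedding of `A` as the `i`-th tensor factor of `A^{⊗k}`. -/
def embA (n k : ℕ) (i : Fin k) : Apol n →ₐ[Kc] Tens n k :=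
  rename (fun v => (i, v))

/-- The elementary tensor `a_0 ⊗ ⋯ ⊗ a_{k-1} ∈ A^{⊗k}`. -/
def elemT {n k : ℕ} (a : Fin k → Apol n) : Tens n k :=
  ∏ i : Fin k, embA n k i (a i)

/-- `exp(ε f)` applied to `a`, for a locally nilpotent operator `f` that strictly decreases
total degree (so that the series is finite on every argument). -/
def expEps {n k : ℕ} (f : Module.End Kc (Tens n k)) (a : Tens n k) : Tens n k :=
  ∑ m ∈ Finset.range (a.totalDegree + 1),
    (algebraMap ℂ Kc ((m.factorial : ℂ)⁻¹) * eps ^ m) • (f ^ m) a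

/-- The Moyal star product `f ⋆ g = m(exp(εα)(f⊗g))` on `A^pol_{2n}`. -/
def moyal (n : ℕ) (f g : Apol n) : Apol n :=
  aeval (fun v : Fin 2 × Fin (2*n) => (X v.2 : Apol n))
    (expEps (alphaOp n 2 0 1) (elemT ![f, g]))

/-- The bracket `[f,g]_ε = (1/ε)(f⋆g − g⋆f)`. -/
def brkt (n : ℕ) (f g : Apol n) : Apol n :=
  (LaurentPolynomial.T (-1) : Kc) • (moyal n f g - moyal n g f)

/-- `sp_{2n}`, identified with the space of homogeneous quadratic polynomials in the `y`'s
with complex coefficients, as a ℂ-submodule of `A^pol_{2n}`. -/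
def spSub (n : ℕ) : Submodule ℂ (Apol n) :=
  Submodule.span ℂ {f : Apol n | ∃ i j : Fin (2*n), f = X i * X j}


/-- `gl_N(A^pol_{2n}) = M_N(ℂ) ⊗ A^pol_{2n}`, realized as `N × N` matrices over the
Weyl algebra. -/
abbrev glA (n N : ℕ) : Type := Matrix (Fin N) (Fin N) (Apol n)

/-- Matrix multiplication over the Weyl algebra (entrywise Moyal products). -/
def matMul (n N : ℕ) (Z W : glA n N) : glA n N :=
  fun i j => ∑ l : Fin N, moyal n (Z i l) (W l j)

/-- The Lie bracket `(1/ε)(ZW − WZ)` on `gl_N(A^pol_{2n})`. -/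
def glBr (n N : ℕ) (Z W : glA n N) : glA n N :=
  (LaurentPolynomial.T (-1) : Kc) • (matMul n N Z W - matMul n N W Z)

/-- Generators of the subalgebra `h = gl_N ⊕ sp_{2n}`: scalar-matrix elements `M ⊗ 1`
and central quadratic elements `1 ⊗ a`, `a ∈ sp_{2n}`. -/
def hSet (n N : ℕ) : Set (glA n N) :=
  {Z | (∃ M : Matrix (Fin N) (Fin N) ℂ, Z = M.map (algebraMap ℂ (Apol n))) ∨
       (∃ a : Apol n, a ∈ spSub n ∧ Z = Matrix.diagonal (fun _ => a))}

/-- The subalgebra `gl_N ⊕ sp_{2n} ⊂ gl_N(A^pol_{2n})` (its `K`-span). -/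
def hK (n N : ℕ) : Submodule Kc (glA n N) := Submodule.span Kc (hSet n N)

/-- The Lie cochain `φ^N(T)` associated with a Hochschild cochain `T`:
`φ^N(T)(M_1⊗a_1,…,M_k⊗a_k)(M_0⊗a_0) = ∑_{σ∈S_k} sign(σ)
τ(a_0⊗a_{σ(1)}⊗⋯⊗a_{σ(k)}) tr(M_0M_{σ(1)}⋯M_{σ(k)})`, written for general matrices
over `A` by chaining matrix indices through the trace. -/
def phiN (n N k : ℕ) (T : Tens n (k+1) → Kc) (Xs : Fin k → glA n N) (w : glA n N) : Kc :=
  ∑ σ : Equiv.Perm (Fin k), (Equiv.Perm.sign σ : ℤ) •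
    ∑ idx : Fin (k+1) → Fin N,
      T (elemT (Fin.cons (w (idx 0) (idx 1))
        (fun m : Fin k => (Xs (σ m)) (idx m.succ) (idx (m.succ + 1)))))

/-- The Lie cochain `Θ^N_{2n} = φ^N(τ_{2n})`. -/
def Theta (n N : ℕ) (v : Fin (2*n) → glA n N) (w : glA n N) : Kc :=
  phiN n N (2*n) (tau n) v w

/-- The tuple `([v_i,v_j], v_0, …, v̂_i, …, v̂_j, …, v_d)` (`i < j`) used in the
Chevalley–Eilenberg differential. -/
def pairTuple {G : Type*} (d : ℕ) (v : Fin (d+1) → G) (br : G) (i j : Fin (d+1)) :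
    Fin d → G :=
  fun m =>
    if hm : m.1 = 0 then br
    else if h1 : m.1 - 1 < i.1 then v ⟨m.1 - 1, by have := i.2; omega⟩
    else if h2 : m.1 < j.1 then v ⟨m.1, by have := j.2; omega⟩
    else v ⟨m.1 + 1, by have := m.2; omega⟩

/-- The Chevalley–Eilenberg differential on cochains with values in the coadjoint module
`gl_N(A)^*`, `(x·ξ)(y) = −ξ([x,y])`. -/
def dCoadj (n N k : ℕ) (c : (Fin k → glA n N) → glA n N → Kc) :
    (Fin (k+1) → glA n N) → glA n N → Kc :=
  fun v w =>
    (∑ i : Fin (k+1), (-1:Kc)^(i.1+1) • c (v ∘ i.succAbove) (glBr n N (v i) w))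
    + ∑ i : Fin (k+1), ∑ l : Fin (k+1),
        (if i < l then (-1:Kc)^(i.1+l.1) • c (pairTuple k v (glBr n N (v i) (v l)) i l) w
         else 0)

/-- A relative cochain of the pair `(gl_N(A), gl_N ⊕ sp_{2n})` with values in the coadjoint
module: `K`-multilinear and alternating in the wedge arguments, `K`-linear in the module
argument, vanishing if a wedge argument lies in `h`, and `h`-invariant. -/
def IsRelCoadjCochain (n N k : ℕ) (c : (Fin k → glA n N) → glA n N → Kc) : Prop :=
  (∀ (v : Fin k → glA n N) (i : Fin k) (x y : glA n N) (w : glA n N),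
      c (Function.update v i (x + y)) w
        = c (Function.update v i x) w + c (Function.update v i y) w) ∧
  (∀ (v : Fin k → glA n N) (i : Fin k) (s : Kc) (x : glA n N) (w : glA n N),
      c (Function.update v i (s • x)) w = s * c (Function.update v i x) w) ∧
  (∀ (v : Fin k → glA n N) (x y : glA n N), c v (x + y) = c v x + c v y) ∧
  (∀ (v : Fin k → glA n N) (s : Kc) (x : glA n N), c v (s • x) = s * c v x) ∧
  (∀ (v : Fin k → glA n N) (i j : Fin k) (w : glA n N), i ≠ j → v i = v j → c v w = 0) ∧
  (∀ (v : Fin k → glA n N) (i : Fin k) (w : glA n N), v i ∈ hK n N → c v w = 0) ∧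
  (∀ Z ∈ hK n N, ∀ (v : Fin k → glA n N) (w : glA n N),
      (∑ i : Fin k, c (Function.update v i (glBr n N Z (v i))) w) + c v (glBr n N Z w) = 0)

/-- `c` is the coboundary of a relative cochain (with coadjoint coefficients). -/
def IsRelCoadjCobd (n N : ℕ) : (k : ℕ) → ((Fin k → glA n N) → glA n N → Kc) → Prop
  | 0, c => c = 0
  | (m+1), c => ∃ b, IsRelCoadjCochain n N m b ∧ c = dCoadj n N m b


/-! ### Stokes' theorem on the simplex -/

/-- The point `t` extended by `0` on the left and by `1` on the right. -/
def Tx {B : Type*} [Zero B] [One B] {m : ℕ} (t : Fin m → B) (k : ℕ) : B :=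
  if k = 0 then 0 else if h : k - 1 < m then t ⟨k - 1, h⟩ else 1

/-- The `j`-th face map. -/
def faceF {B : Type*} [Zero B] [One B] {m : ℕ} (j : ℕ) (t : Fin m → B) : Fin (m+1) → B :=
  fun i => Tx t (if i.1 < j then i.1 + 1 else i.1)

lemma Tx_succ {B : Type*} [Zero B] [One B] {m : ℕ} (t : Fin m → B) (k : Fin m) :
    Tx t (k.1+1) = t k := by
  simp [Tx]

lemma faceF_up {B : Type*} [Zero B] [One B] {m : ℕ} (i : Fin (m+1)) (t : Fin m → B) :
    faceF (i.1+1) t = i.insertNth (Tx t (i.1+1)) t := by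
  refine (Fin.insertNth_eq_iff.2 ⟨?_, ?_⟩).symm
  · simp [faceF]
  · funext k
    simp only [Fin.removeNth, faceF, Fin.succAbove]
    split_ifs with h1 h2 h2
    · simp [Tx_succ]
    · simp [Fin.lt_def] at h1 h2; omega
    · simp [Fin.lt_def] at h1 h2; omega
    · simp [Tx_succ]

lemma faceF_down {B : Type*} [Zero B] [One B] {m : ℕ} (i : Fin (m+1)) (t : Fin m → B) :
    faceF i.1 t = i.insertNth (Tx t i.1) t := by
  refine (Fin.insertNth_eq_iff.2 ⟨?_, ?_⟩).symm
  · simp [faceF]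
  · funext k
    simp only [Fin.removeNth, faceF, Fin.succAbove]
    split_ifs with h1 h2 h2
    · simp [Tx_succ]
    · simp [Fin.lt_def] at h1 h2; omega
    · simp [Fin.lt_def] at h1 h2; omega
    · simp [Tx_succ]

lemma hasDerivAt_eval_insertNth {m : ℕ} (i : Fin (m+1)) (t : Fin m → ℝ)
    (p : MvPolynomial (Fin (m+1)) ℝ) (s : ℝ) :
    HasDerivAt (fun s => eval (i.insertNth s t : Fin (m+1) → ℝ) p)
      (eval (i.insertNth s t : Fin (m+1) → ℝ) (pderiv i p)) s := by
  induction p using MvPolynomial.induction_on with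
  | C a => simpa using hasDerivAt_const s a
  | add p q hp hq =>
    simp only [map_add]
    exact hp.add hq
  | mul_X p j hp =>
    have hX : HasDerivAt (fun s => (i.insertNth s t : Fin (m+1) → ℝ) j)
        (if j = i then 1 else 0) s := by
      rcases Fin.eq_self_or_eq_succAbove i j with rfl | ⟨j, rfl⟩
      · simp only [Fin.insertNth_apply_same, if_true]
        exact hasDerivAt_id s
      · simpa [Fin.succAbove_ne] using hasDerivAt_const s (t j)
    have := hp.mul hX
    have e : eval (i.insertNth s t : Fin (m+1) → ℝ) (pderiv i (p * X j)) =
        (eval (i.insertNth s t)) ((pderiv i) p) * (i.insertNth s t : Fin (m+1) → ℝ) j +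
          (eval (i.insertNth s t : Fin (m+1) → ℝ)) p * if j = i then 1 else 0 := by
      simp only [map_mul, eval_X, Derivation.leibniz, pderiv_X, smul_eq_mul, map_add]
      by_cases h : j = i
      · subst h; simp; ring
      · simp [h]; ring
    rw [e]
    simp only [map_mul, eval_X]
    exact this

lemma Tx_mono {m : ℕ} {t : Fin m → ℝ} (ht : t ∈ simplexSet m) : Monotone (Tx t) := by
  intro a b hab
  obtain ⟨h1, h2⟩ := ht
  unfold Tx
  split_ifs with ha hb hb' hb' ha' 
  all_goals first | omega | simp | skip
  · exact (h1 _).1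
  · exact h2 _ _ (by simp only [Fin.mk_le_mk]; omega)
  · exact (h1 _).2

lemma simplex_insertNth {m : ℕ} (i : Fin (m+1)) (s : ℝ) (t : Fin m → ℝ) :
    (i.insertNth s t : Fin (m+1) → ℝ) ∈ simplexSet (m+1) ↔
      t ∈ simplexSet m ∧ s ∈ Set.Icc (Tx t i.1) (Tx t (i.1+1)) := by
  constructor
  · rintro ⟨h1, h2⟩
    have e1 : (i.insertNth s t : Fin (m+1) → ℝ) i = s := by simp
    have e2 : ∀ k, (i.insertNth s t : Fin (m+1) → ℝ) (i.succAbove k) = t k := by simp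
    refine ⟨⟨fun k => ?_, fun k l hkl => ?_⟩, ?_, ?_⟩
    · have := h1 (i.succAbove k); rwa [e2] at this
    · have := h2 (i.succAbove k) (i.succAbove l) (by simpa using hkl); rwa [e2, e2] at this
    · unfold Tx
      split_ifs with ha hb
      · have := h1 i; rw [e1] at this; exact this.1
      · have := h2 (i.succAbove ⟨i.1-1, hb⟩) i ?_
        · rwa [e2, e1] at this
        · rw [Fin.succAbove_of_castSucc_lt _ _ (by rw [Fin.lt_def]; change i.1 - 1 < i.1; omega)]
          simp [Fin.le_def]
      · omega
    · unfold Tx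
      rw [if_neg (by omega)]
      split_ifs with hb
      · have := h2 i (i.succAbove ⟨i.1, by omega⟩) ?_
        · rw [e2, e1] at this; simpa using this
        · rw [Fin.succAbove_of_le_castSucc _ _ (by simp)]
          simp [Fin.le_def]
      · have := h1 i; rw [e1] at this; exact this.2
  · rintro ⟨ht, hs1, hs2⟩
    have hm := Tx_mono ht
    have h0 : Tx t 0 = 0 := by simp [Tx]
    have hl : Tx t (m+1) = 1 := by simp [Tx]
    have key : ∀ k : Fin (m+1), Tx t k.1 ≤ (i.insertNth s t : Fin (m+1) → ℝ) k ∧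
        (i.insertNth s t : Fin (m+1) → ℝ) k ≤ Tx t (k.1+1) := by
      intro k
      rcases Fin.eq_self_or_eq_succAbove i k with rfl | ⟨k, rfl⟩
      · simpa using ⟨hs1, hs2⟩
      · simp only [Fin.insertNth_apply_succAbove, ← Tx_succ t k]
        constructor <;> apply hm <;> simp only [Fin.succAbove] <;> split_ifs <;> simp
    refine ⟨fun k => ⟨?_, ?_⟩, fun k l hkl => ?_⟩
    · rw [← h0]; exact (hm (Nat.zero_le _)).trans (key k).1
    · rw [← hl]; exact (key k).2.trans (hm (by omega))
    · rcases hkl.eq_or_lt with rfl | h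
      · exact le_rfl
      · exact (key k).2.trans ((hm (by exact h)).trans (key l).1)

lemma isClosed_simplexSet (m : ℕ) : IsClosed (simplexSet m) := by
  have : simplexSet m = (⋂ i : Fin m, {u | 0 ≤ u i ∧ u i ≤ 1}) ∩
      ⋂ i : Fin m, ⋂ j : Fin m, ⋂ _ : i ≤ j, {u | u i ≤ u j} := by
    ext u; simp [simplexSet]
  rw [this]
  refine IsClosed.inter (isClosed_iInter fun i => ?_)
    (isClosed_iInter fun i => isClosed_iInter fun j => isClosed_iInter fun _ => ?_)
  · exact (isClosed_le continuous_const (continuous_apply i)).inter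
      (isClosed_le (continuous_apply i) continuous_const)
  · exact isClosed_le (continuous_apply i) (continuous_apply j)

lemma isCompact_simplexSet (m : ℕ) : IsCompact (simplexSet m) := by
  refine (isCompact_univ_pi (fun _ : Fin m => isCompact_Icc (a := (0:ℝ)) (b := 1))).of_isClosed_subset
    (isClosed_simplexSet m) ?_
  intro u hu
  simp only [Set.mem_pi, Set.mem_univ, true_imp_iff]
  exact fun i => hu.1 i

lemma continuous_Tx {m : ℕ} (k : ℕ) : Continuous (fun t : Fin m → ℝ => Tx t k) := by
  unfold Tx
  split_ifs <;> fun_prop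

theorem stokes_real (m : ℕ) (i : Fin (m+1)) (p : MvPolynomial (Fin (m+1)) ℝ) :
    ∫ u in simplexSet (m+1), eval u (pderiv i p) =
      (∫ t in simplexSet m, eval (faceF (i.1+1) t) p) -
      ∫ t in simplexSet m, eval (faceF i.1 t) p := by
  have hcf : ∀ j : ℕ, Continuous (fun t : Fin m → ℝ => eval (faceF j t) p) := by
    intro j
    refine (MvPolynomial.continuous_eval p).comp (continuous_pi fun k => ?_)
    exact continuous_Tx _
  rw [← integral_sub ((hcf _).continuousOn.integrableOn_compact (isCompact_simplexSet m))
    ((hcf _).continuousOn.integrableOn_compact (isCompact_simplexSet m))]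
  set e := (MeasurableEquiv.piFinSuccAbove (fun _ : Fin (m+1) => ℝ) i) with he
  have hmp := volume_preserving_piFinSuccAbove (fun _ : Fin (m + 1) => ℝ) i
  have hes : ∀ x : ℝ × (Fin m → ℝ), e.symm x = i.insertNth x.1 x.2 := fun x => rfl
  have hmeas : ∀ k, MeasurableSet (simplexSet k) := fun k => (isClosed_simplexSet k).measurableSet
  rw [← integral_indicator (hmeas _), ← (hmp.symm e).integral_comp e.symm.measurableEmbedding,
    ← integral_indicator (hmeas _)]
  have hIntg : Integrable (fun x => (simplexSet (m+1)).indicator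
      (fun u => eval u (pderiv i p)) (e.symm x)) (volume.prod volume) := by
    rw [← Measure.volume_eq_prod]
    refine ((hmp.symm e).integrable_comp_emb e.symm.measurableEmbedding
      (g := (simplexSet (m+1)).indicator (fun u => eval u (pderiv i p)))).2 ?_
    rw [integrable_indicator_iff (hmeas _)]
    exact (MvPolynomial.continuous_eval _).continuousOn.integrableOn_compact
      (isCompact_simplexSet _)
  rw [Measure.volume_eq_prod, integral_prod_symm _ hIntg]
  congr 1
  funext t
  by_cases ht : t ∈ simplexSet m
  · rw [Set.indicator_of_mem ht]
    have hle : Tx t i.1 ≤ Tx t (i.1+1) := Tx_mono ht (by omega)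
    have : (fun s => (simplexSet (m+1)).indicator (fun u => eval u (pderiv i p)) (e.symm (s, t)))
        = (Set.Icc (Tx t i.1) (Tx t (i.1+1))).indicator
          (fun s => eval (i.insertNth s t : Fin (m+1) → ℝ) (pderiv i p)) := by
      funext s
      simp only [hes, Set.indicator, simplex_insertNth, ht, true_and]
    rw [this, integral_indicator measurableSet_Icc, integral_Icc_eq_integral_Ioc,
      ← intervalIntegral.integral_of_le hle,
      intervalIntegral.integral_eq_sub_of_hasDerivAt
        (fun s _ => hasDerivAt_eval_insertNth i t p s), faceF_up, faceF_down]
    refine Continuous.intervalIntegrable ?_ _ _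
    refine (MvPolynomial.continuous_eval _).comp ?_
    exact Continuous.finInsertNth i continuous_id continuous_const
  · rw [Set.indicator_of_notMem ht]
    have : (fun s => (simplexSet (m+1)).indicator (fun u => eval u (pderiv i p)) (e.symm (s, t)))
        = fun _ => 0 := by
      funext s
      simp only [hes, Set.indicator, simplex_insertNth, ht, false_and, if_false]
    rw [this]; simp

/-! ### The formal integral over the simplex -/

/-- Integration over the simplex of polynomials in `u_1, …, u_m` with coefficients in `L`. -/
def IntL (L : Type*) [CommRing L] [Algebra ℝ L] (m : ℕ) : MvPolynomial (Fin m) L →ₗ[L] L :=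
  (basisMonomials (Fin m) L).constr L
    (fun d => algebraMap ℝ L (∫ u in simplexSet m, eval u (monomial d (1:ℝ))))

section IntL
variable {L : Type*} [CommRing L] [Algebra ℝ L] {m : ℕ}

lemma IntL_monomial (d : Fin m →₀ ℕ) (c : L) :
    IntL L m (monomial d c) =
      c * algebraMap ℝ L (∫ u in simplexSet m, eval u (monomial d (1:ℝ))) := by
  have : monomial d c = c • basisMonomials (Fin m) L d := by
    simp [smul_monomial]
  rw [this, map_smul, IntL, Module.Basis.constr_basis, smul_eq_mul]

lemma integrable_eval (p : MvPolynomial (Fin m) ℝ) :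
    IntegrableOn (fun u => eval u p) (simplexSet m) :=
  (MvPolynomial.continuous_eval p).continuousOn.integrableOn_compact (isCompact_simplexSet m)

lemma IntL_map_real (p : MvPolynomial (Fin m) ℝ) :
    IntL L m (map (algebraMap ℝ L) p) = algebraMap ℝ L (∫ u in simplexSet m, eval u p) := by
  induction p using MvPolynomial.induction_on' with
  | monomial d a =>
    rw [map_monomial, IntL_monomial, ← map_mul]
    congr 1
    rw [← integral_const_mul]
    congr 1
    funext u
    simp [eval_monomial]
  | add p q hp hq =>
    simp only [map_add, hp, hq]
    rw [integral_add (integrable_eval p) (integrable_eval q), map_add]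

/-- The `j`-th face restriction on polynomials. -/
def faceA (L : Type*) [CommRing L] (m j : ℕ) :
    MvPolynomial (Fin (m+1)) L →ₐ[L] MvPolynomial (Fin m) L :=
  aeval (faceF j (X : Fin m → MvPolynomial (Fin m) L))

lemma Tx_map {B B' : Type*} [Semiring B] [Semiring B'] (f : B →+* B') (t : Fin m → B) (k : ℕ) :
    f (Tx t k) = Tx (f ∘ t) k := by
  unfold Tx; split_ifs <;> simp

lemma faceA_map_real (j : ℕ) (p : MvPolynomial (Fin (m+1)) ℝ) :
    faceA L m j (map (algebraMap ℝ L) p) = map (algebraMap ℝ L) (faceA ℝ m j p) := by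
  have : ((faceA L m j : MvPolynomial (Fin (m+1)) L →+* MvPolynomial (Fin m) L).comp
      (map (algebraMap ℝ L))) = (map (algebraMap ℝ L)).comp
      (faceA ℝ m j : MvPolynomial (Fin (m+1)) ℝ →+* MvPolynomial (Fin m) ℝ) := by
    refine MvPolynomial.ringHom_ext (fun r => ?_) (fun i => ?_)
    · simp [faceA]
    · simp only [RingHom.comp_apply, map_X, RingHom.coe_coe, faceA, aeval_X]
      simp only [faceF]
      rw [Tx_map]
      congr 1
      funext k
      simp
  exact congrArg (fun f => f p) this

lemma eval_faceA (j : ℕ) (p : MvPolynomial (Fin (m+1)) ℝ) (u : Fin m → ℝ) :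
    eval u (faceA ℝ m j p) = eval (faceF j u) p := by
  have : ((eval u).comp (faceA ℝ m j : _ →+* MvPolynomial (Fin m) ℝ)) = eval (faceF j u) := by
    refine MvPolynomial.ringHom_ext (fun r => ?_) (fun i => ?_)
    · simp [faceA]
    · simp only [RingHom.comp_apply, RingHom.coe_coe, faceA, aeval_X,
        eval_X, faceF]
      rw [Tx_map]
      congr 1
      funext k
      simp
  exact congrArg (fun f => f p) this

theorem stokes (i : Fin (m+1)) (P : MvPolynomial (Fin (m+1)) L) :
    IntL L (m+1) (pderiv i P) =
      IntL L m (faceA L m (i.1+1) P) - IntL L m (faceA L m i.1 P) := by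
  induction P using MvPolynomial.induction_on' with
  | monomial d a =>
    have h : monomial d a = a • map (algebraMap ℝ L) (monomial d (1:ℝ)) := by
      simp [smul_monomial]
    rw [h, Derivation.map_smul, map_smul, map_smul, map_smul, map_smul, map_smul, pderiv_map,
      IntL_map_real,
      faceA_map_real, faceA_map_real, IntL_map_real, IntL_map_real, stokes_real, map_sub, smul_sub]
    simp only [eval_faceA]
  | add p q hp hq =>
    simp only [map_add, hp, hq]; ring

lemma IntL_map {L' : Type*} [CommRing L'] [Algebra ℝ L'] (f : L →ₐ[ℝ] L')
    (P : MvPolynomial (Fin m) L) :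
    IntL L' m (map (f : L →+* L') P) = f (IntL L m P) := by
  induction P using MvPolynomial.induction_on' with
  | monomial d a => simp [IntL_monomial, map_monomial]
  | add p q hp hq => simp only [map_add, hp, hq]

lemma IntL_C_mul (c : L) (P : MvPolynomial (Fin m) L) : IntL L m (C c * P) = c * IntL L m P := by
  rw [← smul_eq_C_mul, map_smul, smul_eq_mul]

lemma IntL_mem (I : Ideal L) (P : MvPolynomial (Fin m) L) (h : P ∈ I.map (C : L →+* _)) :
    IntL L m P ∈ I := by
  rw [MvPolynomial.mem_map_C_iff] at h
  rw [P.as_sum, map_sum]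
  refine sum_mem fun d _ => ?_
  rw [IntL_monomial]
  exact Ideal.mul_mem_right _ _ (h d)

lemma IntL_one_aux (m : ℕ) : ((m+1 : ℕ) : L) * IntL L (m+1) 1 = IntL L m 1 := by
  have h : ∀ i : Fin (m+1), IntL L (m+1) 1 =
      IntL L m (Tx X (i.1+1)) - IntL L m (Tx X i.1) := by
    intro i
    have := stokes (L := L) i (X i)
    simpa [faceA, faceF] using this
  have h2 : ∑ i : Fin (m+1), IntL L (m+1) 1 =
     ∑ i : Fin (m+1), (IntL L m (Tx X (i.1+1)) - IntL L m (Tx X i.1)) :=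
    Finset.sum_congr rfl fun i _ => h i
  rw [Fin.sum_univ_eq_sum_range (fun i => (IntL L m (Tx X (i+1)) - IntL L m (Tx X i))),
    Finset.sum_range_sub (fun i => IntL L m (Tx X i))] at h2
  simpa [Tx] using h2

lemma IntL_one (m : ℕ) : IntL L m 1 = algebraMap ℝ L ((m.factorial : ℝ)⁻¹) := by
  induction m with
  | zero =>
    have := IntL_map_real (L := L) (1 : MvPolynomial (Fin 0) ℝ)
    simp only [map_one, Nat.factorial_zero, Nat.cast_one, inv_one] at this ⊢
    rw [this]
    have hs : simplexSet 0 = Set.univ := by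
      ext u; simp [simplexSet]
    rw [hs]
    simp [volume_pi, Measure.real]
  | succ m ih =>
    have h := IntL_one_aux (L := L) m
    rw [ih] at h
    have h1 : algebraMap ℝ L ((m+1 : ℕ) : ℝ)⁻¹ * (((m+1 : ℕ) : L) * IntL L (m+1) 1) =
      IntL L (m+1) 1 := by
      rw [← mul_assoc, ← map_natCast (algebraMap ℝ L), ← map_mul, inv_mul_cancel₀]
      · simp
      · positivity
    rw [← h1, h, ← map_mul, Nat.factorial_succ]
    congr 1
    push_cast
    rw [mul_inv]
end IntL

/-! ### The pairing between symbols and polynomials -/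

/-- `pr P a` is the constant term of `P(∂) a`. -/
def pr {σ R : Type*} [CommRing R] : MvPolynomial σ R →ₗ[R] MvPolynomial σ R →ₗ[R] R :=
  (basisMonomials σ R).constr R (fun d => ((d.prod fun _ k => k.factorial : ℕ) : R) • lcoeff R d)

section pr
variable {σ R : Type*} [CommRing R]

lemma pr_monomial (d : σ →₀ ℕ) (c : R) (a : MvPolynomial σ R) :
    pr (monomial d c) a = c * ((d.prod fun _ k => k.factorial : ℕ) : R) * coeff d a := by
  have : monomial d c = c • basisMonomials σ R d := by
    simp [smul_monomial]
  rw [this, map_smul, pr, Module.Basis.constr_basis]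
  simp [mul_assoc, lcoeff_apply]

lemma pr_eq_sum (P a : MvPolynomial σ R) :
    pr P a = ∑ d ∈ P.support, coeff d P * ((d.prod fun _ k => k.factorial : ℕ) : R) * coeff d a := by
  conv_lhs => rw [P.as_sum]
  rw [map_sum, LinearMap.sum_apply]
  exact Finset.sum_congr rfl fun d _ => pr_monomial _ _ _

lemma pr_symm (P a : MvPolynomial σ R) : pr P a = pr a P := by
  classical
  induction P using MvPolynomial.induction_on' with
  | monomial d c =>
    induction a using MvPolynomial.induction_on' with
    | monomial d' c' =>
      simp only [pr_monomial, coeff_monomial]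
      by_cases h : d = d'
      · subst h; simp; ring
      · simp [h, Ne.symm h]
    | add p q hp hq => simp only [map_add, LinearMap.add_apply, hp, hq]
  | add p q hp hq => simp only [map_add, LinearMap.add_apply, hp, hq]

lemma pr_one (a : MvPolynomial σ R) : pr 1 a = constantCoeff a := by
  rw [← MvPolynomial.C_1, ← monomial_zero', pr_monomial]
  simp [constantCoeff_eq]

lemma pr_X_mul (i : σ) (P a : MvPolynomial σ R) : pr (X i * P) a = pr P (pderiv i a) := by
  classical
  induction P using MvPolynomial.induction_on' with
  | monomial d c =>
    rw [X, monomial_mul, pr_monomial, pr_monomial, coeff_pderiv]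
    have : ((Finsupp.single i 1 + d).prod fun _ k => k.factorial) =
        (d i + 1) * (d.prod fun _ k => k.factorial) := by
      have hs : ∀ (e : σ →₀ ℕ) , (∀ j, j ∉ insert i d.support → e j = 0) →
          (e.prod fun _ k => k.factorial) = (e i).factorial *
            ∏ j ∈ (insert i d.support).erase i, (e j).factorial := by
        intro e he
        rw [Finset.mul_prod_erase _ (fun j => (e j).factorial) (Finset.mem_insert_self _ _)]
        refine Finsupp.prod_of_support_subset _ (fun j hj => ?_) _ (by simp)
        by_contra h
        exact (Finsupp.mem_support_iff.1 hj) (he j h)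
      rw [hs _ (by intro j hj; simp at hj ⊢; exact ⟨Finsupp.single_eq_of_ne (hj.1), hj.2⟩), hs d (by intro j hj; simp at hj ⊢; exact hj.2)]
      rw [← mul_assoc]
      congr 1
      · simp [add_comm 1 (d i), Nat.factorial_succ]
      · refine Finset.prod_congr rfl fun j hj => ?_
        have : j ≠ i := Finset.ne_of_mem_erase hj
        simp [Finsupp.single_eq_of_ne this]
    rw [this, add_comm d]
    push_cast
    ring
  | add p q hp hq => simp only [mul_add, map_add, LinearMap.add_apply, hp, hq]

lemma pr_pderiv (i : σ) (P a : MvPolynomial σ R) : pr (pderiv i P) a = pr P (X i * a) := by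
  rw [pr_symm, ← pr_X_mul, pr_symm]

lemma pr_vanish (P a : MvPolynomial σ R) (d : ℕ) (hP : P ∈ idealOfVars σ R ^ d)
    (h : a.totalDegree < d) : pr P a = 0 := by
  rw [pr_eq_sum]
  refine Finset.sum_eq_zero fun e he => ?_
  rw [mem_pow_idealOfVars_iff] at hP
  rw [coeff_eq_zero_of_totalDegree_lt (f := a), mul_zero]
  exact h.trans_le (hP e he)

/-- pullback of symbols along a map of variables -/
def sPull {σ' : Type*} (R : Type*) [CommRing R] [Fintype σ] [DecidableEq σ'] (f : σ → σ') :
    MvPolynomial σ' R →ₐ[R] MvPolynomial σ R :=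
  aeval (fun x => ∑ x' ∈ Finset.univ.filter (fun x' => f x' = x), X x')

lemma pderiv_rename_sum {σ' : Type*} [Fintype σ] [DecidableEq σ'] (f : σ → σ') (x : σ')
    (a : MvPolynomial σ R) :
    pderiv x (rename f a) =
      rename f (∑ x' ∈ Finset.univ.filter (fun x' => f x' = x), pderiv x' a) := by
  classical
  induction a using MvPolynomial.induction_on with
  | C a => simp
  | add p q hp hq => simp only [map_add, hp, hq, Finset.sum_add_distrib]
  | mul_X p j hp =>
    simp only [map_mul, rename_X, Derivation.leibniz, pderiv_X, smul_eq_mul, hp,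
      Finset.sum_add_distrib, map_add, map_sum, Finset.mul_sum]
    congr 1
    rw [Finset.sum_filter]
    simp only [Pi.single_apply]
    by_cases h : f j = x
    · subst h
      rw [Finset.sum_eq_single j]
      · simp
      · intro b _ hb; simp [Ne.symm hb]
      · simp
    · simp only [h, if_false, mul_zero]
      symm
      refine Finset.sum_eq_zero fun b _ => ?_
      by_cases hb : j = b
      · subst hb; simp [h]
      · simp [hb]

lemma pr_rename {σ' : Type*} [Fintype σ] [DecidableEq σ'] (f : σ → σ')
    (P : MvPolynomial σ' R) (a : MvPolynomial σ R) :
    pr P (rename f a) = pr (sPull R f P) a := by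
  induction P using MvPolynomial.induction_on generalizing a with
  | C c =>
    rw [show (C c : MvPolynomial σ' R) = c • 1 by simp [smul_eq_C_mul], map_smul, map_smul,
      map_smul, map_one (sPull R f), LinearMap.smul_apply, LinearMap.smul_apply, pr_one, pr_one]
    simp
  | add p q hp hq => simp only [map_add, LinearMap.add_apply, hp, hq]
  | mul_X p x hp =>
    rw [mul_comm, pr_X_mul, pderiv_rename_sum, hp, map_mul, map_sum]
    simp only [sPull, aeval_X, Finset.sum_mul, map_sum, LinearMap.sum_apply, pr_X_mul]
    

/-- The operator `A` has symbol `s`. -/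
def HasSym (A : Module.End R (MvPolynomial σ R)) (s : MvPolynomial σ R) : Prop :=
  ∀ P a, pr P (A a) = pr (P * s) a

lemma HasSym.pderiv (i : σ) : HasSym ((pderiv i : Derivation R _ (MvPolynomial σ R)).toLinearMap)
    (X i) := by
  intro P a
  rw [mul_comm, pr_X_mul]; rfl

lemma HasSym.one : HasSym (1 : Module.End R (MvPolynomial σ R)) 1 := by
  intro P a; simp

lemma HasSym.mul {A B : Module.End R (MvPolynomial σ R)} {s t} (hA : HasSym A s)
    (hB : HasSym B t) : HasSym (A * B) (s * t) := by
  intro P a; rw [Module.End.mul_apply, hA, hB, mul_assoc]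

lemma HasSym.pow {A : Module.End R (MvPolynomial σ R)} {s} (hA : HasSym A s) (k : ℕ) :
    HasSym (A ^ k) (s ^ k) := by
  induction k with
  | zero => simpa using HasSym.one
  | succ k ih => rw [pow_succ, pow_succ]; exact ih.mul hA

lemma HasSym.sum {ι : Type*} (S : Finset ι) {A : ι → Module.End R (MvPolynomial σ R)} {s : ι → _}
    (hA : ∀ i, HasSym (A i) (s i)) : HasSym (∑ i ∈ S, A i) (∑ i ∈ S, s i) := by
  intro P a
  simp only [LinearMap.sum_apply, map_sum, Finset.mul_sum, hA _ P a]

lemma HasSym.sub {A B : Module.End R (MvPolynomial σ R)} {s t} (hA : HasSym A s)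
    (hB : HasSym B t) : HasSym (A - B) (s - t) := by
  intro P a; simp only [LinearMap.sub_apply, map_sub, mul_sub, hA P a, hB P a]

lemma HasSym.smul {A : Module.End R (MvPolynomial σ R)} {s} (c : R) (hA : HasSym A s) :
    HasSym (c • A) (C c * s) := by
  intro P a
  rw [← smul_eq_C_mul, mul_smul_comm]
  simp only [LinearMap.smul_apply, map_smul, hA P a]

lemma HasSym.zsmul {A : Module.End R (MvPolynomial σ R)} {s} (c : ℤ) (hA : HasSym A s) :
    HasSym (c • A) (c • s) := by
  intro P a
  rw [mul_smul_comm]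
  simp only [LinearMap.smul_apply, map_zsmul, hA P a]

lemma HasSym.listProd {ι : Type*} (l : List ι) {A : ι → Module.End R (MvPolynomial σ R)}
    {s : ι → _} (hA : ∀ i, HasSym (A i) (s i)) :
    HasSym (l.map A).prod (l.map s).prod := by
  induction l with
  | nil => simpa using HasSym.one
  | cons x l ih => simpa using (hA x).mul ih
end pr

/-! ### The symbol of `τ` and the cocycle identity on symbols -/

section sym
variable {L : Type*} [CommRing L] [Algebra ℝ L] {n k : ℕ}

/-- One half, in an `ℝ`-algebra. -/
def hf (L : Type*) [CommRing L] [Algebra ℝ L] : L := algebraMap ℝ L (1/2)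

lemma hf_add : hf L + hf L = 1 := by
  rw [hf, ← map_add]; norm_num

lemma hf_two : hf L * 2 = 1 := by
  rw [mul_two, hf_add]

/-- The symplectic form on vectors. -/
def om (x y : Fin (2*n) → L) : L :=
  hf L * ∑ r : Fin n, (x (pVar n r) * y (qVar n r) - x (qVar n r) * y (pVar n r))

lemma om_swap (x y : Fin (2*n) → L) : om y x = - om x y := by
  unfold om
  rw [← mul_neg, ← Finset.sum_neg_distrib]
  congr 1
  exact Finset.sum_congr rfl fun r _ => by ring

lemma om_sum_left {ι : Type*} (s : Finset ι) (x : ι → Fin (2*n) → L) (y : Fin (2*n) → L) :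
    om (∑ i ∈ s, x i) y = ∑ i ∈ s, om (x i) y := by
  unfold om
  simp only [Finset.sum_apply, Finset.sum_mul, ← Finset.mul_sum, ← Finset.sum_sub_distrib]
  rw [Finset.sum_comm]

lemma om_sum_right {ι : Type*} (s : Finset ι) (x : ι → Fin (2*n) → L) (y : Fin (2*n) → L) :
    om y (∑ i ∈ s, x i) = ∑ i ∈ s, om y (x i) := by
  rw [om_swap, om_sum_left, ← Finset.sum_neg_distrib]
  exact Finset.sum_congr rfl fun i _ => by rw [om_swap y]; ring

lemma om_self (x : Fin (2*n) → L) : om x x = 0 := by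
  unfold om
  rw [Finset.sum_eq_zero, mul_zero]
  intro r _; ring

lemma map_om {L' : Type*} [CommRing L'] [Algebra ℝ L'] (f : L →ₐ[ℝ] L') (x y : Fin (2*n) → L) :
    f (om x y) = om (fun v => f (x v)) (fun v => f (y v)) := by
  simp [om, hf]

/-- sign of `b - a` -/
def sg (a b : ℕ) : ℤ := if a < b then 1 else if b < a then -1 else 0

/-- The coefficient `2 u_a - 2 u_b ± 1`. -/
def cf (L : Type*) [CommRing L] (k : ℕ) (a b : ℕ) : MvPolynomial (Fin k) L :=
  2 * Tx X a - 2 * Tx X b + (sg a b : MvPolynomial (Fin k) L)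

lemma cf_swap (a b : ℕ) : cf L k b a = - cf L k a b := by
  unfold cf sg
  split_ifs <;> first | omega | (push_cast; ring)

/-- The exponent in `τ`, as a polynomial in `u` with coefficients symbols. -/
def Ws (x : Fin (k+1) → Fin (2*n) → L) : MvPolynomial (Fin k) L :=
  C (hf L) * ∑ a : Fin (k+1), ∑ b : Fin (k+1), cf L k a b * C (om (x a) (x b))

lemma sum_pairs {M : Type*} [CommRing M] (m : ℕ) (h : Fin m → Fin m → M)
    (hs : ∀ a b, h b a = h a b) (h0 : ∀ a, h a a = 0) :
    ∑ a, ∑ b, h a b = 2 * ∑ p : Pairs m, h p.1.1 p.1.2 := by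
  have e1 : ∑ p : Pairs m, h p.1.1 p.1.2 = ∑ a, ∑ b, if a < b then h a b else 0 := by
    rw [← Fintype.sum_prod_type' (f := fun a b => if a < b then h a b else 0)]
    rw [← Finset.sum_filter, Finset.sum_subtype (p := fun p : Fin m × Fin m => p.1 < p.2)]
    simp
  have e2 : ∑ p : Pairs m, h p.1.1 p.1.2 = ∑ a, ∑ b, if b < a then h a b else 0 := by
    rw [e1, Finset.sum_comm]
    refine Finset.sum_congr rfl fun a _ => Finset.sum_congr rfl fun b _ => ?_
    rw [hs]
  rw [two_mul]
  nth_rewrite 1 [e1]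
  rw [e2, ← Finset.sum_add_distrib]
  refine Finset.sum_congr rfl fun a _ => ?_
  rw [← Finset.sum_add_distrib]
  refine Finset.sum_congr rfl fun b _ => ?_
  rcases lt_trichotomy a b with hab | rfl | hab
  · simp [hab, hab.le, not_lt.2 hab.le]
  · simp [h0]
  · simp [hab, not_lt.2 hab.le]

lemma two_eq_C {σ : Type*} : (2 : MvPolynomial σ L) = C 2 := (map_ofNat C 2).symm

lemma C_hf_two {σ : Type*} : (C (hf L) : MvPolynomial σ L) * 2 = 1 := by
  rw [two_eq_C, ← C_mul, hf_two, C_1]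

lemma Ws_eq_pairs (x : Fin (k+1) → Fin (2*n) → L) :
    Ws x = ∑ p : Pairs (k+1), (2 * Tx X p.1.1.1 - 2 * Tx X p.1.2.1 + 1) *
      C (om (x p.1.1) (x p.1.2)) := by
  rw [Ws, sum_pairs, ← mul_assoc, C_hf_two, one_mul]
  · refine Finset.sum_congr rfl fun p _ => ?_
    simp [cf, sg, p.2]
  · intro a b; rw [cf_swap, om_swap, C_neg]; ring
  · intro a; rw [om_self]; simp

lemma pderiv_Tx (i : Fin k) (a : ℕ) (ha : a ≤ k) :
    pderiv i (Tx (X : Fin k → MvPolynomial (Fin k) L) a) = if a = i.1 + 1 then 1 else 0 := by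
  unfold Tx
  rcases a with _ | a
  · simp
  · have : a < k := by omega
    simp only [Nat.add_eq_zero_iff, one_ne_zero, and_false, if_false, Nat.add_sub_cancel, this,
      dif_pos, pderiv_X, Pi.single_apply, Fin.ext_iff, Nat.add_right_cancel_iff]

lemma pderiv_Ws (x : Fin (k+1) → Fin (2*n) → L) (i : Fin k) :
    pderiv i (Ws x) = C (2 * om (x i.succ) (∑ b, x b)) := by
  have h1 : ∀ a b : Fin (k+1), pderiv i (cf L k a b * C (om (x a) (x b))) =
      (if a = i.succ then C (2 * om (x a) (x b)) else 0) +
      (if b = i.succ then C (2 * om (x b) (x a)) else 0) := by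
    intro a b
    rw [mul_comm, pderiv_C_mul, cf, map_add, map_sub, two_eq_C,
      pderiv_C_mul, pderiv_C_mul, pderiv_Tx i _ (by omega), pderiv_Tx i _ (by omega)]
    have hz : pderiv i ((sg a b : ℤ) : MvPolynomial (Fin k) L) = 0 := by
      rw [← map_intCast (C : L →+* MvPolynomial (Fin k) L)]; exact pderiv_C
    rw [hz, om_swap (x a) (x b)]
    simp only [Fin.ext_iff, Fin.val_succ, map_mul, map_neg]
    split_ifs <;> simp <;> ring
  rw [Ws, pderiv_C_mul]
  simp only [map_sum, h1, Finset.sum_add_distrib]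
  rw [Finset.sum_comm]
  simp only [Finset.sum_ite_eq', Finset.mem_univ, if_true]
  rw [om_sum_right, Finset.mul_sum, map_sum, ← mul_two, mul_comm _ (2 : MvPolynomial (Fin k) L),
    ← mul_assoc, C_hf_two, one_mul]

/-- degeneracy maps (cyclic for `j = k+1`) -/
def sdeg (k : ℕ) (j a : Fin (k+2)) : Fin (k+1) :=
  ⟨(if a.1 ≤ j.1 then a.1 else a.1 - 1) % (k+1), Nat.mod_lt _ (by omega)⟩

/-- pulled back vectors -/
def xj (x : Fin (k+2) → Fin (2*n) → L) (j : Fin (k+2)) : Fin (k+1) → Fin (2*n) → L :=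
  fun c => ∑ a ∈ Finset.univ.filter (fun a => sdeg k j a = c), x a

lemma Ws_xj (x : Fin (k+2) → Fin (2*n) → L) (j : Fin (k+2)) :
    Ws (xj x j) = C (hf L) * ∑ a : Fin (k+2), ∑ b : Fin (k+2),
      cf L k (sdeg k j a) (sdeg k j b) * C (om (x a) (x b)) := by
  rw [Ws]
  congr 1
  rw [← Finset.sum_fiberwise (s := Finset.univ) (g := sdeg k j)]
  refine Finset.sum_congr rfl fun c _ => ?_
  simp only [xj, om_sum_left]
  simp only [om_sum_right]
  simp only [map_sum, Finset.mul_sum]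
  rw [Finset.sum_comm]
  refine Finset.sum_congr rfl fun a ha => ?_
  rw [← Finset.sum_fiberwise (s := Finset.univ) (g := sdeg k j)]
  refine Finset.sum_congr rfl fun d _ => ?_
  refine Finset.sum_congr rfl fun b hb => ?_
  simp only [Finset.mem_filter, Finset.mem_univ, true_and] at ha hb
  rw [ha, hb]

lemma faceA_Tx (j a : ℕ) (ha : a ≤ k+1) :
    faceA L k j (Tx X a) = Tx X (if a ≤ j then a else a - 1) := by
  rcases a with _ | a
  · simp [Tx]
  · have : a < k+1 := by omega
    conv_lhs => rw [show Tx (X : Fin (k+1) → MvPolynomial (Fin (k+1)) L) (a+1) = X ⟨a, this⟩ from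
      Tx_succ X ⟨a, this⟩]
    simp [faceA, faceF, Nat.add_one_le_iff]

lemma cf_diff (j a b : Fin (k+2)) :
    faceA L k j (cf L (k+1) a b) - cf L k (sdeg k j a) (sdeg k j b) =
      (if a = j then if b = j + 1 then 1 else 0 else 0) -
      (if b = j then if a = j + 1 then 1 else 0 else 0) := by
  have ha := a.2
  have hb := b.2
  have hj := j.2
  have h2 : faceA L k j.1 (2 : MvPolynomial (Fin (k+1)) L) = 2 := map_ofNat _ 2
  have hT1 : Tx (X : Fin k → MvPolynomial (Fin k) L) (k+1) = 1 := by simp [Tx]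
  have hT0 : Tx (X : Fin k → MvPolynomial (Fin k) L) 0 = 0 := by simp [Tx]
  simp only [cf, map_add, map_sub, map_mul, map_intCast, h2, faceA_Tx _ _ (show a.1 ≤ k+1 by omega),
    faceA_Tx _ _ (show b.1 ≤ k+1 by omega)]
  have hs : ∀ c : Fin (k+2), (sdeg k j c).1 = if c.1 = k+1 ∧ j.1 = k+1 then 0 else
      if c.1 ≤ j.1 then c.1 else c.1 - 1 := by
    intro c
    have := c.2
    simp only [sdeg]
    by_cases h : c.1 = k+1 ∧ j.1 = k+1
    · simp [h]
    · rw [if_neg h, Nat.mod_eq_of_lt]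
      split_ifs <;> omega
  rw [hs, hs]
  have hj1 : (j+1 : Fin (k+2)).1 = if j.1 = k+1 then 0 else j.1 + 1 := by
    rw [Fin.val_add_one]
    simp [Fin.ext_iff]
  simp only [Fin.ext_iff, hj1]
  by_cases hjk : j.1 = k+1
  · simp only [hjk, and_true, if_true, show a.1 ≤ k+1 by omega, show b.1 ≤ k+1 by omega]
    by_cases h1 : a.1 = k+1 <;> by_cases h2 : b.1 = k+1
    · simp [h1, h2, sg]
    · simp only [h1, h2, if_true, if_false, hT1, hT0, sg]
      split_ifs <;> first | omega | (push_cast; ring)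
    · simp only [h1, h2, if_true, if_false, hT1, hT0, sg]
      split_ifs <;> first | omega | (push_cast; ring)
    · simp only [h1, h2, if_true, if_false, sg]
      split_ifs <;> first | omega | (push_cast; ring)
  · simp only [hjk, and_false, if_false]
    have : ∀ A B : MvPolynomial (Fin k) L, ∀ s t : ℤ, A + (s : MvPolynomial (Fin k) L) - (A + t) =
      ((s - t : ℤ) : MvPolynomial (Fin k) L) := by intro A B s t; push_cast; ring
    rw [this _ 0]
    have e : sg a.1 b.1 - sg (if a.1 ≤ j.1 then a.1 else a.1 - 1)
      (if b.1 ≤ j.1 then b.1 else b.1 - 1) = (if a.1 = j.1 then if b.1 = j.1 + 1 then 1 else 0 else 0) -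
      (if b.1 = j.1 then if a.1 = j.1 + 1 then 1 else 0 else 0) := by
      unfold sg
      split_ifs <;> omega
    rw [e]
    push_cast
    rfl

lemma faceA_Ws (x : Fin (k+2) → Fin (2*n) → L) (j : Fin (k+2)) :
    faceA L k j (Ws x) = C (om (x j) (x (j+1))) + Ws (xj x j) := by
  rw [Ws_xj, ← sub_eq_iff_eq_add, Ws, map_mul]
  have hC : ∀ c : L, faceA L k j (C c) = C c := by
    intro c; simp [faceA]
  rw [hC, ← mul_sub, map_sum, ← Finset.sum_sub_distrib]
  simp only [map_sum, ← Finset.sum_sub_distrib, map_mul, hC, ← sub_mul, cf_diff]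
  simp only [sub_mul, Finset.sum_sub_distrib, ite_mul, zero_mul, one_mul]
  rw [Finset.sum_comm (f := fun a b => if b = j then _ else _)]
  simp only [Finset.sum_ite_irrel, Finset.sum_ite_eq', Finset.mem_univ, if_true, Finset.sum_const_zero]
  rw [om_swap (x j), ← C_sub, ← C_mul]
  congr 1
  linear_combination (om (x j) (x (j+1))) * hf_two (L := L)

/-- The determinant of the rows `1, …, 2n`. -/
def Dt (x : Fin (2*n+1) → Fin (2*n) → L) : L :=
  Matrix.det (Matrix.of fun (a v : Fin (2*n)) => x a.succ v)

/-- signed minor -/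
def Dm (x : Fin (2*n+2) → Fin (2*n) → L) (i : Fin (2*n+1)) : L :=
  (-1)^i.1 * Matrix.det (Matrix.of fun (a v : Fin (2*n)) => x (i.succAbove a).succ v)

lemma sum_Dm (x : Fin (2*n+2) → Fin (2*n) → L) (v : Fin (2*n)) :
    ∑ i, Dm x i * x i.succ v = 0 := by
  let M : Matrix (Fin (2*n+1)) (Fin (2*n+1)) L := fun i => Fin.cons (x i.succ v) (x i.succ)
  have h : M.det = 0 := by
    refine Matrix.det_zero_of_column_eq (i := 0) (j := v.succ) (Fin.succ_ne_zero v).symm ?_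
    intro i; simp [M]
  rw [Matrix.det_succ_column_zero] at h
  rw [← h]
  refine Finset.sum_congr rfl fun i _ => ?_
  simp only [Dm, M, Fin.cons_zero]
  have : (Matrix.submatrix M i.succAbove Fin.succ) =
    (Matrix.of fun (a v : Fin (2*n)) => x (i.succAbove a).succ v) := by
    ext a w; rfl
  rw [this]; ring

lemma sum_Dm_om (x : Fin (2*n+2) → Fin (2*n) → L) (y : Fin (2*n) → L) :
    ∑ i, Dm x i * om (x i.succ) y = 0 := by
  simp only [om]
  have : ∀ i, Dm x i * (hf L * ∑ r : Fin n, (x i.succ (pVar n r) * y (qVar n r) -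
      x i.succ (qVar n r) * y (pVar n r))) =
      hf L * ∑ r : Fin n, ((Dm x i * x i.succ (pVar n r)) * y (qVar n r) -
      (Dm x i * x i.succ (qVar n r)) * y (pVar n r)) := by
    intro i
    rw [Finset.mul_sum, Finset.mul_sum, Finset.mul_sum]
    exact Finset.sum_congr rfl fun r _ => by ring
  simp only [this]
  rw [← Finset.mul_sum, Finset.sum_comm]
  simp only [Finset.sum_sub_distrib, ← Finset.sum_mul, sum_Dm]
  simp

lemma abel_sum (E F : ℕ → L) (K : ℕ) :
    ∑ j ∈ Finset.range (K+1), (E (j+1) - E j) * F j =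
      E (K+1) * F K - E 0 * F 0 - ∑ i ∈ Finset.range K, E (i+1) * (F (i+1) - F i) := by
  induction K with
  | zero => simp; ring
  | succ K ih => rw [Finset.sum_range_succ, ih, Finset.sum_range_succ]; ring

/-- extension by zero of the signed minors -/
def Em (x : Fin (2*n+2) → Fin (2*n) → L) (t : ℕ) : L :=
  if h : 1 ≤ t ∧ t ≤ 2*n+1 then Dm x ⟨t-1, by omega⟩ else 0

lemma xj_eq (x : Fin (k+2) → Fin (2*n) → L) (j : Fin (k+2)) (c : Fin k) :
    xj x j c.succ = if c.1 + 1 < j.1 ∨ (j.1 = k+1) then x c.succ.castSucc else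
      if c.1 + 1 = j.1 then x c.succ.castSucc + x c.succ.succ else x c.succ.succ := by
  have hj := j.2
  have hc := c.2
  have key : ∀ a : Fin (k+2), sdeg k j a = c.succ ↔
      (a.1 = c.1 + 1 ∧ c.1 + 1 ≤ j.1) ∨ (a.1 = c.1 + 2 ∧ j.1 ≤ c.1 + 1) := by
    intro a
    have ha := a.2
    simp only [sdeg, Fin.ext_iff, Fin.val_succ]
    by_cases h : a.1 = k+1 ∧ j.1 = k+1
    · simp [h]; omega
    · rw [Nat.mod_eq_of_lt (by split_ifs <;> omega)]
      split_ifs <;> omega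
  unfold xj
  split_ifs with h1 h2
  · rw [show Finset.univ.filter (fun a => sdeg k j a = c.succ) = {c.succ.castSucc} from ?_]
    · simp
    · ext a; simp only [Finset.mem_filter, Finset.mem_univ, true_and, key, Finset.mem_singleton,
        Fin.ext_iff, Fin.val_castSucc, Fin.val_succ]; omega
  · rw [show Finset.univ.filter (fun a => sdeg k j a = c.succ) = {c.succ.castSucc, c.succ.succ} from ?_]
    · rw [Finset.sum_pair]
      simp [Fin.ext_iff]
    · ext a; simp only [Finset.mem_filter, Finset.mem_univ, true_and, key, Finset.mem_singleton,
        Finset.mem_insert, Fin.ext_iff, Fin.val_castSucc, Fin.val_succ]; omega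
  · rw [show Finset.univ.filter (fun a => sdeg k j a = c.succ) = {c.succ.succ} from ?_]
    · simp
    · ext a; simp only [Finset.mem_filter, Finset.mem_univ, true_and, key, Finset.mem_singleton,
        Fin.ext_iff, Fin.val_succ]; omega

lemma succAbove_val {m : ℕ} (i : Fin (m+1)) (a : Fin m) :
    (i.succAbove a).1 = if a.1 < i.1 then a.1 else a.1 + 1 := by
  simp only [Fin.succAbove, Fin.lt_def, Fin.val_castSucc]
  split_ifs <;> simp

lemma Dt_xj (x : Fin (2*n+2) → Fin (2*n) → L) (j : Fin (2*n+2)) :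
    (-1)^j.1 * Dt (xj x j) = Em x (j.1+1) - Em x j.1 := by
  have hj := j.2
  simp only [Dt]
  by_cases h0 : j.1 = 0
  · have e : Em x (j.1+1) = Dm x 0 := by
      rw [Em, dif_pos (by omega)]; congr 1; simp [Fin.ext_iff, h0]
    have e' : Em x j.1 = 0 := by rw [Em, dif_neg (by omega)]
    rw [e, e', Dm, h0, sub_zero]
    congr 2
    ext a v
    simp only [Matrix.of_apply, xj_eq]
    rw [if_neg (by omega), if_neg (by omega)]
    congr 1
  by_cases h1 : j.1 = 2*n+1
  · have e : Em x (j.1+1) = 0 := by rw [Em, dif_neg (by omega)]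
    have e' : Em x j.1 = Dm x (Fin.last (2*n)) := by
      rw [Em, dif_pos (by omega)]; congr 1; simp [Fin.ext_iff, h1]
    rw [e, e', Dm, h1, zero_sub, Fin.val_last, pow_succ, mul_neg_one, neg_mul]
    congr 3
    ext a v
    simp only [Matrix.of_apply, xj_eq, h1]
    rw [if_pos (by simp)]
    congr 1
    simp [Fin.ext_iff]
  · have e : Em x (j.1+1) = Dm x ⟨j.1, by omega⟩ := by
      rw [Em, dif_pos (by omega)]; congr 1
    have e' : Em x j.1 = Dm x ⟨j.1-1, by omega⟩ := by
      rw [Em, dif_pos (by omega)]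
    rw [e, e', Dm, Dm]
    have hp : (-1 : L)^j.1 = - (-1)^(j.1-1) := by
      obtain ⟨t, ht⟩ : ∃ t, j.1 = t+1 := ⟨j.1-1, by omega⟩
      rw [ht, pow_succ]; simp
    simp only [hp]
    rw [neg_mul, neg_mul, ← neg_add', ← mul_add]
    congr 2
    let c : Fin (2*n) := ⟨j.1-1, by omega⟩
    let M : Matrix (Fin (2*n)) (Fin (2*n)) L := Matrix.of fun a v => xj x j a.succ v
    have hM : ∀ r, M = Matrix.updateRow M c r → True := fun _ _ => trivial
    have hsum : M = Matrix.updateRow M c (x c.succ.castSucc + x c.succ.succ) := by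
      ext a v
      by_cases hac : a = c
      · subst hac
        simp only [Matrix.updateRow_self, M, Matrix.of_apply, xj_eq]
        rw [if_neg (by simp [c]; omega), if_pos (by simp [c]; omega)]
      · simp [Matrix.updateRow_ne hac]
    change M.det = _
    rw [hsum, Matrix.det_updateRow_add]
    congr 2
    · ext a v
      by_cases hac : a = c
      · subst hac
        simp only [Matrix.updateRow_self, Matrix.of_apply]
        congr 1
        simp only [Fin.ext_iff, Fin.val_castSucc, Fin.val_succ, succAbove_val, c]
        split_ifs <;> omega
      · rw [Matrix.updateRow_ne hac]
        simp only [M, Matrix.of_apply, xj_eq]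
        have : a.1 ≠ j.1 - 1 := fun h => hac (Fin.ext h)
        rw [if_neg (show ¬ (a.1 + 1 = j.1) by omega)]
        split_ifs with h
        · congr 1
          simp only [Fin.ext_iff, Fin.val_castSucc, Fin.val_succ, succAbove_val]
          split_ifs <;> omega
        · congr 1
          simp only [Fin.ext_iff, Fin.val_succ, succAbove_val]
          split_ifs <;> omega
    · ext a v
      by_cases hac : a = c
      · subst hac
        simp only [Matrix.updateRow_self, Matrix.of_apply]
        congr 1
        simp only [Fin.ext_iff, Fin.val_succ, succAbove_val, c]
        split_ifs <;> omega
      · rw [Matrix.updateRow_ne hac]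
        simp only [M, Matrix.of_apply, xj_eq]
        have : a.1 ≠ j.1 - 1 := fun h => hac (Fin.ext h)
        rw [if_neg (show ¬ (a.1 + 1 = j.1) by omega)]
        split_ifs with h
        · congr 1
          simp only [Fin.ext_iff, Fin.val_castSucc, Fin.val_succ, succAbove_val]
          split_ifs <;> omega
        · congr 1
          simp only [Fin.ext_iff, Fin.val_succ, succAbove_val]
          split_ifs <;> omega

/-- The integrated exponential, in degree `m`. -/
def Jm (m : ℕ) (x : Fin (k+1) → Fin (2*n) → L) : L :=
  algebraMap ℝ L ((m.factorial : ℝ)⁻¹) * IntL L k (Ws x ^ m)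

lemma cocycle_sym_aux (x : Fin (2*n+2) → Fin (2*n) → L) (m : ℕ) :
    ∑ j : Fin (2*n+2), (-1)^j.1 * Dt (xj x j) * IntL L (2*n) (faceA L (2*n) j (Ws x) ^ m) = 0 := by
  simp only [Dt_xj]
  rw [Fin.sum_univ_eq_sum_range (fun j => (Em x (j+1) - Em x j) *
    IntL L (2*n) (faceA L (2*n) j (Ws x) ^ m)), abel_sum]
  have h1 : Em x (2*n+1+1) = 0 := by rw [Em, dif_neg (by omega)]
  have h2 : Em x 0 = 0 := by rw [Em, dif_neg (by omega)]
  rw [h1, h2, zero_mul, zero_mul, sub_zero, zero_sub, neg_eq_zero]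
  rw [← Fin.sum_univ_eq_sum_range (fun i => Em x (i+1) *
    (IntL L (2*n) (faceA L (2*n) (i+1) (Ws x) ^ m) - IntL L (2*n) (faceA L (2*n) i (Ws x) ^ m)))]
  have : ∀ i : Fin (2*n+1), Em x (i.1+1) * (IntL L (2*n) (faceA L (2*n) (i.1+1) (Ws x) ^ m) -
      IntL L (2*n) (faceA L (2*n) i.1 (Ws x) ^ m)) =
      (Dm x i * om (x i.succ) (∑ b, x b)) * (2 * m * IntL L (2*n+1) (Ws x ^ (m-1))) := by
    intro i
    have e : Em x (i.1+1) = Dm x i := by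
      rw [Em, dif_pos (by omega)]; congr 1
    rw [e, ← map_pow, ← map_pow, ← stokes, Derivation.leibniz_pow, pderiv_Ws, smul_eq_mul,
      mul_comm (Ws x ^ _), map_nsmul, IntL_C_mul, nsmul_eq_mul]
    ring
  simp only [this, ← Finset.sum_mul, sum_Dm_om, zero_mul]

lemma Jm_add (m : ℕ) (c : L) (x : Fin (k+1) → Fin (2*n) → L) :
    algebraMap ℝ L ((m.factorial : ℝ)⁻¹) * IntL L k ((C c + Ws x) ^ m) =
    ∑ q ∈ Finset.HasAntidiagonal.antidiagonal m, algebraMap ℝ L ((q.1.factorial : ℝ)⁻¹) * c ^ q.1 * Jm q.2 x := by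
  rw [(Commute.all _ _).add_pow', map_sum, Finset.mul_sum]
  refine Finset.sum_congr rfl fun q hq => ?_
  rw [map_nsmul, ← C_pow, IntL_C_mul, Jm, nsmul_eq_mul]
  have : algebraMap ℝ L ((m.factorial : ℝ)⁻¹) * ((m.choose q.1 : ℕ) : L) =
      algebraMap ℝ L ((q.1.factorial : ℝ)⁻¹) * algebraMap ℝ L ((q.2.factorial : ℝ)⁻¹) := by
    rw [← map_natCast (algebraMap ℝ L), ← map_mul, ← map_mul]
    congr 1
    have hq' := Finset.HasAntidiagonal.mem_antidiagonal.1 hq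
    have := Nat.choose_mul_factorial_mul_factorial (n := m) (k := q.1) (by omega)
    rw [show m - q.1 = q.2 by omega] at this
    have h2 : ((m.choose q.1 : ℕ) : ℝ) * q.1.factorial * q.2.factorial = m.factorial := by
      exact_mod_cast this
    have a1 : (q.1.factorial : ℝ) ≠ 0 := by positivity
    have a2 : (q.2.factorial : ℝ) ≠ 0 := by positivity
    have a3 : (m.factorial : ℝ) ≠ 0 := by positivity
    field_simp
    linarith
  linear_combination (c ^ q.1 * IntL L k (Ws x ^ q.2)) * this

theorem cocycle_sym (x : Fin (2*n+2) → Fin (2*n) → L) (m : ℕ) :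
    ∑ j : Fin (2*n+2), (-1)^j.1 * ∑ q ∈ Finset.HasAntidiagonal.antidiagonal m,
      (algebraMap ℝ L ((q.1.factorial : ℝ)⁻¹) * om (x j) (x (j+1)) ^ q.1) *
        (Dt (xj x j) * Jm q.2 (xj x j)) = 0 := by
  have h := congrArg (fun z => algebraMap ℝ L ((m.factorial : ℝ)⁻¹) * z) (cocycle_sym_aux x m)
  simp only [mul_zero, Finset.mul_sum] at h
  rw [← h]
  refine Finset.sum_congr rfl fun j _ => ?_
  rw [faceA_Ws]
  have e := Jm_add m (om (x j) (x (j+1))) (xj x j)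
  rw [show ∀ a b c : L, a * (b * c) = b * (a * c) by intros; ring, e, mul_assoc]
  simp only [Finset.mul_sum]
  refine Finset.sum_congr rfl fun q _ => ?_
  ring
end sym

/-! ### The symbol formula for `τ` -/

/-- The generic vectors. -/
def xi (n k : ℕ) (i : Fin k) (v : Fin (2*n)) : Tens n k := X (i, v)

lemma algebraMap_real_tens {σ : Type*} (r : ℝ) :
    algebraMap ℝ (MvPolynomial σ Kc) r = C (algebraMap ℂ Kc (r : ℂ)) := rfl

lemma hasSym_alpha (n k : ℕ) (i j : Fin k) :
    HasSym (alphaOp n k i j) (om (xi n k i) (xi n k j)) := by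
  have h : hf (Tens n k) = C (algebraMap ℂ Kc (1/2)) := by
    rw [hf, algebraMap_real_tens]; norm_num
  rw [om, h]
  refine HasSym.smul _ (HasSym.sum _ fun r => HasSym.sub (HasSym.mul ?_ ?_) (HasSym.mul ?_ ?_)) <;>
  exact HasSym.pderiv _

lemma hasSym_pi (n : ℕ) : HasSym (piOp n) (Dt (xi n (2*n+1))) := by
  rw [Dt, ← Matrix.det_transpose, Matrix.det_apply]
  refine HasSym.sum _ fun σ => ?_
  refine HasSym.zsmul _ ?_
  rw [← List.prod_ofFn, List.ofFn_eq_map, List.ofFn_eq_map]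
  exact HasSym.listProd _ fun m => HasSym.pderiv _

lemma hasSym_alphaPow (n k : ℕ) (K : Pairs k → ℕ) :
    HasSym (alphaPowProd n k K) (∏ p : Pairs k, om (xi n k p.1.1) (xi n k p.1.2) ^ K p) := by
  rw [← Finset.prod_map_toList]
  exact HasSym.listProd _ fun p => (hasSym_alpha _ _ _ _).pow _

/-- The degree `m` symbol of `τ`. -/
def Gs (n m : ℕ) : Tens n (2*n+1) := Dt (xi n (2*n+1)) * Jm m (xi n (2*n+1))

/-- The numerical coefficients in `τ`. -/
def cK (n : ℕ) (K : Pairs (2*n+1) → ℕ) : ℝ :=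
  (∫ u in simplexSet (2*n), ∏ p : Pairs (2*n+1),
    (2 * cons0 (2*n) u p.1.1 - 2 * cons0 (2*n) u p.1.2 + 1) ^ (K p)) *
      (∏ p : Pairs (2*n+1), ((K p).factorial : ℝ))⁻¹

lemma cons0_eq_Tx (m : ℕ) (u : Fin m → ℝ) (a : Fin (m+1)) : cons0 m u a = Tx u a.1 := by
  refine Fin.cases ?_ (fun a => ?_) a
  · simp [cons0, Tx]
  · rw [Fin.val_succ, Tx_succ]; simp [cons0]

lemma Jm_expand (n m : ℕ) : Jm m (xi n (2*n+1)) =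
    ∑ K ∈ Finset.piAntidiag Finset.univ m, algebraMap ℝ _ (cK n K) *
      ∏ p : Pairs (2*n+1), om (xi n (2*n+1) p.1.1) (xi n (2*n+1) p.1.2) ^ K p := by
  rw [Jm, Ws_eq_pairs, Finset.sum_pow_eq_sum_piAntidiag, map_sum, Finset.mul_sum]
  refine Finset.sum_congr rfl fun K hK => ?_
  simp only [mul_pow, Finset.prod_mul_distrib]
  have e1 : (∏ p : Pairs (2*n+1), (2 * Tx X p.1.1.1 - 2 * Tx X p.1.2.1 + 1 :
      MvPolynomial (Fin (2*n)) (Tens n (2*n+1))) ^ K p) = map (algebraMap ℝ (Tens n (2*n+1)))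
      (∏ p : Pairs (2*n+1), (2 * Tx X p.1.1.1 - 2 * Tx X p.1.2.1 + 1 :
      MvPolynomial (Fin (2*n)) ℝ) ^ K p) := by
    rw [map_prod]
    refine Finset.prod_congr rfl fun p _ => ?_
    rw [map_pow, map_add, map_sub, map_mul, map_mul, map_one, map_ofNat]
    have : ∀ a, map (algebraMap ℝ (Tens n (2*n+1))) (Tx X a) =
        Tx (X : Fin (2*n) → MvPolynomial (Fin (2*n)) (Tens n (2*n+1))) a := by
      intro a
      unfold Tx
      split_ifs <;> simp
    rw [this, this]
  rw [e1]
  simp only [← map_pow, ← map_prod]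
  rw [show ((Nat.multinomial Finset.univ K : ℕ) : MvPolynomial (Fin (2*n)) (Tens n (2*n+1))) =
    C ((Nat.multinomial Finset.univ K : ℕ) : Tens n (2*n+1)) by simp]
  rw [IntL_C_mul, mul_comm (map _ _), IntL_C_mul, IntL_map_real]
  have hm : algebraMap ℝ (Tens n (2*n+1)) (m.factorial : ℝ)⁻¹ *
      ((Nat.multinomial Finset.univ K : ℕ) : Tens n (2*n+1)) =
      algebraMap ℝ (Tens n (2*n+1)) (∏ p, ((K p).factorial : ℝ))⁻¹ := by
    rw [← map_natCast (algebraMap ℝ (Tens n (2*n+1))), ← map_mul]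
    congr 1
    have h := Nat.multinomial_spec Finset.univ K
    rw [(Finset.mem_piAntidiag.1 hK).1] at h
    have h' : (∏ p, ((K p).factorial : ℝ)) * (Nat.multinomial Finset.univ K : ℝ) = m.factorial := by
      exact_mod_cast h
    have a1 : (∏ p, ((K p).factorial : ℝ)) ≠ 0 :=
      Finset.prod_ne_zero_iff.2 fun p _ => by positivity
    have a2 : (m.factorial : ℝ) ≠ 0 := by positivity
    field_simp
    linarith
  have hi : (∫ u in simplexSet (2*n), eval u (∏ p : Pairs (2*n+1), (2 * Tx X p.1.1.1 - 2 * Tx X p.1.2.1 + 1 :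
      MvPolynomial (Fin (2*n)) ℝ) ^ K p)) = ∫ u in simplexSet (2*n), ∏ p : Pairs (2*n+1),
    (2 * cons0 (2*n) u p.1.1 - 2 * cons0 (2*n) u p.1.2 + 1) ^ (K p) := by
    congr 1
    ext u
    rw [map_prod]
    refine Finset.prod_congr rfl fun p _ => ?_
    have : ∀ a, eval u (Tx X a) = Tx u a := by
      intro a
      unfold Tx
      split_ifs <;> simp
    rw [map_pow, map_add, map_sub, map_mul, map_mul, map_one, map_ofNat, this, this, cons0_eq_Tx,
      cons0_eq_Tx]
  rw [hi, cK, map_mul]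
  linear_combination (∏ p : Pairs (2*n+1), om (xi n (2*n+1) p.1.1) (xi n (2*n+1) p.1.2) ^ K p) *
    (algebraMap ℝ (Tens n (2*n+1)) (∫ u in simplexSet (2*n), ∏ p : Pairs (2*n+1),
    (2 * cons0 (2*n) u p.1.1 - 2 * cons0 (2*n) u p.1.2 + 1) ^ (K p))) * hm

lemma om_mem (n k : ℕ) (i j : Fin k) : om (xi n k i) (xi n k j) ∈ idealOfVars (Fin k × Fin (2*n)) Kc := by
  have hX : ∀ x : Fin k × Fin (2*n), (X x : Tens n k) ∈ idealOfVars (Fin k × Fin (2*n)) Kc := by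
    intro x; exact Ideal.subset_span ⟨x, rfl⟩
  unfold om
  refine Ideal.mul_mem_left _ _ (Ideal.sum_mem _ fun r _ => Ideal.sub_mem _ ?_ ?_) <;>
  exact Ideal.mul_mem_left _ _ (hX _)

lemma prodom_mem (n k : ℕ) (K : Pairs k → ℕ) :
    ∏ p : Pairs k, om (xi n k p.1.1) (xi n k p.1.2) ^ K p ∈
      idealOfVars (Fin k × Fin (2*n)) Kc ^ (∑ p, K p) := by
  rw [← Finset.prod_pow_eq_pow_sum]
  exact Ideal.prod_mem_prod fun p _ => Ideal.pow_mem_pow (om_mem _ _ _ _) _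

lemma Jm_mem (n m : ℕ) : Jm m (xi n (2*n+1)) ∈ idealOfVars (Fin (2*n+1) × Fin (2*n)) Kc ^ m := by
  rw [Jm_expand]
  refine Ideal.sum_mem _ fun K hK => Ideal.mul_mem_left _ _ ?_
  have := prodom_mem n _ K
  rwa [(Finset.mem_piAntidiag.1 hK).1] at this

lemma tau_eq (n : ℕ) (a : Tens n (2*n+1)) (M : ℕ) (hM : a.totalDegree < M) :
    tau n a = ∑ m ∈ Finset.range M, eps ^ m * pr (Gs n m) a := by
  set T : (Pairs (2*n+1) → ℕ) → Kc := fun K => algebraMap ℝ Kc (cK n K) * eps ^ (∑ p, K p) *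
    pr ((∏ p, om (xi n (2*n+1) p.1.1) (xi n (2*n+1) p.1.2) ^ K p) * Dt (xi n (2*n+1))) a with hT
  have hvan : ∀ K, a.totalDegree < ∑ p, K p → T K = 0 := by
    intro K hK
    simp only [hT]
    rw [pr_vanish _ _ _ (Ideal.mul_mem_right _ _ (prodom_mem n _ K)) hK, mul_zero]
  have h1 : tau n a = ∑ K ∈ Fintype.piFinset (fun _ : Pairs (2*n+1) =>
      Finset.range (a.totalDegree + 1)), T K := by
    unfold tau
    refine Finset.sum_congr rfl fun K _ => ?_
    simp only [hT]
    rw [smul_eq_mul, ← pr_one, hasSym_alphaPow, hasSym_pi, one_mul]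
    congr 2
    simp only [cK]
    change _ = algebraMap ℂ Kc ((_ : ℝ) : ℂ)
    push_cast
    rfl
  have h2 : ∀ m, eps ^ m * pr (Gs n m) a = ∑ K ∈ Finset.piAntidiag Finset.univ m, T K := by
    intro m
    rw [Gs, Jm_expand, Finset.mul_sum, map_sum, LinearMap.sum_apply, Finset.mul_sum]
    refine Finset.sum_congr rfl fun K hK => ?_
    simp only [hT]
    rw [(Finset.mem_piAntidiag.1 hK).1, algebraMap_real_tens,
      show ∀ (x y : Tens n (2*n+1)) (c : Kc), x * (C c * y) = c • (y * x) by
        intro x y c; rw [smul_eq_C_mul]; ring, map_smul, LinearMap.smul_apply, smul_eq_mul]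
    have hc : algebraMap ℝ Kc (cK n K) = algebraMap ℂ Kc ((cK n K : ℝ) : ℂ) := rfl
    rw [hc]
    ring
  rw [h1]
  simp only [h2]
  rw [← Finset.sum_filter_of_ne (p := fun K => ∑ p, K p < M)]
  swap
  · intro K _ hK
    by_contra h
    exact hK (hvan K (by omega))
  rw [← Finset.sum_fiberwise_of_maps_to (t := Finset.range M) (g := fun K => ∑ p, K p)]
  swap
  · intro K hK; simpa using (Finset.mem_filter.1 hK).2
  refine Finset.sum_congr rfl fun m hm => ?_
  refine Finset.sum_subset ?_ ?_
  · intro K hK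
    simp only [Finset.mem_filter] at hK
    simp [Finset.mem_piAntidiag, hK.2]
  · intro K hK hK'
    have hs := (Finset.mem_piAntidiag.1 hK).1
    apply hvan
    simp only [Finset.mem_filter, Fintype.mem_piFinset, Finset.mem_range, not_and] at hK' hm
    by_contra hc
    refine hK' ⟨fun p => ?_, ?_⟩ hs
    · have : K p ≤ ∑ p, K p := Finset.single_le_sum (fun _ _ => Nat.zero_le _) (Finset.mem_univ p)
      omega
    · rw [hs]; exact hm

lemma Gs_vanish (n : ℕ) (a : Tens n (2*n+1)) (m : ℕ) (hm : a.totalDegree < m) :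
    pr (Gs n m) a = 0 :=
  pr_vanish _ _ m (Ideal.mul_mem_left _ _ (Jm_mem n m)) hm

lemma tau_add (n : ℕ) (a b : Tens n (2*n+1)) : tau n (a + b) = tau n a + tau n b := by
  have h := totalDegree_add a b
  set M := max a.totalDegree b.totalDegree + 1
  rw [tau_eq n a M (by omega), tau_eq n b M (by omega), tau_eq n (a+b) M (by omega),
    ← Finset.sum_add_distrib]
  exact Finset.sum_congr rfl fun m _ => by rw [map_add, mul_add]

lemma tau_smul (n : ℕ) (c : Kc) (a : Tens n (2*n+1)) : tau n (c • a) = c * tau n a := by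
  have h := totalDegree_smul_le c a
  rw [tau_eq n a (a.totalDegree+1) (by omega), tau_eq n (c • a) (a.totalDegree+1) (by omega),
    Finset.mul_sum]
  exact Finset.sum_congr rfl fun m _ => by rw [map_smul, smul_eq_mul]; ring

/-- `τ` as a linear map. -/
def tauL (n : ℕ) : Tens n (2*n+1) →ₗ[Kc] Kc where
  toFun := tau n
  map_add' := tau_add n
  map_smul' := tau_smul n

/-! ### The Hochschild cocycle property of `τ` -/

/-- Hochschild faces. -/
def face {B : Type*} (μ : B → B → B) (k : ℕ) (j : Fin (k+2)) (a : Fin (k+2) → B) : Fin (k+1) → B :=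
  fun c => if c = sdeg k j j then μ (a j) (a (j+1)) else a (j.succAbove c)

lemma pr_ext_zero {σ : Type*} (b : MvPolynomial σ Kc) (h : ∀ P, pr P b = 0) : b = 0 := by
  refine MvPolynomial.ext _ _ fun d => ?_
  have := h (monomial d 1)
  rw [pr_monomial, one_mul] at this
  have hu : IsUnit (((d.prod fun _ k => k.factorial : ℕ)) : Kc) := by
    have : ((d.prod fun _ k => k.factorial : ℕ) : Kc) =
      algebraMap ℂ Kc ((d.prod fun _ k => k.factorial : ℕ) : ℂ) := (map_natCast _ _).symm
    rw [this]
    apply IsUnit.map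
    rw [isUnit_iff_ne_zero, Nat.cast_ne_zero, Finsupp.prod, Finset.prod_ne_zero_iff]
    intro i _; exact Nat.factorial_ne_zero _
  simpa using (hu.mul_right_eq_zero).1 this

lemma alpha_pow_zero (n k : ℕ) (i j : Fin k) (x : Tens n k) (l : ℕ) (hl : x.totalDegree < l) :
    (alphaOp n k i j ^ l) x = 0 := by
  refine pr_ext_zero _ fun P => ?_
  rw [(hasSym_alpha n k i j).pow l]
  exact pr_vanish _ _ l (Ideal.mul_mem_left _ _ (Ideal.pow_mem_pow (om_mem _ _ _ _) _)) hl

/-- truncated exponential -/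
def eT {n k : ℕ} (M : ℕ) (f : Module.End Kc (Tens n k)) (a : Tens n k) : Tens n k :=
  ∑ m ∈ Finset.range M, (algebraMap ℂ Kc ((m.factorial : ℂ)⁻¹) * eps ^ m) • (f ^ m) a

lemma moyal_eq (n : ℕ) (f g : Apol n) (M : ℕ) (hM : (elemT ![f, g]).totalDegree < M) :
    moyal n f g = rename (Prod.snd : Fin 2 × Fin (2*n) → Fin (2*n))
      (eT M (alphaOp n 2 0 1) (elemT ![f, g])) := by
  have : expEps (alphaOp n 2 0 1) (elemT ![f, g]) = eT M (alphaOp n 2 0 1) (elemT ![f, g]) := by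
    unfold expEps eT
    refine Finset.sum_subset ?_ ?_
    · intro m hm; simp at hm ⊢; omega
    · intro m _ hm
      rw [alpha_pow_zero _ _ _ _ _ _ (by simp at hm; omega), smul_zero]
  rw [moyal, this]
  have h2 : (aeval (fun v : Fin 2 × Fin (2*n) => (X v.2 : Apol n)) : Tens n 2 →ₐ[Kc] Apol n) =
      rename (Prod.snd : Fin 2 × Fin (2*n) → Fin (2*n)) := by
    ext v <;> simp
  rw [h2]

lemma alpha_iota (n k : ℕ) (p q : Fin k) (hpq : p ≠ q) (x : Tens n 2) (R : Tens n k)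
    (hp : ∀ v, pderiv (p, v) R = 0) (hq : ∀ v, pderiv (q, v) R = 0) (l : ℕ) :
    (alphaOp n k p q ^ l) (rename (Prod.map ![p, q] id) x * R) =
      rename (Prod.map ![p, q] id) ((alphaOp n 2 0 1 ^ l) x) * R := by
  have hinj : Function.Injective (Prod.map ![p, q] (id : Fin (2*n) → Fin (2*n))) := by
    refine Function.Injective.prodMap ?_ Function.injective_id
    intro a b hab
    fin_cases a <;> fin_cases b <;> simp_all
  have h0 : ∀ v (y : Tens n 2), pderiv (p, v) (rename (Prod.map ![p, q] id) y * R) =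
      rename (Prod.map ![p, q] id) (pderiv (0, v) y) * R := by
    intro v y
    have := pderiv_rename hinj (0, v) y
    simp only [Prod.map_apply, Matrix.cons_val_zero, id] at this
    rw [Derivation.leibniz, hp, smul_zero, zero_add, this, smul_eq_mul, mul_comm R]
  have h1 : ∀ v (y : Tens n 2), pderiv (q, v) (rename (Prod.map ![p, q] id) y * R) =
      rename (Prod.map ![p, q] id) (pderiv (1, v) y) * R := by
    intro v y
    have := pderiv_rename hinj (1, v) y
    simp only [Prod.map_apply, Matrix.cons_val_one, id] at this
    rw [Derivation.leibniz, hq, smul_zero, zero_add, smul_eq_mul, mul_comm R]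
    rw [← this]; rfl
  have hone : ∀ y : Tens n 2, alphaOp n k p q (rename (Prod.map ![p, q] id) y * R) =
      rename (Prod.map ![p, q] id) (alphaOp n 2 0 1 y) * R := by
    intro y
    simp only [alphaOp, LinearMap.smul_apply, LinearMap.sum_apply, LinearMap.sub_apply,
      Module.End.mul_apply, Dop, Derivation.coeFn_coe, h0, h1,
      map_smul, map_sum, map_sub, smul_mul_assoc, Finset.sum_mul, sub_mul]
  induction l with
  | zero => simp
  | succ l ih => rw [pow_succ', Module.End.mul_apply, ih, hone, pow_succ', Module.End.mul_apply]

lemma sdeg_succAbove (k : ℕ) (j : Fin (k+2)) (c : Fin (k+1)) : sdeg k j (j.succAbove c) = c := by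
  have := c.2
  have := j.2
  simp only [sdeg, Fin.ext_iff, succAbove_val]
  rw [Nat.mod_eq_of_lt (by split_ifs <;> omega)]
  split_ifs <;> omega

lemma succAbove_sdeg (k : ℕ) (j : Fin (k+2)) : j.succAbove (sdeg k j j) = j + 1 := by
  have := j.2
  have hj1 : (j+1 : Fin (k+2)).1 = if j.1 = k+1 then 0 else j.1 + 1 := by
    rw [Fin.val_add_one]
    simp [Fin.ext_iff]
  rw [Fin.ext_iff, succAbove_val, hj1]
  simp only [sdeg, le_refl, if_true]
  by_cases h : j.1 = k+1
  · simp [h]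
  · rw [Nat.mod_eq_of_lt (by omega)]; simp [h]

lemma pderiv_emb_ne (n k : ℕ) (i c : Fin k) (h : i ≠ c) (v : Fin (2*n)) (a : Apol n) :
    pderiv (i, v) (embA n k c a) = 0 := by
  apply pderiv_eq_zero_of_notMem_vars
  intro hm
  have := vars_rename _ _ hm
  simp only [Finset.mem_image, Prod.mk.injEq] at this
  obtain ⟨_, _, h1, _⟩ := this
  exact h h1.symm

lemma elemT_face (n k : ℕ) (j : Fin (k+2)) (a : Fin (k+2) → Apol n) (M : ℕ)
    (hM : (elemT ![a j, a (j+1)]).totalDegree < M) :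
    elemT (face (moyal n) k j a) = rename (Prod.map (sdeg k j) id)
      (eT M (alphaOp n (k+2) j (j+1)) (elemT a)) := by
  set R : Tens n (k+2) := ∏ c ∈ Finset.univ.erase (sdeg k j j), embA n (k+2) (j.succAbove c)
    (a (j.succAbove c)) with hR
  have hne : j ≠ j + 1 := by
    rw [← succAbove_sdeg]; exact (Fin.succAbove_ne _ _).symm
  have hRp : ∀ i, (i = j ∨ i = j+1) → ∀ v, pderiv (i, v) R = 0 := by
    intro i hi v
    rw [hR]
    refine Finset.prod_induction _ (fun y => pderiv (i, v) y = 0) ?_ (by simp) fun c hc => ?_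
    · intro y z hy hz; rw [Derivation.leibniz, hy, hz, smul_zero, smul_zero, add_zero]
    apply pderiv_emb_ne
    rintro rfl
    rcases hi with hi | hi
    · exact Fin.succAbove_ne _ _ hi
    · rw [← succAbove_sdeg] at hi
      exact (Finset.ne_of_mem_erase hc) (Fin.succAbove_right_injective hi)
  have hA : elemT a = rename (Prod.map ![j, j+1] id) (elemT ![a j, a (j+1)]) * R := by
    rw [elemT, Fin.prod_univ_succAbove _ j, ← Finset.mul_prod_erase _ _ (Finset.mem_univ (sdeg k j j)),
      ← hR, succAbove_sdeg, elemT, Fin.prod_univ_two, map_mul, ← mul_assoc]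
    congr 2 <;> simp only [embA, rename_rename] <;> rfl
  rw [hA, eT]
  simp only [alpha_iota n _ _ _ hne _ _ (hRp _ (Or.inl rfl)) (hRp _ (Or.inr rfl))]
  simp only [← smul_mul_assoc, ← Finset.sum_mul]
  rw [map_mul]
  rw [elemT, ← Finset.mul_prod_erase _ _ (Finset.mem_univ (sdeg k j j))]
  congr 1
  · rw [face, if_pos rfl, moyal_eq n _ _ M hM, embA, rename_rename]
    unfold eT
    simp only [map_sum, map_smul, rename_rename]
    refine Finset.sum_congr rfl fun l _ => ?_
    congr 2
    congr 1
    have hs : sdeg k j (j+1) = sdeg k j j := by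
      rw [← succAbove_sdeg, sdeg_succAbove]
    funext x
    obtain ⟨i, v⟩ := x
    fin_cases i
    · simp
    · simp [hs]
  · rw [hR, map_prod]
    refine Finset.prod_congr rfl fun c hc => ?_
    rw [face, if_neg (Finset.ne_of_mem_erase hc), embA, embA, rename_rename]
    congr 2
    funext v
    simp [sdeg_succAbove]

lemma map_Ws {L L' : Type*} [CommRing L] [Algebra ℝ L] [CommRing L'] [Algebra ℝ L'] {n k : ℕ}
    (f : L →ₐ[ℝ] L') (x : Fin (k+1) → Fin (2*n) → L) :
    map (f : L →+* L') (Ws x) = Ws (fun a v => f (x a v)) := by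
  have hT : ∀ a, map (f : L →+* L') (Tx X a) = Tx (X : Fin k → MvPolynomial (Fin k) L') a := by
      intro a
      unfold Tx
      split_ifs <;> simp
  have hh : (f : L →+* L') (hf L) = hf L' := f.commutes _
  simp only [Ws, map_mul, map_C, map_sum, cf, map_add, map_sub, hT, map_ofNat, map_intCast, hh]
  simp only [RingHom.coe_coe, map_om]

lemma map_Jm {L L' : Type*} [CommRing L] [Algebra ℝ L] [CommRing L'] [Algebra ℝ L'] {n k : ℕ}
    (f : L →ₐ[ℝ] L') (m : ℕ) (x : Fin (k+1) → Fin (2*n) → L) :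
    f (Jm m x) = Jm m (fun a v => f (x a v)) := by
  rw [Jm, map_mul, f.commutes, Jm, ← map_Ws f x, ← map_pow]
  rw [IntL_map]

lemma map_Dt {L L' : Type*} [CommRing L] [Algebra ℝ L] [CommRing L'] [Algebra ℝ L'] {n : ℕ}
    (f : L →ₐ[ℝ] L') (x : Fin (2*n+1) → Fin (2*n) → L) :
    f (Dt x) = Dt (fun a v => f (x a v)) := by
  rw [Dt, AlgHom.map_det]; rfl

lemma sPull_xi (n k : ℕ) (j : Fin (k+2)) (c : Fin (k+1)) (v : Fin (2*n)) :
    sPull Kc (Prod.map (sdeg k j) (id : Fin (2*n) → Fin (2*n))) (xi n (k+1) c v) =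
      xj (xi n (k+2)) j c v := by
  rw [sPull, xi, aeval_X, xj, Finset.sum_apply]
  have : (Finset.univ.filter fun x' : Fin (k+2) × Fin (2*n) => Prod.map (sdeg k j) id x' = (c, v)) =
    (Finset.univ.filter fun a => sdeg k j a = c) ×ˢ {v} := by
    ext ⟨a, w⟩; simp only [Finset.mem_filter, Finset.mem_univ, true_and, Prod.map_apply, id,
      Prod.mk.injEq, Finset.mem_product, Finset.mem_singleton]
  rw [this, Finset.sum_product]
  simp [xi]

lemma sPull_Gs (n m : ℕ) (j : Fin (2*n+2)) :
    sPull Kc (Prod.map (sdeg (2*n) j) id) (Gs n m) =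
      Dt (xj (xi n (2*n+2)) j) * Jm m (xj (xi n (2*n+2)) j) := by
  have h1 := map_Dt ((sPull Kc (Prod.map (sdeg (2*n) j) (id : Fin (2*n) → Fin (2*n)))).restrictScalars ℝ)
    (xi n (2*n+1))
  have h2 := map_Jm ((sPull Kc (Prod.map (sdeg (2*n) j) (id : Fin (2*n) → Fin (2*n)))).restrictScalars ℝ)
    m (xi n (2*n+1))
  simp only [AlgHom.coe_restrictScalars', sPull_xi] at h1 h2
  rw [Gs, map_mul, h1, h2]

lemma sPull_mem {σ σ' : Type*} [Fintype σ] [DecidableEq σ'] (f : σ → σ')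
    (P : MvPolynomial σ' Kc) (m : ℕ) (h : P ∈ idealOfVars σ' Kc ^ m) :
    sPull Kc f P ∈ idealOfVars σ Kc ^ m := by
  have h1 : Ideal.map (sPull Kc f) (idealOfVars σ' Kc) ≤ idealOfVars σ Kc := by
    rw [idealOfVars, Ideal.map_span, Ideal.span_le]
    rintro _ ⟨_, ⟨x, rfl⟩, rfl⟩
    simp only [sPull, aeval_X, SetLike.mem_coe]
    exact Ideal.sum_mem _ fun y _ => Ideal.subset_span ⟨y, rfl⟩
  have := Ideal.mem_map_of_mem (sPull Kc f) h
  rw [Ideal.map_pow] at this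
  exact Ideal.pow_right_mono h1 m this

lemma Gs_mem (n m : ℕ) : Gs n m ∈ idealOfVars (Fin (2*n+1) × Fin (2*n)) Kc ^ m :=
  Ideal.mul_mem_left _ _ (Jm_mem n m)

lemma sum_square_antidiag {β : Type*} [AddCommMonoid β] (M : ℕ) (F : ℕ → ℕ → β)
    (hF : ∀ l m, M ≤ l + m → F l m = 0) :
    ∑ l ∈ Finset.range M, ∑ m ∈ Finset.range M, F l m =
      ∑ t ∈ Finset.range M, ∑ q ∈ Finset.HasAntidiagonal.antidiagonal t, F q.1 q.2 := by
  rw [← Finset.sum_product' (f := F)]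
  rw [← Finset.sum_filter_of_ne (p := fun q : ℕ × ℕ => q.1 + q.2 < M)]
  swap
  · intro q _ h
    by_contra hc
    exact h (hF _ _ (by omega))
  rw [← Finset.sum_fiberwise_of_maps_to (t := Finset.range M) (g := fun q : ℕ × ℕ => q.1 + q.2)]
  swap
  · intro q hq; simpa using (Finset.mem_filter.1 hq).2
  refine Finset.sum_congr rfl fun t ht => Finset.sum_congr ?_ fun _ _ => rfl
  ext q
  simp only [Finset.mem_filter, Finset.mem_product, Finset.mem_range,
    Finset.HasAntidiagonal.mem_antidiagonal] at ht ⊢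
  omega

theorem tau_cocycle (n : ℕ) (a : Fin (2*n+2) → Apol n) :
    ∑ j : Fin (2*n+2), (-1 : Kc)^j.1 * tau n (elemT (face (moyal n) (2*n) j a)) = 0 := by
  obtain ⟨M, hM0, hM1, hM2⟩ : ∃ M : ℕ, (elemT a).totalDegree < M ∧
      (∀ j : Fin (2*n+2), (elemT ![a j, a (j+1)]).totalDegree < M) ∧
      (∀ j : Fin (2*n+2), (elemT (face (moyal n) (2*n) j a)).totalDegree < M) := by
    refine ⟨(elemT a).totalDegree + ∑ j : Fin (2*n+2), (elemT ![a j, a (j+1)]).totalDegree +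
      ∑ j : Fin (2*n+2), (elemT (face (moyal n) (2*n) j a)).totalDegree + 1, by omega, ?_, ?_⟩
    · intro j
      have := Finset.single_le_sum (f := fun j => (elemT ![a j, a (j+1)]).totalDegree)
        (fun _ _ => Nat.zero_le _) (Finset.mem_univ j)
      omega
    · intro j
      have := Finset.single_le_sum (f := fun j => (elemT (face (moyal n) (2*n) j a)).totalDegree)
        (fun _ _ => Nat.zero_le _) (Finset.mem_univ j)
      omega
  have key : ∀ j : Fin (2*n+2), tau n (elemT (face (moyal n) (2*n) j a)) =
      ∑ t ∈ Finset.range M, eps ^ t * pr (∑ q ∈ Finset.HasAntidiagonal.antidiagonal t,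
      (algebraMap ℝ _ ((q.1.factorial : ℝ)⁻¹) * om (xi n (2*n+2) j) (xi n (2*n+2) (j+1)) ^ q.1) *
        (Dt (xj (xi n (2*n+2)) j) * Jm q.2 (xj (xi n (2*n+2)) j))) (elemT a) := by
    intro j
    rw [tau_eq n _ M (hM2 j), elemT_face n _ j a M (hM1 j)]
    have e : ∀ m, eps ^ m * pr (Gs n m) (rename (Prod.map (sdeg (2*n) j) id)
        (eT M (alphaOp n (2*n+2) j (j+1)) (elemT a))) =
        ∑ l ∈ Finset.range M, eps ^ (l+m) *
          pr ((algebraMap ℝ _ ((l.factorial : ℝ)⁻¹) * om (xi n (2*n+2) j) (xi n (2*n+2) (j+1)) ^ l) *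
        sPull Kc (Prod.map (sdeg (2*n) j) id) (Gs n m)) (elemT a) := by
      intro m
      rw [pr_rename, eT, map_sum, Finset.mul_sum]
      refine Finset.sum_congr rfl fun l _ => ?_
      rw [map_smul, (hasSym_alpha _ _ _ _).pow l, algebraMap_real_tens, mul_assoc, ← smul_eq_C_mul,
        map_smul, LinearMap.smul_apply, smul_eq_mul, smul_eq_mul, mul_comm (sPull _ _ _) (_ ^ l)]
      push_cast
      ring
    simp only [e]
    rw [Finset.sum_comm, sum_square_antidiag M (fun l m => eps ^ (l+m) *
          pr ((algebraMap ℝ _ ((l.factorial : ℝ)⁻¹) * om (xi n (2*n+2) j) (xi n (2*n+2) (j+1)) ^ l) *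
        sPull Kc (Prod.map (sdeg (2*n) j) id) (Gs n m)) (elemT a))]
    · refine Finset.sum_congr rfl fun t _ => ?_
      rw [map_sum, LinearMap.sum_apply, Finset.mul_sum]
      refine Finset.sum_congr rfl fun q hq => ?_
      rw [Finset.HasAntidiagonal.mem_antidiagonal.1 hq, sPull_Gs]
    · intro l m hlm
      rw [pr_vanish _ _ (l+m) _ (by omega), mul_zero]
      rw [pow_add]
      exact Ideal.mul_mem_mul (Ideal.mul_mem_left _ _ (Ideal.pow_mem_pow (om_mem _ _ _ _) _))
        (sPull_mem _ _ _ (Gs_mem n m))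
  simp only [key, Finset.mul_sum]
  rw [Finset.sum_comm]
  refine Finset.sum_eq_zero fun t _ => ?_
  have h := cocycle_sym (xi n (2*n+2)) t
  have h2 := congrArg (fun P => eps ^ t * pr P (elemT a)) h
  simp only [map_zero, LinearMap.zero_apply, mul_zero] at h2
  rw [← h2, map_sum, LinearMap.sum_apply, Finset.mul_sum]
  refine Finset.sum_congr rfl fun j _ => ?_
  have hs : ((-1 : Tens n (2*n+2)) ^ j.1) = C ((-1) ^ j.1) := by simp
  rw [hs, ← smul_eq_C_mul, map_smul, LinearMap.smul_apply, smul_eq_mul]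
  ring

/-! ### Matrix version of `τ` -/

lemma sdeg_add_one (k : ℕ) (j i : Fin (k+2)) (h : i ≠ j) : sdeg k j (i+1) = sdeg k j i + 1 := by
  have hi := i.2
  have hj := j.2
  have h' : i.1 ≠ j.1 := fun e => h (Fin.ext e)
  rw [Fin.ext_iff, Fin.val_add_one]
  have hi1 : (i+1 : Fin (k+2)).1 = if i.1 = k+1 then 0 else i.1 + 1 := by
    rw [Fin.val_add_one]
    simp [Fin.ext_iff]
  have key : ∀ c : Fin (k+2), (sdeg k j c).1 = if c.1 = k+1 ∧ j.1 = k+1 then 0 else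
      if c.1 ≤ j.1 then c.1 else c.1 - 1 := by
    intro c
    have := c.2
    simp only [sdeg]
    by_cases h : c.1 = k+1 ∧ j.1 = k+1
    · simp [h]
    · rw [if_neg h, Nat.mod_eq_of_lt]
      split_ifs <;> omega
  simp only [Fin.ext_iff, key, hi1, Fin.val_last]
  split_ifs <;> omega

lemma ne_add_one {k : ℕ} (j : Fin (k+2)) : j ≠ j + 1 := by
  rw [← succAbove_sdeg]; exact (Fin.succAbove_ne _ _).symm

/-- Index chains with an extra index. -/
def idxEquiv (k N : ℕ) (j : Fin (k+2)) :
    ((Fin (k+1) → Fin N) × Fin N) ≃ (Fin (k+2) → Fin N) where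
  toFun q := Function.update (q.1 ∘ sdeg k j) (j+1) q.2
  invFun r := (fun c => if c = sdeg k j j then r j else r (j.succAbove c), r (j+1))
  left_inv q := by
    obtain ⟨idx, l⟩ := q
    ext c
    · simp only
      split_ifs with h
      · rw [Function.update_of_ne (ne_add_one j), h]; rfl
      · rw [Function.update_of_ne]
        · simp [sdeg_succAbove]
        · rw [← succAbove_sdeg]
          exact fun e => h (Fin.succAbove_right_injective e)
    · simp
  right_inv r := by
    funext i
    by_cases h : i = j + 1
    · subst h; simp
    · simp only [Function.update_of_ne h, Function.comp]
      by_cases hij : i = j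
      · subst hij; simp
      · obtain ⟨c, rfl⟩ := Fin.exists_succAbove_eq hij
        rw [sdeg_succAbove, if_neg]
        rintro rfl
        exact h (succAbove_sdeg k j)

/-- elementary tensors as a multilinear map -/
def elemTM (n k : ℕ) : MultilinearMap Kc (fun _ : Fin k => Apol n) (Tens n k) :=
  (MultilinearMap.mkPiAlgebra Kc (Fin k) (Tens n k)).compLinearMap
    (fun i => (embA n k i).toLinearMap)

lemma elemTM_apply (n k : ℕ) (a : Fin k → Apol n) : elemTM n k a = elemT a := by
  simp [elemTM, elemT]

/-- `τ` as a multilinear map -/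
def tauM (n : ℕ) : MultilinearMap Kc (fun _ : Fin (2*n+1) => Apol n) Kc :=
  (tauL n).compMultilinearMap (elemTM n (2*n+1))

lemma tauM_apply (n : ℕ) (a : Fin (2*n+1) → Apol n) : tauM n a = tau n (elemT a) := by
  rw [tauM, LinearMap.compMultilinearMap_apply, elemTM_apply]; rfl

/-- The matrix version of `τ`. -/
def tauN (n N : ℕ) : MultilinearMap Kc (fun _ : Fin (2*n+1) => glA n N) Kc :=
  ∑ idx : Fin (2*n+1) → Fin N, (tauM n).compLinearMap
    (fun m => Matrix.entryLinearMap Kc (Apol n) (idx m) (idx (m+1)))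

lemma tauN_apply (n N : ℕ) (x : Fin (2*n+1) → glA n N) :
    tauN n N x = ∑ idx : Fin (2*n+1) → Fin N, tauM n (fun m => x m (idx m) (idx (m+1))) := by
  rw [tauN, MultilinearMap.sum_apply]
  rfl

lemma tauN_face (n N : ℕ) (j : Fin (2*n+2)) (x : Fin (2*n+2) → glA n N) :
    tauN n N (face (matMul n N) (2*n) j x) =
      ∑ r : Fin (2*n+2) → Fin N, tauM n (face (moyal n) (2*n) j (fun m => x m (r m) (r (m+1)))) := by
  rw [← Equiv.sum_comp (idxEquiv (2*n) N j), Fintype.sum_prod_type, tauN_apply]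
  refine Finset.sum_congr rfl fun idx _ => ?_
  set s := sdeg (2*n) j j
  set rest : Fin (2*n+1) → Apol n := fun m => x (j.succAbove m) (idx m) (idx (m+1)) with hrest
  have e1 : (fun m => face (matMul n N) (2*n) j x m (idx m) (idx (m+1))) =
      Function.update rest s (∑ l, moyal n (x j (idx s) l) (x (j+1) l (idx (s+1)))) := by
    funext m
    by_cases h : m = s
    · subst h
      simp [face, matMul, s]
    · rw [Function.update_of_ne h, face, if_neg h]
  rw [e1, MultilinearMap.map_update_sum]
  refine Finset.sum_congr rfl fun l _ => ?_
  congr 1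
  funext m
  have hj1 : sdeg (2*n) j (j+1) = s := by rw [← succAbove_sdeg, sdeg_succAbove]
  by_cases h : m = s
  · subst h
    rw [Function.update_self, face, if_pos rfl]
    simp only [idxEquiv, Equiv.coe_fn_mk, Function.update_self]
    rw [Function.update_of_ne (ne_add_one j), Function.update_of_ne (ne_add_one (j+1)).symm,
      Function.comp, Function.comp, sdeg_add_one _ _ _ (ne_add_one j).symm, hj1]
  · rw [Function.update_of_ne h, face, if_neg h]
    simp only [idxEquiv, Equiv.coe_fn_mk]
    have hne : j.succAbove m ≠ j + 1 := by
      rw [← succAbove_sdeg]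
      exact fun e => h (Fin.succAbove_right_injective e)
    have hne2 : j.succAbove m + 1 ≠ j + 1 := by
      intro e
      exact Fin.succAbove_ne j m (add_right_cancel e)
    rw [Function.update_of_ne hne, Function.update_of_ne hne2, Function.comp, Function.comp,
      sdeg_add_one _ _ _ (Fin.succAbove_ne j m), sdeg_succAbove]

theorem tauN_cocycle (n N : ℕ) (x : Fin (2*n+2) → glA n N) :
    ∑ j : Fin (2*n+2), (-1 : Kc)^j.1 * tauN n N (face (matMul n N) (2*n) j x) = 0 := by
  simp only [tauN_face, Finset.mul_sum]
  rw [Finset.sum_comm]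
  refine Finset.sum_eq_zero fun r _ => ?_
  simp only [tauM_apply]
  exact tau_cocycle n _

/-! ### Antisymmetrization -/

/-- antisymmetrization -/
def Alt {g : Type*} (m : ℕ) (F : (Fin m → g) → Kc) (v : Fin m → g) : Kc :=
  ∑ σ : Equiv.Perm (Fin m), (Equiv.Perm.sign σ : ℤ) • F (v ∘ σ)

lemma Theta_eq_Alt (n N : ℕ) (v : Fin (2*n) → glA n N) (w : glA n N) :
    Theta n N v w = Alt (2*n) (fun u => tauN n N (Fin.cons w u)) v := by
  unfold Theta phiN Alt
  refine Finset.sum_congr rfl fun σ _ => ?_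
  congr 1
  refine Eq.trans ?_ (tauN_apply n N (Fin.cons w (v ∘ σ))).symm
  simp only [tauM_apply]
  refine Finset.sum_congr rfl fun idx _ => ?_
  congr 2
  funext m
  refine Fin.cases ?_ (fun m => ?_) m
  · simp
  · simp

/-- Permutation with `p ↦ i` and given by `π` elsewhere. -/
def permE (m : ℕ) (p i : Fin (m+1)) (π : Equiv.Perm (Fin m)) : Equiv.Perm (Fin (m+1)) :=
  i.cycleRange.symm * (Equiv.Perm.decomposeFin.symm (0, π)) * p.cycleRange

lemma permE_self (m : ℕ) (p i : Fin (m+1)) (π : Equiv.Perm (Fin m)) : permE m p i π p = i := by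
  simp [permE]

lemma permE_succAbove (m : ℕ) (p i : Fin (m+1)) (π : Equiv.Perm (Fin m)) (a : Fin m) :
    permE m p i π (p.succAbove a) = i.succAbove (π a) := by
  simp [permE]

lemma permE_sign (m : ℕ) (p i : Fin (m+1)) (π : Equiv.Perm (Fin m)) :
    (Equiv.Perm.sign (permE m p i π) : ℤ) = (-1)^(i.1 + p.1) * (Equiv.Perm.sign π : ℤ) := by
  simp [permE, Equiv.Perm.sign_mul, Fin.sign_cycleRange, pow_add]
  ring

lemma permE_bij (m : ℕ) (p : Fin (m+1)) :
    Function.Bijective (fun q : Fin (m+1) × Equiv.Perm (Fin m) => permE m p q.1 q.2) := by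
  rw [Fintype.bijective_iff_injective_and_card]
  constructor
  · rintro ⟨i, π⟩ ⟨i', π'⟩ h
    simp only at h
    have h1 : i = i' := by rw [← permE_self m p i π, h, permE_self]
    subst h1
    congr 1
    ext a
    have := congrArg (fun e : Equiv.Perm (Fin (m+1)) => e (p.succAbove a)) h
    simp only [permE_succAbove] at this
    rw [Fin.succAbove_right_injective this]
  · simp [Fintype.card_perm, Nat.factorial_succ]

lemma permE_bij' (m : ℕ) (i : Fin (m+1)) :
    Function.Bijective (fun q : Fin (m+1) × Equiv.Perm (Fin m) => permE m q.1 i q.2) := by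
  rw [Fintype.bijective_iff_injective_and_card]
  constructor
  · rintro ⟨p, π⟩ ⟨p', π'⟩ h
    simp only at h
    have h1 : p = p' := by
      apply (permE m p i π).injective
      rw [permE_self, h, permE_self]
    subst h1
    congr 1
    ext a
    have := congrArg (fun e : Equiv.Perm (Fin (m+1)) => e (p.succAbove a)) h
    simp only [permE_succAbove] at this
    rw [Fin.succAbove_right_injective this]
  · simp [Fintype.card_perm, Nat.factorial_succ]

lemma comp_permE {g : Type*} (m : ℕ) (p i : Fin (m+1)) (π : Equiv.Perm (Fin m)) (v : Fin (m+1) → g) :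
    v ∘ (permE m p i π) = p.insertNth (v i) ((v ∘ i.succAbove) ∘ π) := by
  symm
  rw [Fin.insertNth_eq_iff]
  constructor
  · simp [permE_self]
  · funext a
    simp [permE_succAbove, Fin.removeNth]

lemma Alt_permE {g : Type*} (m : ℕ) (F : (Fin (m+1) → g) → Kc) (v : Fin (m+1) → g)
    (p i : Fin (m+1)) :
    ∑ π : Equiv.Perm (Fin m), (Equiv.Perm.sign (permE m p i π) : ℤ) • F (v ∘ permE m p i π) =
      (-1)^(i.1+p.1) * Alt m (fun u => F (p.insertNth (v i) u)) (v ∘ i.succAbove) := by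
  rw [Alt, Finset.mul_sum]
  refine Finset.sum_congr rfl fun π _ => ?_
  rw [permE_sign, comp_permE, mul_smul]
  simp [zsmul_eq_mul]

lemma Alt_at_pos {g : Type*} (m : ℕ) (F : (Fin (m+1) → g) → Kc) (v : Fin (m+1) → g)
    (p : Fin (m+1)) :
    Alt (m+1) F v = ∑ i : Fin (m+1), (-1)^(i.1+p.1) *
      Alt m (fun u => F (p.insertNth (v i) u)) (v ∘ i.succAbove) := by
  rw [Alt, ← (permE_bij m p).sum_comp, Fintype.sum_prod_type]
  exact Finset.sum_congr rfl fun i _ => Alt_permE m F v p i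

lemma Alt_at_arg {g : Type*} (m : ℕ) (F : (Fin (m+1) → g) → Kc) (v : Fin (m+1) → g)
    (i : Fin (m+1)) :
    Alt (m+1) F v = ∑ p : Fin (m+1), (-1)^(i.1+p.1) *
      Alt m (fun u => F (p.insertNth (v i) u)) (v ∘ i.succAbove) := by
  rw [Alt, ← (permE_bij' m i).sum_comp, Fintype.sum_prod_type]
  exact Finset.sum_congr rfl fun p _ => Alt_permE m F v p i

lemma Alt_comp {g : Type*} (m : ℕ) (F : (Fin m → g) → Kc) (v : Fin m → g) (τ : Equiv.Perm (Fin m)) :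
    Alt m F (v ∘ τ) = (Equiv.Perm.sign τ : ℤ) • Alt m F v := by
  rw [Alt, Alt, Finset.smul_sum, ← Equiv.sum_comp (Equiv.mulLeft τ) (fun σ => (Equiv.Perm.sign τ : ℤ) •
    (Equiv.Perm.sign σ : ℤ) • F (v ∘ σ))]
  refine Finset.sum_congr rfl fun σ _ => ?_
  rw [smul_smul]
  congr 1
  simp only [Equiv.coe_mulLeft, Equiv.Perm.sign_mul, Units.val_mul]
  rw [← mul_assoc, ← Units.val_mul, Int.units_mul_self]; simp

lemma Alt_alt {g : Type*} (m : ℕ) (F : (Fin m → g) → Kc) (v : Fin m → g) (i j : Fin m) (hij : i ≠ j)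
    (h : v i = v j) : Alt m F v = 0 := by
  have h1 := Alt_comp m F v (Equiv.swap i j)
  have h2 : v ∘ (Equiv.swap i j) = v := by
    funext a
    simp only [Function.comp, Equiv.swap_apply_def]
    split_ifs with h1 h2
    · rw [h1, h]
    · rw [h2, h]
    · rfl
  rw [h2, Equiv.Perm.sign_swap hij] at h1
  simp only [Units.val_neg, Units.val_one, neg_smul, one_smul] at h1
  have h3 : (2 : Kc) * Alt m F v = 0 := by
    rw [two_mul]; nth_rewrite 1 [h1]; simp
  have hu : IsUnit (2 : Kc) := by
    have : (2 : Kc) = algebraMap ℂ Kc 2 := (map_ofNat _ 2).symm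
    rw [this]
    exact (isUnit_iff_ne_zero.2 two_ne_zero).map _
  exact (hu.mul_right_eq_zero).1 h3

lemma Alt_sum {g : Type*} {ι : Type*} (s : Finset ι) (m : ℕ) (c : ι → Kc) (F : ι → (Fin m → g) → Kc)
    (v : Fin m → g) :
    Alt m (fun u => ∑ i ∈ s, c i * F i u) v = ∑ i ∈ s, c i * Alt m (F i) v := by
  simp only [Alt, Finset.mul_sum, Finset.smul_sum]
  rw [Finset.sum_comm]
  simp only [mul_smul_comm]

/-! ### From Hochschild to Chevalley–Eilenberg -/

section CE
variable {g : Type*} (μ : g → g → g)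

/-- multiply adjacent arguments -/
def merge (k : ℕ) (p : Fin k) (u : Fin (k+1) → g) : Fin k → g :=
  fun c => if c = p then μ (u p.castSucc) (u p.succ) else u (p.castSucc.succAbove c)

lemma sdeg_zero (k : ℕ) : sdeg k 0 0 = 0 := by simp [sdeg]
lemma sdeg_last (k : ℕ) : sdeg k (Fin.last k).succ (Fin.last k).succ = 0 := by
  simp [sdeg, Fin.ext_iff]

lemma face_zero (k : ℕ) (w : g) (u : Fin (k+1) → g) :
    face μ k 0 (Fin.cons w u) = Fin.cons (μ w (u 0)) (u ∘ Fin.succ) := by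
  funext c
  refine Fin.cases ?_ (fun c => ?_) c
  · simp only [face, sdeg_zero, if_true, Fin.cons_zero]
    rfl
  · rw [face, sdeg_zero, if_neg (Fin.succ_ne_zero c), Fin.succAbove_zero, Fin.cons_succ, Fin.cons_succ]
    rfl

lemma face_last (k : ℕ) (w : g) (u : Fin (k+1) → g) :
    face μ k (Fin.last k).succ (Fin.cons w u) = Fin.cons (μ (u (Fin.last k)) w) (u ∘ Fin.castSucc) := by
  funext c
  refine Fin.cases ?_ (fun c => ?_) c
  · simp only [face, sdeg_last, if_true, Fin.cons_zero, Fin.cons_succ]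
    congr 1
    have : (Fin.last k).succ + 1 = 0 := by simp
    rw [this]; rfl
  · rw [face, sdeg_last, if_neg (Fin.succ_ne_zero c), Fin.succ_last, Fin.succAbove_last,
      Fin.cons_succ, ← Fin.succ_castSucc, Fin.cons_succ]
    rfl

lemma face_mid (k : ℕ) (p : Fin k) (w : g) (u : Fin (k+1) → g) :
    face μ k p.castSucc.succ (Fin.cons w u) = Fin.cons w (merge μ k p u) := by
  have hs : sdeg k p.castSucc.succ p.castSucc.succ = p.succ := by
    have := p.2
    simp only [sdeg, Fin.ext_iff, le_refl, if_true, Fin.val_succ, Fin.val_castSucc]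
    rw [Nat.mod_eq_of_lt (by omega)]
  funext c
  refine Fin.cases ?_ (fun c => ?_) c
  · rw [face, hs, if_neg (Fin.succ_ne_zero p).symm, Fin.succ_succAbove_zero]
    rfl
  · rw [face, hs, Fin.succ_succAbove_succ, Fin.cons_succ, Fin.cons_succ, Fin.cons_succ, merge]
    simp only [Fin.succ_inj]
    have : p.castSucc.succ + 1 = p.succ.succ := by
      ext
      rw [Fin.val_add_one]
      have := p.2
      simp [Fin.ext_iff]; omega
    rw [this, Fin.cons_succ]

lemma merge_insert (k : ℕ) (p : Fin (k+1)) (a b : g) (u : Fin k → g) :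
    merge μ (k+1) p (p.castSucc.insertNth a (p.insertNth b u)) = p.insertNth (μ a b) u := by
  funext c
  by_cases h : c = p
  · subst h
    rw [merge, if_pos rfl, Fin.insertNth_apply_same, Fin.insertNth_apply_same]
    congr 1
    have : c.succ = c.castSucc.succAbove c := by simp
    rw [this, Fin.insertNth_apply_succAbove, Fin.insertNth_apply_same]
  · obtain ⟨d, rfl⟩ := Fin.exists_succAbove_eq h
    rw [merge, if_neg h, Fin.insertNth_apply_succAbove, Fin.insertNth_apply_succAbove,
      Fin.insertNth_apply_succAbove]

lemma cons_pair (k : ℕ) (v : Fin (k+2) → g) (z : g) (i : Fin (k+2)) (l : Fin (k+1)) :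
    (Fin.cons z ((v ∘ i.succAbove) ∘ l.succAbove) : Fin (k+1) → g) =
      if i < i.succAbove l then pairTuple (k+1) v z i (i.succAbove l)
      else pairTuple (k+1) v z (i.succAbove l) i := by
  have hi := i.2
  have hl := l.2
  have hv := succAbove_val i l
  split_ifs with h
  · rw [Fin.lt_def, hv] at h
    funext c
    refine Fin.cases ?_ (fun c => ?_) c
    · simp [pairTuple]
    · have hc := c.2
      rw [Fin.cons_succ, pairTuple]
      rw [dif_neg (by simp)]
      simp only [Fin.val_succ, hv, Function.comp]
      split_ifs at h <;> split_ifs <;>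
        first
        | omega
        | (congr 1; ext; simp only [succAbove_val]; split_ifs <;> omega)
  · rw [Fin.lt_def, hv] at h
    funext c
    refine Fin.cases ?_ (fun c => ?_) c
    · simp [pairTuple]
    · have hc := c.2
      rw [Fin.cons_succ, pairTuple]
      rw [dif_neg (by simp)]
      simp only [Fin.val_succ, hv, Function.comp]
      split_ifs at h <;> split_ifs <;>
        first
        | omega
        | (congr 1; ext; simp only [succAbove_val]; split_ifs <;> omega)

lemma mid_sum (k : ℕ) (f : (Fin (k+1) → g) → Kc) (v : Fin (k+2) → g) :
    ∑ p : Fin (k+1), (-1 : Kc)^(p.1+1) * Alt (k+2) (fun u => f (merge μ (k+1) p u)) v =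
      ∑ i : Fin (k+2), ∑ l : Fin (k+2), if i < l then (-1 : Kc)^(i.1+l.1) *
        (Alt (k+1) f (pairTuple (k+1) v (μ (v i) (v l)) i l) -
         Alt (k+1) f (pairTuple (k+1) v (μ (v l) (v i)) i l)) else 0 := by
  have h1 : ∀ p : Fin (k+1), Alt (k+2) (fun u => f (merge μ (k+1) p u)) v =
      ∑ i : Fin (k+2), ∑ l : Fin (k+1), (-1)^(i.1+l.1) *
        Alt k (fun u => f (p.insertNth (μ (v i) (v (i.succAbove l))) u)) ((v ∘ i.succAbove) ∘ l.succAbove) := by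
    intro p
    rw [Alt_at_pos _ _ _ p.castSucc]
    refine Finset.sum_congr rfl fun i _ => ?_
    rw [Alt_at_pos _ _ _ p, Finset.mul_sum]
    refine Finset.sum_congr rfl fun l _ => ?_
    simp only [merge_insert, Function.comp_apply, Fin.val_castSucc]
    rw [← mul_assoc]
    congr 1
    rw [← pow_add, show i.1 + p.1 + (l.1 + p.1) = i.1 + l.1 + 2 * p.1 by ring, pow_add, pow_mul]
    simp
  simp only [h1, Finset.mul_sum]
  rw [Finset.sum_comm]
  have h2 : ∀ i : Fin (k+2), ∑ p : Fin (k+1), ∑ l : Fin (k+1), (-1 : Kc)^(p.1+1) * ((-1)^(i.1+l.1) *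
        Alt k (fun u => f (p.insertNth (μ (v i) (v (i.succAbove l))) u)) ((v ∘ i.succAbove) ∘ l.succAbove))
      = ∑ l : Fin (k+1), - ((-1)^(i.1+l.1) * Alt (k+1) f (Fin.cons (μ (v i) (v (i.succAbove l)))
          ((v ∘ i.succAbove) ∘ l.succAbove))) := by
    intro i
    rw [Finset.sum_comm]
    refine Finset.sum_congr rfl fun l _ => ?_
    rw [Alt_at_arg _ _ _ 0, Finset.mul_sum, ← Finset.sum_neg_distrib]
    refine Finset.sum_congr rfl fun p _ => ?_
    have : (Fin.cons (μ (v i) (v (i.succAbove l))) ((v ∘ i.succAbove) ∘ l.succAbove) : Fin (k+1) → g) ∘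
      (0 : Fin (k+1)).succAbove = ((v ∘ i.succAbove) ∘ l.succAbove) := by
      funext c; simp
    rw [this]
    simp only [Fin.cons_zero, Fin.val_zero]
    ring
  simp only [h2]
  have h3 : ∀ i : Fin (k+2), ∑ l : Fin (k+1), - ((-1)^(i.1+l.1) *
      Alt (k+1) f (Fin.cons (μ (v i) (v (i.succAbove l))) ((v ∘ i.succAbove) ∘ l.succAbove))) =
      ∑ l : Fin (k+2), ((if i < l then (-1 : Kc)^(i.1+l.1) *
        Alt (k+1) f (pairTuple (k+1) v (μ (v i) (v l)) i l) else 0) -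
        (if l < i then (-1 : Kc)^(i.1+l.1) *
         Alt (k+1) f (pairTuple (k+1) v (μ (v i) (v l)) l i) else 0)) := by
    intro i
    rw [Fin.sum_univ_succAbove _ i]
    simp only [lt_irrefl, if_false, sub_zero, zero_add]
    refine Finset.sum_congr rfl fun l _ => ?_
    rw [cons_pair]
    have hv := succAbove_val i l
    by_cases h : i < i.succAbove l
    · rw [if_pos h, if_pos h, if_neg (not_lt.2 h.le), sub_zero]
      rw [Fin.lt_def, hv] at h
      rw [hv]
      split_ifs at h ⊢ with h'
      · omega
      · rw [← add_assoc, pow_succ]; ring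
    · have h'' : i.succAbove l < i := lt_of_le_of_ne (not_lt.1 h) (Fin.succAbove_ne i l)
      rw [if_neg h, if_neg h, if_pos h'', zero_sub]
      rw [Fin.lt_def, hv] at h
      rw [hv]
      split_ifs at h ⊢ with h'
      · rfl
      · omega
  simp only [h3, Finset.sum_sub_distrib]
  rw [Finset.sum_comm (f := fun i l => if l < i then _ else _)]
  rw [← Finset.sum_sub_distrib]
  refine Finset.sum_congr rfl fun i _ => ?_
  rw [← Finset.sum_sub_distrib]
  refine Finset.sum_congr rfl fun l _ => ?_
  split_ifs
  · rw [add_comm l.1]; ring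
  · simp

theorem CE_raw (k : ℕ) (T : (Fin (k+1) → g) → Kc)
    (hT : ∀ x : Fin (k+2) → g, ∑ j : Fin (k+2), (-1 : Kc)^j.1 * T (face μ k j x) = 0)
    (v : Fin (k+1) → g) (w : g) :
    (∑ i : Fin (k+1), (-1 : Kc)^(i.1+1) *
      (Alt k (fun u => T (Fin.cons (μ (v i) w) u)) (v ∘ i.succAbove) -
       Alt k (fun u => T (Fin.cons (μ w (v i)) u)) (v ∘ i.succAbove))) +
    ∑ i : Fin (k+1), ∑ l : Fin (k+1), (if i < l then (-1 : Kc)^(i.1+l.1) *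
        (Alt k (fun u => T (Fin.cons w u)) (pairTuple k v (μ (v i) (v l)) i l) -
         Alt k (fun u => T (Fin.cons w u)) (pairTuple k v (μ (v l) (v i)) i l)) else 0) = 0 := by
  have h0 : Alt (k+1) (fun u => ∑ j : Fin (k+2), (-1 : Kc)^j.1 * T (face μ k j (Fin.cons w u))) v = 0 := by
    simp [Alt, hT]
  rw [Alt_sum Finset.univ (k+1) (fun j : Fin (k+2) => (-1 : Kc)^j.1), Fin.sum_univ_succ,
    Fin.sum_univ_castSucc] at h0
  simp only [face_zero, face_last, face_mid] at h0
  rw [Alt_at_pos k (fun u => T (Fin.cons (μ w (u 0)) (u ∘ Fin.succ))) v 0,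
    Alt_at_pos k (fun u => T (Fin.cons (μ (u (Fin.last k)) w) (u ∘ Fin.castSucc))) v (Fin.last k)] at h0
  have e1 : ∀ (a : g) (u : Fin k → g), (Fin.insertNth (α := fun _ => g) (0 : Fin (k+1)) a u) ∘ Fin.succ = u := by
    intro a u
    funext c
    simp
  have e2 : ∀ (a : g) (u : Fin k → g), (Fin.insertNth (α := fun _ => g) (Fin.last k) a u) ∘ Fin.castSucc = u := by
    intro a u
    funext c
    simp
  have e3 : ∀ (a : g) (u : Fin k → g), (Fin.insertNth (α := fun _ => g) (0 : Fin (k+1)) a u) 0 = a := by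
    intro a u; simp
  have e4 : ∀ (a : g) (u : Fin k → g), (Fin.insertNth (α := fun _ => g) (Fin.last k) a u) (Fin.last k) = a := by
    intro a u; simp
  simp only [e1, e2, e3, e4] at h0
  refine Eq.trans ?_ h0
  have hmid : ∑ i : Fin (k+1), ∑ l : Fin (k+1), (if i < l then (-1 : Kc)^(i.1+l.1) *
        (Alt k (fun u => T (Fin.cons w u)) (pairTuple k v (μ (v i) (v l)) i l) -
         Alt k (fun u => T (Fin.cons w u)) (pairTuple k v (μ (v l) (v i)) i l)) else 0) =
      ∑ p : Fin k, (-1 : Kc)^(p.castSucc.succ.1) *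
        Alt (k+1) (fun u => T (Fin.cons w (merge μ k p u))) v := by
    cases k with
    | zero =>
      simp only [Finset.univ_eq_empty, Finset.sum_empty]
      refine Finset.sum_eq_zero fun i _ => Finset.sum_eq_zero fun l _ => ?_
      have hi := i.2
      have hl := l.2
      rw [if_neg (by rw [Fin.lt_def]; omega)]
    | succ k =>
      rw [← mid_sum μ k (fun u => T (Fin.cons w u)) v]
      rfl
  rw [hmid, Finset.mul_sum, Finset.mul_sum]
  simp only [mul_sub, Finset.sum_sub_distrib, Fin.val_zero, Fin.val_last, Fin.val_succ, pow_succ,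
    pow_zero, one_mul, add_zero, pow_add]
  have e6 : (-1 : Kc)^k * (-1)^k = 1 := by rw [← pow_add, ← two_mul, pow_mul]; simp
  have e7 : ∀ a b : Kc, (-1 : Kc)^k * -1 * (a * (-1)^k * b) = a * -1 * b := by
    intro a b; linear_combination (a * b * (-1)) * e6
  simp only [e7]
  have e8 : ∀ (a b : Kc), a * -1 * b = - (a * b) := by intros; ring
  simp only [e8, Finset.sum_neg_distrib]
  ring
end CE

lemma eps_mul_T : eps * (LaurentPolynomial.T (-1) : Kc) = 1 := by
  rw [eps, ← LaurentPolynomial.T_add]; simp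

lemma Alt_congr {g : Type*} (m : ℕ) {F G : (Fin m → g) → Kc} (h : ∀ u, F u = G u) (v) :
    Alt m F v = Alt m G v := by rw [funext h]

/-- linearity of `Θ` in the module argument -/
lemma Theta_lin (n N : ℕ) (v : Fin (2*n) → glA n N) (s : Kc) (x y : glA n N) :
    Theta n N v (s • x + y) = s * Theta n N v x + Theta n N v y := by
  simp only [Theta_eq_Alt, Alt]
  rw [Finset.mul_sum, ← Finset.sum_add_distrib]
  refine Finset.sum_congr rfl fun σ _ => ?_
  rw [(tauN n N).cons_add, (tauN n N).cons_smul, smul_add, smul_eq_mul, mul_smul_comm]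

lemma Theta_update (n N : ℕ) (v : Fin (2*n) → glA n N) (i : Fin (2*n)) (s : Kc) (x y w : glA n N) :
    Theta n N (Function.update v i (s • x + y)) w =
      s * Theta n N (Function.update v i x) w + Theta n N (Function.update v i y) w := by
  simp only [Theta_eq_Alt, Alt]
  rw [Finset.mul_sum, ← Finset.sum_add_distrib]
  refine Finset.sum_congr rfl fun σ _ => ?_
  have h : ∀ z : glA n N, (Fin.cons w ((Function.update v i z) ∘ σ) : Fin (2*n+1) → glA n N) =
      Function.update (Fin.cons w (v ∘ σ)) (σ.symm i).succ z := by
    intro z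
    rw [← Fin.cons_update]
    congr 1
    exact Function.update_comp_equiv v σ i z
  simp only [h]
  rw [(tauN n N).map_update_add, (tauN n N).map_update_smul, smul_add, smul_eq_mul, mul_smul_comm]

lemma pairTuple_update {g : Type*} [DecidableEq (Fin 0)] (k : ℕ) (v : Fin (k+2) → g) (b z : g) (i l) :
    pairTuple (k+1) v b i l = Function.update (pairTuple (k+1) v z i l) 0 b := by
  funext c
  refine Fin.cases ?_ (fun c => ?_) c
  · simp [pairTuple]
  · rw [Function.update_of_ne (Fin.succ_ne_zero c)]
    simp [pairTuple]

lemma neg1_smul {n N : ℕ} (x : glA n N) : (-1 : Kc) • x = -x := by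
  exact neg_one_smul Kc x

lemma dCoadj_eps (n N k : ℕ) (c : (Fin k → glA n N) → glA n N → Kc)
    (h1 : ∀ v s x y, c v (s • x + y) = s * c v x + c v y)
    (h2 : ∀ v i s x y w, c (Function.update v i (s • x + y)) w =
      s * c (Function.update v i x) w + c (Function.update v i y) w)
    (v : Fin (k+1) → glA n N) (w : glA n N) :
    eps * dCoadj n N k c v w =
    (∑ i : Fin (k+1), (-1 : Kc)^(i.1+1) *
      (c (v ∘ i.succAbove) (matMul n N (v i) w) - c (v ∘ i.succAbove) (matMul n N w (v i)))) +
    ∑ i : Fin (k+1), ∑ l : Fin (k+1), (if i < l then (-1 : Kc)^(i.1+l.1) *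
        (c (pairTuple k v (matMul n N (v i) (v l)) i l) w -
         c (pairTuple k v (matMul n N (v l) (v i)) i l) w) else 0) := by
  have z1 : ∀ v, c v 0 = 0 := by
    intro v
    have := h1 v 1 0 0
    simpa using this
  have b1 : ∀ v Z W, eps * c v (glBr n N Z W) = c v (matMul n N Z W) - c v (matMul n N W Z) := by
    intro v Z W
    have e1 := h1 v (LaurentPolynomial.T (-1)) (matMul n N Z W - matMul n N W Z) 0
    have e2 := h1 v (-1) (matMul n N W Z) (matMul n N Z W)
    rw [add_zero, z1, add_zero] at e1
    rw [show (-1 : Kc) • matMul n N W Z + matMul n N Z W = matMul n N Z W - matMul n N W Z by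
      rw [neg1_smul]; abel] at e2
    rw [glBr, e1, e2, ← mul_assoc, eps_mul_T]; ring
  have z2 : ∀ v i w, c (Function.update v i 0) w = 0 := by
    intro v i w
    have := h2 v i 1 0 0 w
    simpa using this
  have b2 : ∀ v i Z W w, eps * c (Function.update v i (glBr n N Z W)) w =
      c (Function.update v i (matMul n N Z W)) w - c (Function.update v i (matMul n N W Z)) w := by
    intro v i Z W w
    have e1 := h2 v i (LaurentPolynomial.T (-1)) (matMul n N Z W - matMul n N W Z) 0 w
    have e2 := h2 v i (-1) (matMul n N W Z) (matMul n N Z W) w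
    rw [add_zero, z2, add_zero] at e1
    rw [show (-1 : Kc) • matMul n N W Z + matMul n N Z W = matMul n N Z W - matMul n N W Z by
      rw [neg1_smul]; abel] at e2
    rw [glBr, e1, e2, ← mul_assoc, eps_mul_T]; ring
  rw [dCoadj, mul_add, Finset.mul_sum, Finset.mul_sum]
  congr 1
  · refine Finset.sum_congr rfl fun i _ => ?_
    rw [← b1, smul_eq_mul]; ring
  · refine Finset.sum_congr rfl fun i _ => ?_
    rw [Finset.mul_sum]
    refine Finset.sum_congr rfl fun l _ => ?_
    split_ifs with hil
    · cases k with
      | zero => have hi := i.2; have hl := l.2; rw [Fin.lt_def] at hil; omega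
      | succ k =>
        rw [pairTuple_update k v (glBr n N (v i) (v l)) 0, pairTuple_update k v (matMul n N (v i) (v l)) 0,
          pairTuple_update k v (matMul n N (v l) (v i)) 0, ← b2, smul_eq_mul]
        ring
    · simp

theorem Theta_closed (n N : ℕ) (v : Fin (2*n+1) → glA n N) (w : glA n N) :
    dCoadj n N (2*n) (Theta n N) v w = 0 := by
  have h := dCoadj_eps n N (2*n) (Theta n N) (Theta_lin n N) (Theta_update n N) v w
  simp only [Theta_eq_Alt] at h
  rw [CE_raw (matMul n N) (2*n) (fun x => tauN n N x) (tauN_cocycle n N) v w] at h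
  have := congrArg (fun x => LaurentPolynomial.T (-1) * x) h
  simp only [← mul_assoc, mul_zero] at this
  rw [mul_comm _ eps, eps_mul_T, one_mul] at this
  exact this

/-! ### Vanishing on `gl_N ⊕ sp_{2n}` -/

section coreA
variable {L : Type*} [CommRing L] [Algebra ℝ L] {n k : ℕ}

lemma faceF_X_up (p : Fin (k+1)) (G : MvPolynomial (Fin k) L) :
    faceA L k (p.1+1) (rename p.succAbove G) = G := by
  rw [faceA, faceF_up, aeval_rename]
  have : (p.insertNth (Tx X (p.1+1)) (X : Fin k → MvPolynomial (Fin k) L) : Fin (k+1) → _) ∘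
      p.succAbove = X := by funext c; simp
  rw [this]; simp

lemma faceF_X_down (p : Fin (k+1)) (G : MvPolynomial (Fin k) L) :
    faceA L k p.1 (rename p.succAbove G) = G := by
  rw [faceA, faceF_down, aeval_rename]
  have : (p.insertNth (Tx X p.1) (X : Fin k → MvPolynomial (Fin k) L) : Fin (k+1) → _) ∘
      p.succAbove = X := by funext c; simp
  rw [this]; simp

lemma pderiv_rename_succAbove (p : Fin (k+1)) (G : MvPolynomial (Fin k) L) :
    pderiv p (rename p.succAbove G) = 0 := by
  induction G using MvPolynomial.induction_on with
  | C a => simp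
  | add a b ha hb => rw [map_add, map_add, ha, hb, add_zero]
  | mul_X a i ha =>
    rw [map_mul, Derivation.leibniz, ha, rename_X, pderiv_X_of_ne (Fin.succAbove_ne p i)]; simp

lemma Tx_rename (p : Fin (k+1)) (c : Fin (k+1)) :
    Tx (X : Fin (k+1) → MvPolynomial (Fin (k+1)) L) (p.succ.succAbove c).1 =
      rename p.succAbove (Tx (X : Fin k → MvPolynomial (Fin k) L) c.1) := by
  refine Fin.cases ?_ (fun c => ?_) c
  · simp [Tx]
  · rw [Fin.succ_succAbove_succ, Fin.val_succ, Fin.val_succ, Tx_succ, Tx_succ, rename_X]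

lemma sg_succAbove (q : Fin (k+2)) (c d : Fin (k+1)) :
    sg (q.succAbove c).1 (q.succAbove d).1 = sg c.1 d.1 := by
  simp only [sg, succAbove_val]
  split_ifs <;> omega

lemma coreA (c : Fin (k+1)) (G : MvPolynomial (Fin k) L) :
    ∑ p : Fin (k+1), IntL L (k+1) (cf L (k+1) p.succ.1 (p.succ.succAbove c).1 *
      rename p.succAbove G) = 0 := by
  have key : ∀ p : Fin (k+1), IntL L (k+1) (cf L (k+1) p.succ.1 (p.succ.succAbove c).1 *
      rename p.succAbove G) =
      IntL L k ((Tx X (p.1+1) ^ 2 - Tx X p.1 ^ 2 - 2 * Tx X c.1 * (Tx X (p.1+1) - Tx X p.1)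
        + (if p.1 < c.1 then 1 else -1) * (Tx X (p.1+1) - Tx X p.1)) * G) := by
    intro p
    have hsg : (sg p.succ.1 (p.succ.succAbove c).1 : ℤ) = if p.1 < c.1 then 1 else -1 := by
      simp only [sg, succAbove_val, Fin.val_succ]
      split_ifs <;> omega
    set e : L := if p.1 < c.1 then 1 else -1 with he
    have hd : cf L (k+1) p.succ.1 (p.succ.succAbove c).1 * rename p.succAbove G =
        pderiv p ((X p ^ 2 - 2 * rename p.succAbove (Tx X c.1) * X p + C e * X p) *
          rename p.succAbove G) := by
      rw [cf, Tx_rename, hsg, Fin.val_succ, Tx_succ]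
      simp only [Derivation.leibniz, map_add, map_sub, pderiv_rename_succAbove, pderiv_X_self,
        Derivation.leibniz_pow, pderiv_C, smul_eq_mul, smul_zero]
      have h2 : pderiv p (2 : MvPolynomial (Fin (k+1)) L) = 0 := by
        rw [two_eq_C, pderiv_C]
      rw [h2]
      have h3 : (((if p.1 < c.1 then 1 else -1 : ℤ)) : MvPolynomial (Fin (k+1)) L) = C e := by
        rw [he]; split_ifs <;> simp
      rw [h3]
      simp
      ring
    rw [hd, stokes, ← map_sub]
    congr 1
    simp only [map_mul, map_add, map_sub, map_pow, faceF_X_up, faceF_X_down]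
    have x1 : faceA L k (p.1+1) (X p) = Tx X (p.1+1) := by
      rw [faceA, faceF_up]; simp
    have x2 : faceA L k p.1 (X p) = Tx X p.1 := by
      rw [faceA, faceF_down]; simp
    have x3 : ∀ j, faceA L k j (C e) = if p.1 < c.1 then 1 else -1 := by
      intro j
      rw [faceA, algHom_C, he]
      split_ifs <;> simp
    rw [x1, x2, x3, x3, map_ofNat, map_ofNat]
    ring
  simp only [key]
  rw [← map_sum, ← Finset.sum_mul]
  have hz : ∑ p : Fin (k+1), ((Tx X (p.1+1) ^ 2 - Tx X p.1 ^ 2 - 2 * Tx X c.1 * (Tx X (p.1+1) - Tx X p.1)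
        + (if p.1 < c.1 then 1 else -1) * (Tx X (p.1+1) - Tx X p.1)) : MvPolynomial (Fin k) L) = 0 := by
    have t0 : Tx (X : Fin k → MvPolynomial (Fin k) L) 0 = 0 := by simp [Tx]
    have t1 : Tx (X : Fin k → MvPolynomial (Fin k) L) (k+1) = 1 := by simp [Tx]
    generalize hT : Tx (X : Fin k → MvPolynomial (Fin k) L) = T at t0 t1 ⊢
    rw [Fin.sum_univ_eq_sum_range (fun p : ℕ => T (p+1) ^ 2 - T p ^ 2 - 2 * T c.1 * (T (p+1) - T p)
        + (if p < c.1 then 1 else -1) * (T (p+1) - T p)) (k+1)]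
    have gen : ∀ K : ℕ, ∑ p ∈ Finset.range K, (T (p+1) ^ 2 - T p ^ 2 - 2 * T c.1 * (T (p+1) - T p)
        + (if p < c.1 then 1 else -1) * (T (p+1) - T p)) =
        T K ^ 2 - 2 * T c.1 * T K + (if K ≤ c.1 then T K else 2 * T c.1 - T K) := by
      intro K
      induction K with
      | zero => simp [t0]
      | succ K ih =>
        rw [Finset.sum_range_succ, ih]
        rcases lt_trichotomy K c.1 with h | h | h
        · rw [if_pos h.le, if_pos h, if_pos (by omega)]; ring
        · rw [if_pos h.le, if_neg (by omega), if_neg (by omega), ← h]; ring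
        · rw [if_neg (by omega), if_neg (by omega), if_neg (by omega)]; ring
    rw [gen, t1, if_neg (by have := c.2; omega)]
    ring
  rw [hz]; simp

/-- the symbol with a vanishing slot -/
lemma Ws_insert_zero (p : Fin (k+1)) (y : Fin (k+1) → Fin (2*n) → L) (e : Fin (2*n) → L) :
    Ws (p.succ.insertNth e y : Fin (k+2) → Fin (2*n) → L) =
      rename p.succAbove (Ws y) +
      ∑ c : Fin (k+1), cf L (k+1) p.succ.1 (p.succ.succAbove c).1 * C (om e (y c)) := by
  have hsw : ∀ c : Fin (k+1), cf L (k+1) (p.succ.succAbove c).1 p.succ.1 * C (om (y c) e) =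
      cf L (k+1) p.succ.1 (p.succ.succAbove c).1 * C (om e (y c)) := by
    intro c
    rw [cf_swap, om_swap, C_neg]; ring
  rw [Ws, Fin.sum_univ_succAbove _ p.succ]
  simp only [Fin.sum_univ_succAbove _ p.succ, Fin.insertNth_apply_same,
    Fin.insertNth_apply_succAbove, om_self, C_0, mul_zero, zero_add, Finset.sum_add_distrib, hsw]
  have hr : rename p.succAbove (Ws y) = C (hf L) * ∑ c : Fin (k+1), ∑ d : Fin (k+1),
      cf L (k+1) (p.succ.succAbove c).1 (p.succ.succAbove d).1 * C (om (y c) (y d)) := by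
    rw [Ws, map_mul, rename_C, map_sum]
    congr 1
    refine Finset.sum_congr rfl fun c _ => ?_
    rw [map_sum]
    refine Finset.sum_congr rfl fun d _ => ?_
    have h2 : rename p.succAbove (2 : MvPolynomial (Fin k) L) = 2 := by
      rw [two_eq_C, rename_C, ← two_eq_C]
    rw [map_mul, rename_C, cf, cf, Tx_rename, Tx_rename, sg_succAbove]
    simp [h2]
  rw [hr]
  linear_combination (∑ c : Fin (k+1), cf L (k+1) p.succ.1 (p.succ.succAbove c).1 * C (om e (y c))) *
    C_hf_two (L := L) (σ := Fin (k+1))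
end coreA

section dual
variable {L : Type*} [CommRing L] [Algebra ℝ L] {n k : ℕ}

/-- inclusion into dual numbers -/
abbrev dinl (L : Type*) [CommRing L] [Algebra ℝ L] : L →ₐ[ℝ] DualNumber L :=
  TrivSqZeroExt.inlAlgHom ℝ L L

lemma map_cf {L' : Type*} [CommRing L'] (f : L →+* L') (a b : ℕ) :
    map f (cf L k a b) = cf L' k a b := by
  have hT : ∀ a, map f (Tx X a) = Tx (X : Fin k → MvPolynomial (Fin k) L') a := by
    intro a
    unfold Tx
    split_ifs <;> simp
  simp only [cf, map_add, map_sub, map_mul, hT, map_ofNat, map_intCast]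

lemma add_pow_sq_zero {R : Type*} [CommRing R] (A E : R) (h : E * E = 0) (m : ℕ) :
    (A + E)^m = A^m + m * A^(m-1) * E := by
  induction m with
  | zero => simp
  | succ m ih =>
    rw [pow_succ, ih]
    cases m with
    | zero => simp
    | succ m =>
      simp only [Nat.add_sub_cancel, Nat.cast_add, Nat.cast_one]
      linear_combination ((m+1) * A^m) * h

lemma om_dual {L' : Type*} [CommRing L'] [Algebra ℝ L'] (f : L →ₐ[ℝ] L') (t : L') (e y : Fin (2*n) → L) :
    om (fun v => t * f (e v)) (fun v => f (y v)) = t * f (om e y) := by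
  rw [map_om, om, om, Finset.mul_sum, Finset.mul_sum, Finset.mul_sum]
  refine Finset.sum_congr rfl fun r _ => ?_
  ring

lemma dual_gen {L' : Type*} [CommRing L'] [Algebra ℝ L'] (f : L →ₐ[ℝ] L') (t : L') (ht : t * t = 0)
    (m : ℕ) (y : Fin (k+1) → Fin (2*n) → L) (e : Fin (2*n) → L) (p : Fin (k+1)) :
    IntL L' (k+1) (Ws (p.succ.insertNth (fun v => t * f (e v)) (fun c v => f (y c v)) :
      Fin (k+2) → Fin (2*n) → L') ^ m) =
      f (IntL L (k+1) (rename p.succAbove (Ws y) ^ m)) + t * f (IntL L (k+1) (∑ c : Fin (k+1),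
            cf L (k+1) p.succ.1 (p.succ.succAbove c).1 *
              rename p.succAbove ((m : MvPolynomial (Fin k) L) * Ws y ^(m-1) * C (om e (y c))))) := by
  set B : MvPolynomial (Fin (k+1)) L := ∑ c : Fin (k+1),
            cf L (k+1) p.succ.1 (p.succ.succAbove c).1 * C (om e (y c)) with hB
  have h1 : Ws (p.succ.insertNth (fun v => t * f (e v)) (fun c v => f (y c v)) :
      Fin (k+2) → Fin (2*n) → L') =
        map (f : L →+* L') (rename p.succAbove (Ws y)) + C t * map (f : L →+* L') B := by
    rw [Ws_insert_zero, hB]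
    congr 1
    · rw [← map_Ws f y, map_rename]
    · rw [map_sum, Finset.mul_sum]
      refine Finset.sum_congr rfl fun c _ => ?_
      rw [om_dual, C_mul, map_mul, map_cf, map_C, RingHom.coe_coe]
      ring
  have h2 : (C t * map (f : L →+* L') B) * (C t * map (f : L →+* L') B) = 0 := by
    have : (C t : MvPolynomial (Fin (k+1)) L') * C t = 0 := by
      rw [← C_mul, ht, C_0]
    linear_combination (map (f : L →+* L') B)^2 * this
  have h4 : (∑ c : Fin (k+1), cf L (k+1) p.succ.1 (p.succ.succAbove c).1 *
              rename p.succAbove ((m : MvPolynomial (Fin k) L) * Ws y ^(m-1) * C (om e (y c)))) =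
          (m : MvPolynomial (Fin (k+1)) L) * rename p.succAbove (Ws y) ^(m-1) * B := by
    rw [hB, Finset.mul_sum]
    refine Finset.sum_congr rfl fun c _ => ?_
    simp only [map_mul, map_pow, map_natCast, rename_C]
    ring
  have h3 : (map (f : L →+* L') (rename p.succAbove (Ws y)) + C t * map (f : L →+* L') B) ^ m =
      map (f : L →+* L') (rename p.succAbove (Ws y) ^ m) + C t *
        map (f : L →+* L') ((m : MvPolynomial (Fin (k+1)) L) * rename p.succAbove (Ws y) ^(m-1) * B) := by
    rw [add_pow_sq_zero _ _ h2, map_pow]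
    simp only [map_mul, map_pow, map_natCast]
    ring
  rw [h1, h3, h4, map_add, IntL_C_mul, IntL_map, IntL_map]

lemma dual_Jm (m : ℕ) (y : Fin (k+1) → Fin (2*n) → L) (e : Fin (2*n) → L) :
    ∑ p : Fin (k+1), TrivSqZeroExt.snd (Jm m (p.succ.insertNth (fun v => (TrivSqZeroExt.inr (e v) : DualNumber L))
      (fun c v => dinl L (y c v)) : Fin (k+2) → Fin (2*n) → DualNumber L)) = 0 := by
  have key : ∀ p : Fin (k+1), TrivSqZeroExt.snd (Jm m (p.succ.insertNth (fun v => (TrivSqZeroExt.inr (e v) : DualNumber L))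
      (fun c v => dinl L (y c v)) : Fin (k+2) → Fin (2*n) → DualNumber L)) =
      ∑ c : Fin (k+1), algebraMap ℝ L ((m.factorial : ℝ)⁻¹) * IntL L (k+1)
        (cf L (k+1) p.succ.1 (p.succ.succAbove c).1 *
          rename p.succAbove ((m : MvPolynomial (Fin k) L) * Ws y ^(m-1) * C (om e (y c)))) := by
    intro p
    have h0 : (fun v => (TrivSqZeroExt.inr (e v) : DualNumber L)) =
        fun v => DualNumber.eps * dinl L (e v) := by
      funext v
      ext <;> simp
    have h5 : algebraMap ℝ (DualNumber L) ((m.factorial : ℝ)⁻¹) =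
      dinl L (algebraMap ℝ L ((m.factorial : ℝ)⁻¹)) := ((dinl L).commutes _).symm
    rw [Jm, h0, dual_gen (dinl L) DualNumber.eps DualNumber.eps_mul_eps m y e p, h5,
      ← Finset.mul_sum, ← map_sum]
    generalize IntL L (k+1) _ = u
    generalize IntL L (k+1) _ = u'
    generalize algebraMap ℝ L _ = r
    simp
  simp only [key]
  rw [Finset.sum_comm]
  refine Finset.sum_eq_zero fun c _ => ?_
  rw [← Finset.mul_sum, coreA, mul_zero]
end dual

/-- the homomorphism to dual numbers computing a first derivative in the slot `q` along `b` -/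
def dualHom (n k : ℕ) (q : Fin (k+1)) (b : Fin (2*n)) : Tens n (k+1) →ₐ[Kc] DualNumber (Tens n k) :=
  aeval (fun x => (q.insertNth (fun v => (TrivSqZeroExt.inr (if v = b then 1 else 0) : DualNumber (Tens n k)))
      (fun c v => dinl (Tens n k) (xi n k c v)) : Fin (k+1) → Fin (2*n) → DualNumber (Tens n k)) x.1 x.2)

/-- the inclusion of the other slots -/
abbrev slotF (n k : ℕ) (q : Fin (k+1)) : Fin k × Fin (2*n) → Fin (k+1) × Fin (2*n) :=
  Prod.map q.succAbove id

lemma sPull_slot_same (n k : ℕ) (q : Fin (k+1)) (v : Fin (2*n)) :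
    sPull Kc (slotF n k q) (X (q, v)) = 0 := by
  rw [sPull, aeval_X]
  apply Finset.sum_eq_zero
  rintro ⟨c, w⟩ h
  simp [slotF, Prod.map] at h

lemma sPull_slot_sa (n k : ℕ) (q : Fin (k+1)) (c : Fin k) (v : Fin (2*n)) :
    sPull Kc (slotF n k q) (X (q.succAbove c, v)) = X (c, v) := by
  rw [sPull, aeval_X, Finset.sum_eq_single (c, v)]
  · rintro ⟨c', w⟩ h h'
    simp [slotF, Prod.map] at h
    exact absurd (Prod.ext h.1 h.2) h'
  · intro h
    simp [slotF, Prod.map] at h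

lemma dualHom_same (n k : ℕ) (q : Fin (k+1)) (b v : Fin (2*n)) :
    dualHom n k q b (X (q, v)) = TrivSqZeroExt.inr (if v = b then 1 else 0) := by
  rw [dualHom, aeval_X]; simp
lemma dualHom_sa (n k : ℕ) (q : Fin (k+1)) (b v : Fin (2*n)) (c : Fin k) :
    dualHom n k q b (X (q.succAbove c, v)) = dinl _ (X (c, v)) := by
  rw [dualHom, aeval_X]; simp [xi]

lemma dualHom_fst (n k : ℕ) (q : Fin (k+1)) (b : Fin (2*n)) (P : Tens n (k+1)) :
    (dualHom n k q b P).fst = sPull Kc (slotF n k q) P := by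
  have : (TrivSqZeroExt.fstHom Kc (Tens n k) (Tens n k)).comp (dualHom n k q b) = sPull Kc (slotF n k q) := by
    apply MvPolynomial.algHom_ext
    rintro ⟨i, v⟩
    simp only [AlgHom.comp_apply]
    by_cases h : i = q
    · subst h
      rw [dualHom_same, sPull_slot_same]; split_ifs <;> simp
    · obtain ⟨c, rfl⟩ := Fin.exists_succAbove_eq h
      rw [dualHom_sa, sPull_slot_sa]; simp
  exact congrArg (fun f => f P) this

lemma dualHom_snd (n k : ℕ) (q : Fin (k+1)) (b : Fin (2*n)) (P : Tens n (k+1)) :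
    (dualHom n k q b P).snd = sPull Kc (slotF n k q) (pderiv (q, b) P) := by
  induction P using MvPolynomial.induction_on with
  | C a =>
    rw [pderiv_C, map_zero, algHom_C]
    rfl
  | add a b ha hb => simp only [map_add, TrivSqZeroExt.snd_add, ha, hb]
  | mul_X P x ha =>
    obtain ⟨i, v⟩ := x
    rw [map_mul, TrivSqZeroExt.snd_mul, ha, dualHom_fst, Derivation.leibniz, map_add]
    simp only [smul_eq_mul, MulOpposite.smul_eq_mul_unop, MulOpposite.unop_op, map_mul]
    by_cases h : i = q
    · subst h
      rw [dualHom_same, sPull_slot_same]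
      simp only [TrivSqZeroExt.snd_inr, TrivSqZeroExt.fst_inr, zero_mul, mul_zero, add_zero]
      by_cases hv : v = b
      · subst hv; simp
      · rw [pderiv_X_of_ne (by simpa using hv)]; simp [hv]
    · obtain ⟨c, rfl⟩ := Fin.exists_succAbove_eq h
      rw [dualHom_sa, sPull_slot_sa, pderiv_X_of_ne (by simp [h])]
      simp [mul_comm]

lemma dualHom_rename (n k : ℕ) (q : Fin (k+1)) (b : Fin (2*n)) (M : Tens n k) :
    dualHom n k q b (rename (slotF n k q) M) = dinl _ M := by
  induction M using MvPolynomial.induction_on with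
  | C a => rw [rename_C, algHom_C]; rfl
  | add a b ha hb => simp only [map_add, ha, hb]
  | mul_X P x ha =>
    rw [map_mul, map_mul, ha, rename_X, slotF, Prod.map, dualHom_sa, ← map_mul]; rfl

/-- pairing against an element linear in the slot `q` -/
lemma pr_slot (n k : ℕ) (q : Fin (k+1)) (b : Fin (2*n)) (M : Tens n k) (J : Tens n (k+1)) (B : Tens n k) :
    pr (rename (slotF n k q) M * J) (X (q, b) * rename (slotF n k q) B) =
      pr (M * (dualHom n k q b J).snd) B := by
  rw [← pr_pderiv, pr_rename, ← dualHom_snd, map_mul, dualHom_rename, TrivSqZeroExt.snd_mul]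
  simp

lemma dualHom_Jm (n k m : ℕ) (q : Fin (k+2)) (b : Fin (2*n)) :
    dualHom n (k+1) q b (Jm m (xi n (k+2))) =
     Jm m (q.insertNth (fun v => (TrivSqZeroExt.inr (if v = b then 1 else 0) : DualNumber (Tens n (k+1))))
      (fun c v => dinl _ (xi n (k+1) c v)) : Fin (k+2) → Fin (2*n) → DualNumber (Tens n (k+1))) := by
  have := map_Jm ((dualHom n (k+1) q b).restrictScalars ℝ) m (xi n (k+2))
  rw [AlgHom.restrictScalars_apply] at this
  rw [this]
  congr 1
  funext a v
  rw [AlgHom.restrictScalars_apply, dualHom, xi, aeval_X]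

lemma sum_dual_Jm (n k m : ℕ) (b : Fin (2*n)) :
    ∑ p : Fin (k+1), (dualHom n (k+1) p.succ b (Jm m (xi n (k+2)))).snd = 0 := by
  simp only [dualHom_Jm]
  exact dual_Jm m (xi n (k+1)) (fun v => if v = b then 1 else 0)

lemma laplace_Dt (n : ℕ) : ∃ M : Fin (2*n) → Tens n (2*n), ∀ p : Fin (2*n),
    Dt (xi n (2*n+1)) = (-1)^p.1 * ∑ v, X (p.succ, v) * rename (slotF n (2*n) p.succ) (M v) := by
  cases n with
  | zero => exact ⟨fun v => v.elim0, fun p => p.elim0⟩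
  | succ n =>
    refine ⟨fun v => (-1)^v.1 * Matrix.det (Matrix.of fun (c d : Fin (2*n+1)) =>
      (X ((Fin.succ c : Fin (2*n+2)), (Fin.succAbove (n := 2*n+1) v d : Fin (2*n+2))) : Tens (n+1) (2*(n+1)))), fun p => ?_⟩
    have h := Matrix.det_succ_row (n := 2*n+1) (Matrix.of fun (a v : Fin (2*(n+1))) =>
      xi (n+1) (2*(n+1)+1) a.succ v) p
    refine h.trans ?_
    rw [Finset.mul_sum]
    refine Finset.sum_congr rfl fun v _ => ?_
    have hd : rename (slotF (n+1) (2*(n+1)) p.succ) (Matrix.det (Matrix.of fun (c d : Fin (2*n+1)) =>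
      (X ((Fin.succ c : Fin (2*n+2)), (Fin.succAbove (n := 2*n+1) v d : Fin (2*n+2))) : Tens (n+1) (2*(n+1))))) =
      Matrix.det (Matrix.submatrix (Matrix.of fun (a v : Fin (2*(n+1))) =>
      xi (n+1) (2*(n+1)+1) a.succ v) (Fin.succAbove (n := 2*n+1) p) (Fin.succAbove (n := 2*n+1) v)) := by
      rw [AlgHom.map_det]
      congr 1
      ext c d : 2
      simp only [AlgHom.mapMatrix_apply, Matrix.map_apply, Matrix.of_apply, Matrix.submatrix_apply,
        rename_X, slotF, Prod.map, id, xi]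
      congr 2
      refine Prod.ext ?_ rfl
      exact Fin.succ_succAbove_succ (n := 2*n+1) p c
    rw [map_mul, hd, map_pow, map_neg, map_one, pow_add]
    simp only [Matrix.of_apply, xi]
    ring

lemma pderiv_slot (n k : ℕ) (q : Fin (k+1)) (v : Fin (2*n)) (B : Tens n k) :
    pderiv (q, v) (rename (slotF n k q) B) = 0 := by
  induction B using MvPolynomial.induction_on with
  | C a => simp
  | add a b ha hb => rw [map_add, map_add, ha, hb, add_zero]
  | mul_X a i ha =>
    rw [map_mul, Derivation.leibniz, ha, rename_X, pderiv_X_of_ne]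
    · simp
    · simp [slotF, Prod.map]

lemma sum_dual_Jm' (n m : ℕ) (b : Fin (2*n)) :
    ∑ p : Fin (2*n), (dualHom n (2*n) p.succ b (Jm m (xi n (2*n+1)))).snd = 0 := by
  cases n with
  | zero => exact b.elim0
  | succ n => exact sum_dual_Jm (n+1) (2*n+1) m b

lemma Gs_laplace (n : ℕ) : ∃ M : Fin (2*n) → Tens n (2*n), ∀ (p : Fin (2*n)) (m : ℕ) (B : Tens n (2*n+1)),
    (-1 : Kc)^p.1 * pr (Gs n m) B = ∑ v,
        pr (rename (slotF n (2*n) p.succ) (M v) * Jm m (xi n (2*n+1))) (pderiv (p.succ, v) B) := by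
  obtain ⟨M, hM⟩ := laplace_Dt n
  refine ⟨M, fun p m B => ?_⟩
  have hG : C ((-1 : Kc)^p.1) * Gs n m = ∑ v, X (p.succ, v) *
        (rename (slotF n (2*n) p.succ) (M v) * Jm m (xi n (2*n+1))) := by
    have hs : ((-1 : Tens n (2*n+1))^p.1 * (-1)^p.1) = 1 := by
      rw [← mul_pow, show ((-1 : Tens n (2*n+1)) * (-1)) = 1 by ring, one_pow]
    rw [Gs, hM p, C_pow, C_neg, C_1, ← mul_assoc, ← mul_assoc, hs, one_mul, Finset.sum_mul]
    simp only [mul_assoc]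
  simp only [← pr_X_mul]
  rw [← LinearMap.sum_apply, ← map_sum, ← hG, ← smul_eq_C_mul, map_smul, LinearMap.smul_apply, smul_eq_mul]

lemma pderiv_quad (n k : ℕ) (q : Fin (k+1)) (a b v : Fin (2*n)) (R : Tens n (k+1))
    (hR : pderiv (q, v) R = 0) :
    pderiv (q, v) (X (q, a) * X (q, b) * R) =
        (if v = a then X (q, b) * R else 0) + (if v = b then X (q, a) * R else 0) := by
  rw [Derivation.leibniz, Derivation.leibniz, hR, pderiv_X, pderiv_X]
  simp only [Pi.single_apply, Prod.mk.injEq, true_and, smul_eq_mul, mul_zero, zero_add, mul_add]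
  have ha : (a = v) = (v = a) := propext eq_comm
  have hb : (b = v) = (v = b) := propext eq_comm
  simp only [ha, hb]
  split_ifs <;> ring

lemma pr_quad (n m : ℕ) (a b : Fin (2*n)) (B : Tens n (2*n)) :
    ∑ p : Fin (2*n), (-1 : Kc)^p.1 * pr (Gs n m)
      (X (p.succ, a) * X (p.succ, b) * rename (slotF n (2*n) p.succ) B) = 0 := by
  obtain ⟨M, hM⟩ := Gs_laplace n
  have key : ∀ p : Fin (2*n), (-1 : Kc)^p.1 * pr (Gs n m)
      (X (p.succ, a) * X (p.succ, b) * rename (slotF n (2*n) p.succ) B) =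
      pr (M a * (dualHom n (2*n) p.succ b (Jm m (xi n (2*n+1)))).snd) B +
      pr (M b * (dualHom n (2*n) p.succ a (Jm m (xi n (2*n+1)))).snd) B := by
    intro p
    rw [hM]
    have hd : ∀ v, pderiv (p.succ, v) (X (p.succ, a) * X (p.succ, b) * rename (slotF n (2*n) p.succ) B) =
        (if v = a then X (p.succ, b) * rename (slotF n (2*n) p.succ) B else 0) +
        (if v = b then X (p.succ, a) * rename (slotF n (2*n) p.succ) B else 0) :=
      fun v => pderiv_quad n (2*n) p.succ a b v _ (pderiv_slot _ _ _ _ _)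
    simp only [hd, map_add, Finset.sum_add_distrib]
    rw [Finset.sum_eq_single a, Finset.sum_eq_single b]
    · rw [if_pos rfl, if_pos rfl, pr_slot, pr_slot]
    · intro v _ hv; rw [if_neg hv, map_zero]
    · simp
    · intro v _ hv; rw [if_neg hv, map_zero]
    · simp
  simp only [key]
  rw [Finset.sum_add_distrib, ← LinearMap.sum_apply, ← LinearMap.sum_apply, ← map_sum, ← map_sum,
    ← Finset.mul_sum, ← Finset.mul_sum, sum_dual_Jm', sum_dual_Jm']
  simp

lemma elemT_insert (n k : ℕ) (q : Fin (k+1)) (Q : Apol n) (u : Fin k → Apol n) :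
    elemT (q.insertNth Q u : Fin (k+1) → Apol n) = embA n (k+1) q Q * rename (slotF n k q) (elemT u) := by
  rw [elemT, Fin.prod_univ_succAbove _ q, Fin.insertNth_apply_same, elemT, map_prod]
  congr 1
  refine Finset.prod_congr rfl fun c _ => ?_
  rw [Fin.insertNth_apply_succAbove, embA, embA, rename_rename]
  rfl

lemma tau_quad (n : ℕ) (a b : Fin (2*n)) (u : Fin (2*n) → Apol n) :
    ∑ p : Fin (2*n), (-1 : Kc)^p.1 * tauM n (p.succ.insertNth (X a * X b) u : Fin (2*n+1) → Apol n) = 0 := by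
  simp only [tauM_apply]
  set D : ℕ := ∑ p : Fin (2*n), (elemT (p.succ.insertNth (X a * X b) u : Fin (2*n+1) → Apol n)).totalDegree + 1
  have hD : ∀ p : Fin (2*n), (elemT (p.succ.insertNth (X a * X b) u : Fin (2*n+1) → Apol n)).totalDegree < D := by
    intro p
    exact Nat.lt_succ_of_le (Finset.single_le_sum (f := fun p : Fin (2*n) =>
      (elemT (p.succ.insertNth (X a * X b) u : Fin (2*n+1) → Apol n)).totalDegree) (fun _ _ => Nat.zero_le _) (Finset.mem_univ p))
  have h1 : ∀ p : Fin (2*n), tau n (elemT (p.succ.insertNth (X a * X b) u : Fin (2*n+1) → Apol n)) = _ :=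
    fun p => tau_eq n _ D (hD p)
  simp only [h1, Finset.mul_sum]
  rw [Finset.sum_comm]
  refine Finset.sum_eq_zero fun m _ => ?_
  have h2 : ∀ p : Fin (2*n), (-1 : Kc)^p.1 * (eps^m * pr (Gs n m) (elemT (p.succ.insertNth (X a * X b) u : Fin (2*n+1) → Apol n))) =
      eps^m * ((-1 : Kc)^p.1 * pr (Gs n m)
      (X (p.succ, a) * X (p.succ, b) * rename (slotF n (2*n) p.succ) (elemT u))) := by
    intro p
    have he : embA n (2*n+1) p.succ (X a * X b) = X (p.succ, a) * X (p.succ, b) := by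
      rw [map_mul, embA, rename_X, rename_X]
    rw [elemT_insert, he, mul_left_comm]
  simp only [h2]
  rw [← Finset.mul_sum, pr_quad, mul_zero]

lemma tau_const (n : ℕ) (p : Fin (2*n)) (c : Kc) (x : Fin (2*n+1) → Apol n) (hx : x p.succ = C c) :
    tauM n x = 0 := by
  rw [tauM_apply, tau_eq n _ _ (Nat.lt_succ_self _)]
  refine Finset.sum_eq_zero fun m _ => ?_
  obtain ⟨M, hM⟩ := laplace_Dt n
  have hd : ∀ v, pderiv (p.succ, v) (elemT x) = 0 := by
    intro v
    have hxx : x = (p.succ.insertNth (C c) (x ∘ p.succ.succAbove) : Fin (2*n+1) → Apol n) := by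
      rw [← hx]
      exact (Fin.insertNth_self_removeNth p.succ x).symm
    rw [hxx, elemT_insert, Derivation.leibniz, pderiv_slot, embA, rename_C, pderiv_C]
    simp
  rw [Gs, hM p, mul_assoc, Finset.sum_mul, Finset.mul_sum, map_sum, LinearMap.sum_apply]
  rw [Finset.sum_eq_zero, mul_zero]
  intro v _
  rw [mul_left_comm ((-1)^p.1), mul_comm ((-1)^p.1), mul_assoc, pr_X_mul, hd, map_zero]

lemma collapse (k N n : ℕ) (q : Fin (k+2)) (F : (Fin (k+2) → Apol n) → Kc)
    (hF : ∀ x, x q = 0 → F x = 0) (Q : Apol n) (u : Fin (k+1) → glA n N) :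
    ∑ idx : Fin (k+2) → Fin N, F (fun m =>
      (q.insertNth (Matrix.diagonal fun _ => Q) u : Fin (k+2) → glA n N) m (idx m) (idx (m+1))) =
    ∑ idx : Fin (k+1) → Fin N, F (q.insertNth Q (fun c => u c (idx c) (idx (c+1)))) := by
  rw [← Equiv.sum_comp (idxEquiv k N q), Fintype.sum_prod_type]
  refine Finset.sum_congr rfl fun idx _ => ?_
  have h1 : ∀ l, (idxEquiv k N q (idx, l)) q = idx (sdeg k q q) := by
    intro l
    simp only [idxEquiv, Equiv.coe_fn_mk]
    rw [Function.update_of_ne (ne_add_one q)]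
    rfl
  have h2 : ∀ l, (idxEquiv k N q (idx, l)) (q+1) = l := by
    intro l
    simp [idxEquiv]
  rw [Finset.sum_eq_single (idx (sdeg k q q))]
  · congr 1
    have h3 : (idxEquiv k N q (idx, idx (sdeg k q q))) = idx ∘ sdeg k q := by
      simp only [idxEquiv, Equiv.coe_fn_mk]
      funext m
      by_cases h : m = q + 1
      · subst h
        rw [Function.update_self, Function.comp, ← succAbove_sdeg, sdeg_succAbove]
      · rw [Function.update_of_ne h]
    rw [h3]
    funext m
    by_cases h : m = q
    · subst h
      rw [Fin.insertNth_apply_same, Fin.insertNth_apply_same, ← h3, h1, h2, Matrix.diagonal_apply_eq]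
    · obtain ⟨c, rfl⟩ := Fin.exists_succAbove_eq h
      rw [Fin.insertNth_apply_succAbove, Fin.insertNth_apply_succAbove, Function.comp, Function.comp,
        sdeg_add_one _ _ _ h, sdeg_succAbove]
  · intro l _ hl
    apply hF
    rw [Fin.insertNth_apply_same, h1, h2, Matrix.diagonal_apply_ne _ (Ne.symm hl)]
  · simp

lemma Theta_van_const (n N : ℕ) (M : Matrix (Fin N) (Fin N) ℂ) (v : Fin (2*n) → glA n N) (i : Fin (2*n))
    (w : glA n N) (hv : v i = M.map (algebraMap ℂ (Apol n))) : Theta n N v w = 0 := by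
  rw [Theta_eq_Alt, Alt]
  refine Finset.sum_eq_zero fun σ _ => ?_
  rw [tauN_apply, Finset.sum_eq_zero, smul_zero]
  intro idx _
  refine tau_const n (σ.symm i) (algebraMap ℂ Kc (M (idx (σ.symm i).succ) (idx ((σ.symm i).succ + 1)))) _ ?_
  simp only [Fin.cons_succ, Function.comp, Equiv.apply_symm_apply, hv, Matrix.map_apply]
  rfl

lemma cons_insertNth {g : Type*} (k : ℕ) (p : Fin (k+1)) (w Z : g) (r : Fin k → g) :
    (Fin.cons w (p.insertNth Z r : Fin (k+1) → g) : Fin (k+2) → g) =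
      (p.succ.insertNth Z (Fin.cons w r : Fin (k+1) → g) : Fin (k+2) → g) := by
  funext m
  by_cases h : m = p.succ
  · subst h
    simp
  · obtain ⟨c, rfl⟩ := Fin.exists_succAbove_eq h
    rw [Fin.insertNth_apply_succAbove]
    refine Fin.cases ?_ (fun d => ?_) c
    · simp
    · rw [Fin.succ_succAbove_succ]
      simp

lemma Theta_van_quad (n N : ℕ) (a b : Fin (2*n)) (v : Fin (2*n) → glA n N) (i : Fin (2*n))
    (w : glA n N) (hv : v i = Matrix.diagonal (fun _ => X a * X b)) : Theta n N v w = 0 := by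
  rw [Theta_eq_Alt]
  cases n with
  | zero => exact i.elim0
  | succ n =>
    refine (Alt_at_arg (2*n+1) _ v i).trans ?_
    have hq : ∀ (r : Fin (2*n+1) → glA (n+1) N), ∑ p : Fin (2*n+1+1), (-1 : Kc)^(i.1+p.1) *
        tauN (n+1) N (Fin.cons w (Fin.insertNth (n := 2*n+1) p (v i) r : Fin (2*n+1+1) → glA (n+1) N) : Fin (2*n+1+2) → glA (n+1) N) = 0 := by
      intro r
      have h1 : ∀ p : Fin (2*n+1+1), tauN (n+1) N (Fin.cons w (Fin.insertNth (n := 2*n+1) p (v i) r : Fin (2*n+1+1) → glA (n+1) N) : Fin (2*n+1+2) → glA (n+1) N)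
          = ∑ idx : Fin (2*n+1+1) → Fin N, tauM (n+1) (Fin.insertNth (n := 2*(n+1)) p.succ (X a * X b)
            (fun c => (Fin.cons w r : Fin (2*n+1+1) → glA (n+1) N) c (idx c) (idx (c+1)))) := by
        intro p
        rw [cons_insertNth, hv]
        refine (tauN_apply (n+1) N _).trans ?_
        refine collapse (2*n+1) N (n+1) p.succ (fun x => tauM (n+1) x) ?_ (X a * X b) (Fin.cons w r)
        intro x hx
        exact (tauM (n+1)).map_coord_zero (p.succ : Fin (2*n+2+1)) hx
      simp only [h1, Finset.mul_sum]
      rw [Finset.sum_comm]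
      refine Finset.sum_eq_zero fun idx _ => ?_
      have := tau_quad (n+1) a b (fun c => (Fin.cons w r : Fin (2*n+1+1) → glA (n+1) N) c (idx c) (idx (c+1)))
      simp only [pow_add, mul_assoc]
      rw [← Finset.mul_sum]
      refine (congrArg _ this).trans (mul_zero _)
    refine (Alt_sum Finset.univ (2*n+1) (fun p : Fin (2*n+1+1) => (-1 : Kc)^(i.1+p.1)) (fun p u => tauN (n+1) N
      (Fin.cons w (Fin.insertNth (n := 2*n+1) p (v i) u : Fin (2*n+1+1) → glA (n+1) N) : Fin (2*n+1+2) → glA (n+1) N)) _).symm.trans ?_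
    rw [Alt]
    exact Finset.sum_eq_zero fun σ _ => by rw [hq, smul_zero]

lemma Theta_upd_zero (n N : ℕ) (v : Fin (2*n) → glA n N) (i : Fin (2*n)) (w : glA n N) :
    Theta n N (Function.update v i 0) w = 0 := by
  have := Theta_update n N v i 1 0 0 w
  simpa using this

lemma Theta_upd_add (n N : ℕ) (v : Fin (2*n) → glA n N) (i : Fin (2*n)) (x y w : glA n N) :
    Theta n N (Function.update v i (x + y)) w = Theta n N (Function.update v i x) w + Theta n N (Function.update v i y) w := by
  have := Theta_update n N v i 1 x y w
  simpa using this

lemma Theta_upd_smul (n N : ℕ) (v : Fin (2*n) → glA n N) (i : Fin (2*n)) (s : Kc) (x w : glA n N) :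
    Theta n N (Function.update v i (s • x)) w = s * Theta n N (Function.update v i x) w := by
  have := Theta_update n N v i s x 0 w
  rw [add_zero, Theta_upd_zero, add_zero] at this
  exact this

lemma Theta_van (n N : ℕ) (v : Fin (2*n) → glA n N) (i : Fin (2*n)) (w : glA n N)
    (h : v i ∈ hK n N) : Theta n N v w = 0 := by
  have key : ∀ Z ∈ hK n N, Theta n N (Function.update v i Z) w = 0 := by
    intro Z hZ
    induction hZ using Submodule.span_induction with
    | zero => exact Theta_upd_zero n N v i w
    | add x y _ _ hx hy => rw [Theta_upd_add, hx, hy, add_zero]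
    | smul s x _ hx => rw [Theta_upd_smul, hx, mul_zero]
    | mem Z hZ =>
      rcases hZ with ⟨M, rfl⟩ | ⟨a, ha, rfl⟩
      · exact Theta_van_const n N M _ i w (Function.update_self _ _ _)
      · induction ha using Submodule.span_induction with
        | zero => rw [show (Matrix.diagonal fun _ : Fin N => (0 : Apol n)) = 0 from Matrix.diagonal_zero]
                  exact Theta_upd_zero n N v i w
        | add x y _ _ hx hy =>
          rw [← Matrix.diagonal_add, Theta_upd_add, hx, hy, add_zero]
        | smul s x _ hx =>
          have : (Matrix.diagonal fun _ : Fin N => s • x) = (algebraMap ℂ Kc s) • (Matrix.diagonal fun _ : Fin N => x) := by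
            rw [← Matrix.diagonal_smul]
            congr 1
            funext _
            rw [Pi.smul_apply, algebraMap_smul]
          rw [this, Theta_upd_smul, hx, mul_zero]
        | mem x hx =>
          obtain ⟨a, b, rfl⟩ := hx
          exact Theta_van_quad n N a b _ i w (Function.update_self _ _ _)
  have := key _ h
  rwa [Function.update_eq_self] at this

lemma Alt_cons_upd {g : Type*} (m : ℕ) (F : (Fin (m+1) → g) → Kc) (v : Fin (m+1) → g) (b : g) (j : Fin (m+1)) :
    Alt (m+1) F (Fin.cons b (v ∘ j.succAbove)) = (-1)^j.1 * Alt (m+1) F (Function.update v j b) := by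
  rw [Alt_at_arg m F _ 0, Alt_at_arg m F (Function.update v j b) j, Finset.mul_sum]
  refine Finset.sum_congr rfl fun p _ => ?_
  have h1 : (Fin.cons b (v ∘ j.succAbove) : Fin (m+1) → g) ∘ (0 : Fin (m+1)).succAbove = v ∘ j.succAbove := by
    funext a; simp
  have h2 : (Function.update v j b) ∘ j.succAbove = v ∘ j.succAbove := by
    funext a; simp
  have h3 : ((-1 : Kc)^j.1 * (-1)^j.1) = 1 := by
    rw [← mul_pow, show ((-1 : Kc) * (-1)) = 1 by ring, one_pow]
  rw [h1, h2, Fin.cons_zero, Function.update_self]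
  rw [← mul_assoc, pow_add (-1 : Kc) j.1, ← mul_assoc, h3, one_mul, Fin.val_zero, zero_add]

lemma pairTuple_cons {g : Type*} (m : ℕ) (Z b : g) (v : Fin (m+1) → g) (j : Fin (m+1)) :
    pairTuple (m+1) (Fin.cons Z v : Fin (m+2) → g) b 0 j.succ = Fin.cons b (v ∘ j.succAbove) := by
  have h := cons_pair m (Fin.cons Z v : Fin (m+2) → g) b 0 j
  rw [Fin.succAbove_zero, if_pos (Fin.succ_pos j)] at h
  rw [← h]
  rfl

lemma Theta_cons_upd (n N : ℕ) (v : Fin (2*n) → glA n N) (Z b w : glA n N) (j : Fin (2*n)) :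
    Theta n N (pairTuple (2*n) (Fin.cons Z v : Fin (2*n+1) → glA n N) b 0 j.succ) w =
      (-1)^j.1 * Theta n N (Function.update v j b) w := by
  rw [Theta_eq_Alt, Theta_eq_Alt]
  cases n with
  | zero => exact j.elim0
  | succ n =>
    have h := pairTuple_cons (2*n+1) Z b v j
    refine (congrArg _ h).trans ?_
    exact Alt_cons_upd (2*n+1) _ v b j

lemma Theta_inv (n N : ℕ) (Z : glA n N) (hZ : Z ∈ hK n N) (v : Fin (2*n) → glA n N) (w : glA n N) :
    (∑ i : Fin (2*n), Theta n N (Function.update v i (glBr n N Z (v i))) w)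
        + Theta n N v (glBr n N Z w) = 0 := by
  have h := Theta_closed n N (Fin.cons Z v) w
  unfold dCoadj at h
  rw [Fin.sum_univ_succ, Fin.sum_univ_succ (n := 2*n) (f := fun i => ∑ l : Fin (2*n+1), _)] at h
  rw [Finset.sum_eq_zero (s := Finset.univ) (f := fun i : Fin (2*n) => (-1:Kc)^((i.succ).1+1) • Theta n N
    ((Fin.cons Z v : Fin (2*n+1) → glA n N) ∘ i.succ.succAbove) (glBr n N ((Fin.cons Z v : Fin (2*n+1) → glA n N) i.succ) w))] at h
  rotate_left
  · intro i _
    have h0 : 0 < 2*n := i.pos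
    rw [Theta_van n N _ ⟨0, h0⟩, smul_zero]
    have : (i.succ).succAbove ⟨0, h0⟩ = 0 := by
      rw [Fin.succAbove_of_castSucc_lt]
      · rfl
      · exact Fin.succ_pos i
    rw [Function.comp, this]
    exact hZ
  rw [Finset.sum_eq_zero (s := Finset.univ) (f := fun i : Fin (2*n) => ∑ l : Fin (2*n+1), (if i.succ < l then (-1:Kc)^(i.succ.1+l.1) • Theta n N
    (pairTuple (2*n) (Fin.cons Z v : Fin (2*n+1) → glA n N) (glBr n N ((Fin.cons Z v : Fin (2*n+1) → glA n N) i.succ) ((Fin.cons Z v : Fin (2*n+1) → glA n N) l)) i.succ l) w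
         else 0))] at h
  rotate_left
  · intro i _
    refine Finset.sum_eq_zero fun l _ => ?_
    split_ifs with hil
    · have h1 : 1 < 2*n := by
        have h2 := l.2
        have h3 : i.succ.1 < l.1 := hil
        rw [Fin.val_succ] at h3
        omega
      rw [Theta_van n N _ ⟨1, h1⟩, smul_zero]
      simp only [pairTuple, one_ne_zero, dif_neg, not_false_eq_true, Nat.sub_self, Fin.val_succ, Nat.succ_pos, dif_pos]
      exact hZ
    · rfl
  rw [Fin.sum_univ_succ] at h
  have h5 : ∀ j : Fin (2*n), (if (0 : Fin (2*n+1)) < j.succ then (-1:Kc)^((0 : Fin (2*n+1)).1+j.succ.1) • Theta n N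
    (pairTuple (2*n) (Fin.cons Z v : Fin (2*n+1) → glA n N) (glBr n N ((Fin.cons Z v : Fin (2*n+1) → glA n N) 0) ((Fin.cons Z v : Fin (2*n+1) → glA n N) j.succ)) 0 j.succ) w
         else 0) = - Theta n N (Function.update v j (glBr n N Z (v j))) w := by
    intro j
    have h3 : ((-1 : Kc)^j.1 * (-1)^j.1) = 1 := by
      rw [← mul_pow, show ((-1 : Kc) * (-1)) = 1 by ring, one_pow]
    rw [if_pos (Fin.succ_pos j), Theta_cons_upd, Fin.cons_zero, Fin.cons_succ, smul_eq_mul, Fin.val_zero, zero_add,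
      Fin.val_succ, pow_succ]
    linear_combination (-Theta n N (Function.update v j (glBr n N Z (v j))) w) * h3
  simp only [h5] at h
  rw [if_neg (lt_irrefl _), Finset.sum_neg_distrib] at h
  have h6 : ((Fin.cons Z v : Fin (2*n+1) → glA n N) ∘ (0 : Fin (2*n+1)).succAbove) = v := by
    funext a; simp
  rw [h6, Fin.cons_zero, smul_eq_mul] at h
  simp only [Fin.val_zero, zero_add, pow_one, add_zero] at h
  linear_combination -h

lemma alpha_pow_one (n k : ℕ) (i j : Fin k) (c : Kc) : alphaOp n k i j (C c) = 0 := by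
  simp [alphaOp, Dop]

lemma alpha_XX (n : ℕ) (a b : Fin (2*n)) : ∃ c : Kc, alphaOp n 2 0 1 (X (0, a) * X (1, b)) = C c := by
  have h : ∀ u v : Fin (2*n), ∃ c : Kc, (Dop n 2 0 u * Dop n 2 1 v) (X (0, a) * X (1, b)) = C c := by
    intro u v
    refine ⟨(if a = u then 1 else 0) * (if b = v then 1 else 0), ?_⟩
    simp only [Dop, Module.End.mul_apply]
    change pderiv (0, u) (pderiv (1, v) (X (0, a) * X (1, b))) = _
    rw [Derivation.leibniz, pderiv_X, pderiv_X]
    simp only [Pi.single_apply, Prod.mk.injEq, zero_ne_one, false_and, if_false, smul_zero, add_zero, true_and, smul_eq_mul, mul_ite, mul_one, mul_zero]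
    split_ifs with h1 h2 h2
    all_goals simp_all [pderiv_X, Pi.single_apply]
  choose f hf using h
  refine ⟨algebraMap ℂ Kc (1/2) * ∑ r : Fin n, (f (pVar n r) (qVar n r) - f (qVar n r) (pVar n r)), ?_⟩
  simp only [alphaOp, LinearMap.smul_apply, LinearMap.sum_apply, LinearMap.sub_apply, hf]
  rw [C_mul, smul_eq_C_mul, map_sum]
  simp only [C_sub]

lemma moyal_XX (n : ℕ) (a b : Fin (2*n)) : ∃ c : Kc, moyal n (X a) (X b) = X a * X b + C c := by
  obtain ⟨c, hc⟩ := alpha_XX n a b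
  have he : elemT ![(X a : Apol n), X b] = X (0, a) * X (1, b) := by
    rw [elemT, Fin.prod_univ_two]
    simp [embA]
  refine ⟨eps * c, ?_⟩
  have hM : (elemT ![(X a : Apol n), X b]).totalDegree < 3 := by
    rw [he]
    refine lt_of_le_of_lt (totalDegree_mul _ _) ?_
    rw [totalDegree_X, totalDegree_X]
    norm_num
  rw [moyal_eq n _ _ 3 hM, eT, he, Finset.sum_range_succ, Finset.sum_range_succ, Finset.sum_range_one,
    pow_two (alphaOp n 2 0 1), Module.End.mul_apply, pow_one (alphaOp n 2 0 1), hc, alpha_pow_one]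
  simp [smul_eq_C_mul]

lemma moyal_one_right (n : ℕ) (f : Apol n) : moyal n f 1 = f := by
  have he : elemT ![f, 1] = embA n 2 0 f := by
    rw [elemT, Fin.prod_univ_two]
    simp
  have hz : alphaOp n 2 0 1 (embA n 2 0 f) = 0 := by
    simp only [alphaOp, Dop, LinearMap.smul_apply, LinearMap.sum_apply, LinearMap.sub_apply, Module.End.mul_apply]
    have h : ∀ v, (pderiv ((1 : Fin 2), v)).toLinearMap (embA n 2 0 f) = 0 := fun v =>
      pderiv_emb_ne n 2 1 0 (by decide) v f
    simp [h]
  rw [moyal_eq n _ _ _ (Nat.lt_succ_self _), eT, he, Finset.sum_range_succ', Finset.sum_eq_zero]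
  · simp [embA, rename_rename, Function.comp_def]
    exact rename_id_apply f
  · intro m _
    rw [pow_succ (alphaOp n 2 0 1), Module.End.mul_apply, hz, map_zero, smul_zero]

lemma moyal_one_left (n : ℕ) (f : Apol n) : moyal n 1 f = f := by
  have he : elemT ![1, f] = embA n 2 1 f := by
    rw [elemT, Fin.prod_univ_two]
    simp
  have hz : alphaOp n 2 0 1 (embA n 2 1 f) = 0 := by
    simp only [alphaOp, Dop, LinearMap.smul_apply, LinearMap.sum_apply, LinearMap.sub_apply, Module.End.mul_apply]
    have h : ∀ u v, (pderiv ((0 : Fin 2), u)).toLinearMap ((pderiv ((1 : Fin 2), v)).toLinearMap (embA n 2 1 f)) = 0 := by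
      intro u v
      have h1 : (pderiv ((1 : Fin 2), v)).toLinearMap (embA n 2 1 f) = embA n 2 1 (pderiv v f) := by
        change pderiv ((1 : Fin 2), v) (rename _ f) = rename _ _
        exact (pderiv_rename (f := fun v : Fin (2*n) => ((1 : Fin 2), v)) (fun a b h => (Prod.mk.inj h).2) v f)
      rw [h1]
      exact pderiv_emb_ne n 2 0 1 (by decide) u _
    simp only [h, sub_zero, Finset.sum_const_zero, smul_zero]
  rw [moyal_eq n _ _ _ (Nat.lt_succ_self _), eT, he, Finset.sum_range_succ', Finset.sum_eq_zero]
  · simp [embA, rename_rename, Function.comp_def]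
    exact rename_id_apply f
  · intro m _
    rw [pow_succ (alphaOp n 2 0 1), Module.End.mul_apply, hz, map_zero, smul_zero]

lemma moyal_zero_left (n : ℕ) (f : Apol n) : moyal n 0 f = 0 := by
  have he : elemT ![0, f] = (0 : Tens n 2) := by
    rw [elemT, Fin.prod_univ_two]
    simp
  simp [moyal, expEps, he]

lemma moyal_zero_right (n : ℕ) (f : Apol n) : moyal n f 0 = 0 := by
  have he : elemT ![f, 0] = (0 : Tens n 2) := by
    rw [elemT, Fin.prod_univ_two]
    simp
  simp [moyal, expEps, he]

lemma matMul_diag (n N : ℕ) (f g : Apol n) :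
    matMul n N (Matrix.diagonal fun _ => f) (Matrix.diagonal fun _ => g) = Matrix.diagonal fun _ => moyal n f g := by
  ext1 i j
  rw [matMul, Finset.sum_eq_single i]
  · by_cases h : i = j
    · subst h; simp
    · rw [Matrix.diagonal_apply_ne _ h, Matrix.diagonal_apply_ne _ h, moyal_zero_right]
  · intro l _ hl
    rw [Matrix.diagonal_apply_ne _ (Ne.symm hl), moyal_zero_left]
  · simp

lemma glBr_one (n N : ℕ) (f : Apol n) : glBr n N (Matrix.diagonal fun _ => f) 1 = 0 := by
  rw [glBr, ← Matrix.diagonal_one]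
  rw [matMul_diag, matMul_diag, moyal_one_left, moyal_one_right, sub_self, smul_zero]

lemma glBr_XX (n N : ℕ) (a b : Fin (2*n)) :
    glBr n N (Matrix.diagonal fun _ => X a) (Matrix.diagonal fun _ => X b) ∈ hK n N := by
  obtain ⟨c, hc⟩ := moyal_XX n a b
  obtain ⟨d, hd⟩ := moyal_XX n b a
  rw [glBr, matMul_diag, matMul_diag, hc, hd]
  refine Submodule.smul_mem _ _ ?_
  have : (Matrix.diagonal (fun _ => X a * X b + C c) - Matrix.diagonal (fun _ => X b * X a + C d) : glA n N) =
      (c - d) • (1 : Matrix (Fin N) (Fin N) ℂ).map (algebraMap ℂ (Apol n)) := by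
    rw [Matrix.map_one _ (map_zero _) (map_one _), Matrix.diagonal_sub, ← Matrix.diagonal_one, ← Matrix.diagonal_smul]
    congr 1
    funext _
    rw [Pi.smul_apply, smul_eq_C_mul, mul_one, C_sub]
    ring
  rw [this]
  exact Submodule.smul_mem _ _ (Submodule.subset_span (Or.inl ⟨1, rfl⟩))

lemma cobd_van (n N k : ℕ) (c : (Fin k → glA n N) → glA n N → Kc) (h : IsRelCoadjCobd n N k c) (g : Fin k → Fin (2*n)) :
    c (fun m => Matrix.diagonal fun _ => X (g m)) 1 = 0 := by
  cases k with
  | zero =>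
    have h' : c = 0 := h
    rw [h']; rfl
  | succ k =>
    obtain ⟨b, hb, rfl⟩ := h
    obtain ⟨-, -, hadd, hsm, -, hvan, -⟩ := hb
    unfold dCoadj
    rw [Finset.sum_eq_zero, Finset.sum_eq_zero, add_zero]
    · intro i _
      refine Finset.sum_eq_zero fun l _ => ?_
      split_ifs with hil
      · have hk : 0 < k := by
          have h1 : i.1 < l.1 := hil
          have := l.2
          omega
        rw [hvan _ ⟨0, hk⟩, smul_zero]
        simp only [pairTuple, dif_pos]
        exact glBr_XX n N _ _
      · rfl
    · intro i _
      rw [glBr_one]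
      have h0 := hsm ((fun m => Matrix.diagonal fun _ => X (g m)) ∘ i.succAbove) 0 0
      rw [zero_smul, zero_mul] at h0
      rw [h0, smul_zero]

lemma pr_prod (n : ℕ) (ρ σ : Fin (2*n) → Fin (2*n)) (J : Tens n (2*n+1)) (s : Finset (Fin (2*n))) :
    pr ((∏ m ∈ s, X (m.succ, ρ m)) * J) (∏ m ∈ s, X (m.succ, σ m)) =
      if ∀ m ∈ s, ρ m = σ m then constantCoeff J else 0 := by
  induction s using Finset.induction_on with
  | empty =>
    simp only [Finset.prod_empty, one_mul, Finset.notMem_empty, false_imp_iff, implies_true, if_true]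
    rw [pr_symm, pr_one]
  | insert a s ha ih =>
    have hz : pderiv (a.succ, ρ a) (∏ m ∈ s, X (m.succ, σ m) : Tens n (2*n+1)) = 0 := by
      clear ih
      induction s using Finset.induction_on with
      | empty => rw [Finset.prod_empty, Derivation.map_one_eq_zero]
      | insert b s hb ih =>
        rw [Finset.prod_insert hb, Derivation.leibniz, ih (fun h => ha (Finset.mem_insert_of_mem h)),
          pderiv_X_of_ne, smul_zero, smul_zero, add_zero]
        intro h
        have := Fin.succ_injective _ (Prod.mk.inj h).1
        subst this
        exact ha (Finset.mem_insert_self _ _)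
    rw [Finset.prod_insert ha, Finset.prod_insert ha, mul_assoc, pr_X_mul, Derivation.leibniz, hz, smul_zero, zero_add]
    by_cases h : ρ a = σ a
    · rw [h, pderiv_X_self, smul_eq_mul, mul_one, ih]
      simp [h]
    · rw [pderiv_X_of_ne, smul_zero, map_zero, if_neg]
      · intro h'; exact h (h' a (Finset.mem_insert_self _ _))
      · intro h'; exact h (Prod.mk.inj h').2.symm

lemma pr_Dt (n : ℕ) (σ : Equiv.Perm (Fin (2*n))) (J : Tens n (2*n+1)) :
    pr (Dt (xi n (2*n+1)) * J) (∏ m, X (m.succ, σ m)) = (Equiv.Perm.sign σ : ℤ) • constantCoeff J := by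
  rw [Dt, ← Matrix.det_transpose, Matrix.det_apply, Finset.sum_mul, map_sum, LinearMap.sum_apply,
    Finset.sum_eq_single σ]
  · have := pr_prod n σ σ J Finset.univ
    rw [if_pos (fun _ _ => rfl)] at this
    rw [← this, smul_mul_assoc, Units.smul_def, map_zsmul, LinearMap.smul_apply]
    rfl
  · intro ρ _ hρ
    have := pr_prod n ρ σ J Finset.univ
    rw [if_neg (fun h => hρ (Equiv.ext fun m => h m (Finset.mem_univ _)))] at this
    rw [smul_mul_assoc, Units.smul_def, map_zsmul, LinearMap.smul_apply]
    refine (congrArg _ this).trans (smul_zero _)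
  · simp

lemma Jm_zero_cc (n : ℕ) : constantCoeff (Jm 0 (xi n (2*n+1))) = algebraMap ℝ Kc (((2*n).factorial : ℝ)⁻¹) := by
  rw [Jm, pow_zero, IntL_one, Nat.factorial_zero, Nat.cast_one, inv_one, map_one, one_mul]
  exact constantCoeff_C _ _

lemma tau_y (n : ℕ) (σ : Equiv.Perm (Fin (2*n))) :
    tauM n (Fin.cons 1 (fun m => X (σ m))) = (Equiv.Perm.sign σ : ℤ) • algebraMap ℝ Kc (((2*n).factorial : ℝ)⁻¹) := by
  have he : elemT (Fin.cons 1 (fun m => X (σ m)) : Fin (2*n+1) → Apol n) = ∏ m : Fin (2*n), X (m.succ, σ m) := by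
    rw [elemT, Fin.prod_univ_succ]
    simp [embA]
  rw [tauM_apply, tau_eq n _ _ (Nat.lt_succ_self _), he, Finset.sum_range_succ', Finset.sum_eq_zero]
  · rw [Gs, pr_Dt, Jm_zero_cc, pow_zero, one_mul, zero_add]
  · intro m _
    rw [Gs, pr_Dt]
    have : constantCoeff (Jm (m+1) (xi n (2*n+1))) = 0 := by
      rw [← pr_one, pr_symm]
      refine pr_vanish _ _ (m+1) ?_ ?_
      · exact Jm_mem n (m+1)
      · simp
    rw [this, smul_zero, mul_zero]

lemma idx_const {N k : ℕ} (idx : Fin (k+1) → Fin N) (h : ∀ m, idx m = idx (m+1)) : idx = fun _ => idx 0 := by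
  funext m
  induction m using Fin.induction with
  | zero => rfl
  | succ i hi => rw [← hi, h i.castSucc, Fin.coeSucc_eq_succ]

lemma tauN_y (n N : ℕ) (σ : Equiv.Perm (Fin (2*n))) :
    tauN n N (Fin.cons 1 (fun m => Matrix.diagonal fun _ => X (σ m))) =
      N * ((Equiv.Perm.sign σ : ℤ) • algebraMap ℝ Kc (((2*n).factorial : ℝ)⁻¹)) := by
  rw [tauN_apply, ← Fintype.sum_of_injective (fun (c : Fin N) (_ : Fin (2*n+1)) => c) (fun a b h => congrFun h 0)
    (fun _ => (Equiv.Perm.sign σ : ℤ) • algebraMap ℝ Kc (((2*n).factorial : ℝ)⁻¹))]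
  · simp
  · intro idx hidx
    have : ∃ m, idx m ≠ idx (m+1) := by
      by_contra! hc
      exact hidx ⟨idx 0, (idx_const idx hc).symm⟩
    obtain ⟨m, hm⟩ := this
    refine (tauM n).map_coord_zero m ?_
    revert hm
    refine Fin.cases ?_ (fun d => ?_) m
    · intro hm
      exact Matrix.one_apply_ne hm
    · intro hm
      exact Matrix.diagonal_apply_ne _ hm
  · intro c
    rw [← tau_y]
    congr 1
    funext m
    refine Fin.cases ?_ (fun d => ?_) m
    · simp
    · simp

lemma Theta_norm (n N : ℕ) :
    Theta n N (fun m : Fin (2*n) => Matrix.diagonal (fun _ => (X m : Apol n))) 1 = (N : Kc) := by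
  rw [Theta_eq_Alt, Alt]
  have h : ∀ σ : Equiv.Perm (Fin (2*n)), (Equiv.Perm.sign σ : ℤ) • tauN n N (Fin.cons 1
      ((fun m : Fin (2*n) => Matrix.diagonal (fun _ => (X m : Apol n))) ∘ σ)) =
      N * algebraMap ℝ Kc (((2*n).factorial : ℝ)⁻¹) := by
    intro σ
    refine (congrArg _ (tauN_y n N σ)).trans ?_
    rw [mul_smul_comm, smul_smul]
    have : ((Equiv.Perm.sign σ : ℤ) * (Equiv.Perm.sign σ : ℤ)) = 1 := by
      rcases Int.units_eq_one_or (Equiv.Perm.sign σ) with h | h <;> simp [h]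
    rw [this, one_smul]
  rw [Finset.sum_congr rfl fun σ _ => h σ, Finset.sum_const, Finset.card_univ, Fintype.card_perm, Fintype.card_fin,
    nsmul_eq_mul, mul_left_comm]
  have h2 : (((2*n).factorial : ℕ) : Kc) * algebraMap ℝ Kc (((2*n).factorial : ℝ)⁻¹) = 1 := by
    rw [← map_natCast (algebraMap ℝ Kc), ← map_mul, mul_inv_cancel₀, map_one]
    exact_mod_cast Nat.factorial_ne_zero _
  rw [h2, mul_one]


/-- `Θ^N_{2n}` is a cocycle in the relative Lie algebra cochain complex
`C^{2n}(gl_N(A^pol_{2n}), gl_N ⊕ sp_{2n}; gl_N(A^pol_{2n})^*)`: it is invariant under the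
adjoint action of `gl_N ⊕ sp_{2n}`, vanishes whenever one of its arguments lies in
`gl_N ⊕ sp_{2n}`, is closed, and its cohomology class is nonzero; moreover
`Θ^N_{2n}(p_1∧q_1∧⋯∧p_n∧q_n)(1) = N`. -/
theorem Theta_relative_cocycle (n N : ℕ) (hN : 1 ≤ N) :
    -- h-invariance:
    (∀ Z ∈ hK n N, ∀ (v : Fin (2*n) → glA n N) (w : glA n N),
      (∑ i : Fin (2*n), Theta n N (Function.update v i (glBr n N Z (v i))) w)
        + Theta n N v (glBr n N Z w) = 0) ∧
    -- vanishing on h: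
    (∀ (v : Fin (2*n) → glA n N) (i : Fin (2*n)) (w : glA n N),
      v i ∈ hK n N → Theta n N v w = 0) ∧
    -- cocycle:
    (∀ (v : Fin (2*n+1) → glA n N) (w : glA n N), dCoadj n N (2*n) (Theta n N) v w = 0) ∧
    -- nontrivial class:
    ¬ IsRelCoadjCobd n N (2*n) (Theta n N) ∧
    -- normalization:
    Theta n N (fun m : Fin (2*n) => Matrix.diagonal (fun _ => (X m : Apol n))) 1 = (N : Kc)
    := by
  refine ⟨fun Z hZ v w => Theta_inv n N Z hZ v w, fun v i w h => Theta_van n N v i w h, Theta_closed n N, ?_, Theta_norm n N⟩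
  intro h
  have h1 := cobd_van n N (2*n) _ h id
  have h2 : (N : Kc) = 0 := (Theta_norm n N).symm.trans h1
  have h3 : N = 0 := by
    rw [← map_natCast (algebraMap ℂ Kc)] at h2
    have h4 := (map_eq_zero_iff (algebraMap ℂ Kc) (FaithfulSMul.algebraMap_injective ℂ Kc)).1 h2
    exact_mod_cast h4
  omega

end
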